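/- arXiv:1806.06933 — 10 statements merged into one kernel-verified Lean document; each statement's English description precedes it below -/
import Mathlib

section
/- In the distributional model of delegated search with n i.i.d. samples, there exists a threshold θ ≥ 0 and a choice of weak or strict comparison such that the single-proposal mechanism whose eligible set is R = {(x,y) : x ≥ θ} (respectively R = {(x,y) : x > θ}) guarantees the principal expected utility at least (1/2)·E[max_{1≤i≤n} x_i], no matter which eligible sample the agent proposes whenever at least one eligible sample exists. -/
open MeasureTheory ProbabilityTheory

lemma dht_exists_theta {Ω : Type*} [MeasurableSpace Ω] (μ : Measure Ω) [IsProbabilityMeasure μ]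
    (n : ℕ) (x : Fin n → Ω → ℝ) (h0 : ∀ i ω, 0 ≤ x i ω) (hi : ∀ i, Integrable (x i) μ) :
    ∃ θ : ℝ, 0 ≤ θ ∧ ∑ i, ∫ ω, max (x i ω - θ) 0 ∂μ = θ := by
  have hI : ∀ i (θ : ℝ), Integrable (fun ω => max (x i ω - θ) 0) μ := fun i θ =>
    ((hi i).sub (integrable_const θ)).pos_part
  have hc : Continuous (fun θ : ℝ => ∑ i, ∫ ω, max (x i ω - θ) 0 ∂μ) := by
    refine continuous_finsetSum _ fun i _ => ?_
    have : LipschitzWith 1 (fun θ : ℝ => ∫ ω, max (x i ω - θ) 0 ∂μ) := by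
      refine LipschitzWith.of_le_add fun a b => ?_
      have : ∫ ω, max (x i ω - a) 0 ∂μ ≤ ∫ ω, (max (x i ω - b) 0 + dist a b) ∂μ := by
        refine integral_mono (hI i a) ((hI i b).add (integrable_const _)) fun ω => ?_
        have h1 := le_max_left (x i ω - b) 0
        have h2 := le_max_right (x i ω - b) 0
        have h3 : b - a ≤ dist a b := by rw [dist_comm]; exact le_abs_self _
        have h4 : 0 ≤ dist a b := dist_nonneg
        exact max_le (by linarith) (by linarith)
      rw [integral_add (hI i b) (integrable_const _)] at this
      simpa using this
    exact this.continuous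
  set T := ∑ i, ∫ ω, x i ω ∂μ with hT
  have hT0 : 0 ≤ T := Finset.sum_nonneg fun i _ => integral_nonneg (h0 i)
  have hST : ∑ i, ∫ ω, max (x i ω - T) 0 ∂μ ≤ T := by
    refine Finset.sum_le_sum fun i _ => integral_mono (hI i T) (hi i) fun ω => ?_
    exact max_le (by linarith) (h0 i ω)
  have hS0 : 0 ≤ ∑ i, ∫ ω, max (x i ω - 0) 0 ∂μ :=
    Finset.sum_nonneg fun i _ => integral_nonneg fun ω => le_max_right _ _
  have hd : ContinuousOn (fun θ : ℝ => θ - ∑ i, ∫ ω, max (x i ω - θ) 0 ∂μ) (Set.Icc 0 T) :=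
    (continuous_id.sub hc).continuousOn
  obtain ⟨θ, hθ, he⟩ := intermediate_value_Icc hT0 hd
    (show (0 : ℝ) ∈ Set.Icc _ _ from ⟨by simpa using hS0, by simpa using hST⟩)
  exact ⟨θ, hθ.1, by simp only at he; linarith⟩

lemma dht_key {Ω : Type*} [MeasurableSpace Ω] (μ : Measure Ω) [IsProbabilityMeasure μ]
    (n : ℕ) (x : Fin n → Ω → ℝ) (hm : ∀ i, Measurable (x i))
    (hi : ∀ i, Integrable (x i) μ) (hind : iIndepFun x μ) (θ : ℝ) (hθ : 0 ≤ θ)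
    (hS : ∑ i, ∫ ω, max (x i ω - θ) 0 ∂μ = θ) (V : Ω → ℝ) (hV : Integrable V μ)
    (hV0 : ∀ ω, (∀ i, x i ω < θ) → V ω = 0)
    (hV1 : ∀ ω, (∃ i, θ ≤ x i ω) → ∃ k, θ ≤ x k ω ∧ V ω = x k ω) :
    θ ≤ ∫ ω, V ω ∂μ := by
  classical
  let f : ℝ → ℝ := (Set.Iio θ).indicator 1
  have hf : Measurable f := measurable_one.indicator measurableSet_Iio
  have hf0 : ∀ y, 0 ≤ f y := fun y => Set.indicator_nonneg (fun _ _ => zero_le_one) y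
  have hf1 : ∀ y, f y ≤ 1 := fun y => Set.indicator_le_self' (fun _ _ => zero_le_one) y
  have hflt : ∀ y, y < θ → f y = 1 := fun y h => by simp [f, h]
  have hfge : ∀ y, θ ≤ y → f y = 0 := fun y h => by simp [f, h]
  let p : ℝ → ℝ := fun y => max (y - θ) 0
  have hp : Measurable p := by fun_prop
  have hp0 : ∀ y, 0 ≤ p y := fun y => le_max_right _ _
  have hpI : ∀ i, Integrable (fun ω => p (x i ω)) μ := fun i =>
    ((hi i).sub (integrable_const θ)).pos_part
  let g : Fin n → Fin n → ℝ → ℝ := fun i j => if j = i then p else f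
  have hg : ∀ i j, Measurable (g i j) := fun i j => by
    by_cases h : j = i <;> simp [g, h, hp, hf]
  have hprod : ∀ φ : Fin n → ℝ → ℝ, (∀ j, Measurable (φ j)) →
      ∫ ω, ∏ j, φ j (x j ω) ∂μ = ∏ j, ∫ ω, φ j (x j ω) ∂μ := fun φ hφ =>
    (hind.comp φ hφ).integral_fun_prod_eq_prod_integral
      (fun j => ((hφ j).comp (hm j)).aestronglyMeasurable)
  have hgsplit : ∀ i (F : (ℝ → ℝ) → Fin n → ℝ), ∏ j, F (g i j) j
      = F p i * ∏ j ∈ Finset.univ.erase i, F f j := by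
    intro i F
    rw [← Finset.mul_prod_erase _ _ (Finset.mem_univ i)]
    congr 1
    · simp [g]
    · refine Finset.prod_congr rfl fun j hj => ?_
      simp [g, (Finset.mem_erase.1 hj).1]
  have hgle : ∀ i ω, ∏ j, g i j (x j ω) ≤ p (x i ω) := fun i ω => by
    rw [hgsplit i (fun h j => h (x j ω))]
    exact mul_le_of_le_one_right (hp0 _) (Finset.prod_le_one (fun _ _ => hf0 _) fun _ _ => hf1 _)
  have hg0 : ∀ i ω, 0 ≤ ∏ j, g i j (x j ω) := fun i ω => by
    rw [hgsplit i (fun h j => h (x j ω))]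
    exact mul_nonneg (hp0 _) (Finset.prod_nonneg fun _ _ => hf0 _)
  have hgI : ∀ i, Integrable (fun ω => ∏ j, g i j (x j ω)) μ := fun i => by
    refine (hpI i).mono' ?_ (Filter.Eventually.of_forall fun ω => ?_)
    · exact (Finset.measurable_fun_prod _ fun j _ => (hg i j).comp (hm j)).aestronglyMeasurable
    · rw [Real.norm_of_nonneg (hg0 i ω)]; exact hgle i ω
  have hfI : Integrable (fun ω => ∏ j, f (x j ω)) μ := by
    refine (integrable_const (1 : ℝ)).mono' ?_ (Filter.Eventually.of_forall fun ω => ?_)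
    · exact (Finset.measurable_fun_prod _ fun j _ => hf.comp (hm j)).aestronglyMeasurable
    · rw [Real.norm_of_nonneg (Finset.prod_nonneg fun _ _ => hf0 _)]
      exact Finset.prod_le_one (fun _ _ => hf0 _) fun _ _ => hf1 _
  have hfI1 : ∀ j, Integrable (fun ω => f (x j ω)) μ := fun j => by
    refine (integrable_const (1 : ℝ)).mono' (hf.comp (hm j)).aestronglyMeasurable
      (Filter.Eventually.of_forall fun ω => ?_)
    rw [Real.norm_of_nonneg (hf0 _)]; exact hf1 _
  have hq0 : ∀ j, 0 ≤ ∫ ω, f (x j ω) ∂μ := fun j => integral_nonneg fun _ => hf0 _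
  have hq1 : ∀ j, ∫ ω, f (x j ω) ∂μ ≤ 1 := fun j => by
    have := integral_mono (hfI1 j) (integrable_const (1 : ℝ)) (fun ω => hf1 (x j ω))
    simpa using this
  have hpt : ∀ ω, θ * (1 - ∏ j, f (x j ω)) + ∑ i, ∏ j, g i j (x j ω) ≤ V ω := by
    intro ω
    by_cases h : ∃ i, θ ≤ x i ω
    · obtain ⟨k, hk, hVk⟩ := hV1 ω h
      rw [Finset.prod_eq_zero (Finset.mem_univ k) (hfge _ hk),
        Finset.sum_eq_single k]
      · have h1 := hgle k ω
        have h2 : p (x k ω) = x k ω - θ := max_eq_left (by linarith)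
        linarith
      · intro i _ hik
        refine Finset.prod_eq_zero (Finset.mem_univ k) ?_
        simp [g, hik.symm, hfge _ hk]
      · simp
    · push Not at h
      rw [hV0 ω h, Finset.prod_eq_one (fun j _ => hflt _ (h j)), Finset.sum_eq_zero]
      · simp
      · intro i _
        refine Finset.prod_eq_zero (Finset.mem_univ i) ?_
        have := h i
        simp only [g, p, if_true]
        exact max_eq_right (by linarith)
  have hA : Integrable (fun ω => θ * (1 - ∏ j, f (x j ω))) μ :=
    ((integrable_const (1 : ℝ)).sub hfI).const_mul θ
  have hB : Integrable (fun ω => ∑ i, ∏ j, g i j (x j ω)) μ :=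
    integrable_finsetSum Finset.univ fun i _ => hgI i
  have hint : ∫ ω, (θ * (1 - ∏ j, f (x j ω)) + ∑ i, ∏ j, g i j (x j ω)) ∂μ ≤ ∫ ω, V ω ∂μ :=
    integral_mono (hA.add hB) hV hpt
  refine le_trans ?_ hint
  rw [integral_add hA hB, integral_const_mul, integral_finsetSum _ fun i _ => hgI i,
    integral_sub (integrable_const _) hfI, hprod (fun _ => f) (fun _ => hf)]
  have hlow : ∀ i, (∫ ω, p (x i ω) ∂μ) * ∏ j, ∫ ω, f (x j ω) ∂μ
      ≤ ∫ ω, ∏ j, g i j (x j ω) ∂μ := by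
    intro i
    rw [hprod (g i) (hg i), hgsplit i (fun h j => ∫ ω, h (x j ω) ∂μ)]
    refine mul_le_mul_of_nonneg_left ?_ (integral_nonneg fun _ => hp0 _)
    rw [← Finset.mul_prod_erase _ _ (Finset.mem_univ i)]
    exact mul_le_of_le_one_left (Finset.prod_nonneg fun _ _ => hq0 _) (hq1 i)
  have hsum := Finset.sum_le_sum fun i (_ : i ∈ Finset.univ) => hlow i
  rw [← Finset.sum_mul, hS] at hsum
  simp only [integral_const, probReal_univ, smul_eq_mul, one_mul]
  linarith

/-- In the distributional model of delegated search, the agent draws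
`n` i.i.d. samples `(x_1,y_1),…,(x_n,y_n)` from a joint distribution on `[0,∞)×[0,∞)`
(`x_i` is the principal's utility and `y_i` the agent's); assume `E[max_i x_i]` is
finite.  There exist a threshold `θ ≥ 0` and a choice of weak or strict comparison
such that the single-proposal mechanism with eligible set `R = {(x,y) : x ≥ θ}`
(resp. `R = {(x,y) : x > θ}`) guarantees the principal expected utility at least
`(1/2)·E[max_i x_i]`, no matter which eligible sample the agent proposes whenever at
least one eligible sample exists (the principal receives the `x`-value of the
accepted proposal, and `0` when no sample is eligible). -/
theorem delegation_half_threshold {Ω : Type*} [MeasurableSpace Ω]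
    (μ : Measure Ω) [IsProbabilityMeasure μ]
    (n : ℕ) (hn : 0 < n) (s : Fin n → Ω → ℝ × ℝ)
    (hmeas : ∀ i, Measurable (s i))
    (hnonneg : ∀ i ω, 0 ≤ (s i ω).1 ∧ 0 ≤ (s i ω).2)
    (hindep : iIndepFun s μ)
    (hident : ∀ i, μ.map (s i) = μ.map (s ⟨0, hn⟩))
    (hint_max : Integrable (fun ω => ⨆ i, (s i ω).1) μ) :
    ∃ θ : ℝ, 0 ≤ θ ∧ ∃ R : Set (ℝ × ℝ),
      (R = {p | θ ≤ p.1} ∨ R = {p | θ < p.1}) ∧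
      ∀ proposal : Ω → Option (Fin n),
        (∀ ω i, proposal ω = some i → s i ω ∈ R) →
        (∀ ω, (∃ i, s i ω ∈ R) → (proposal ω).isSome) →
        Integrable (fun ω => ((proposal ω).map fun i => (s i ω).1).getD 0) μ →
        (1 / 2) * (∫ ω, (⨆ i, (s i ω).1) ∂μ)
          ≤ ∫ ω, ((proposal ω).map fun i => (s i ω).1).getD 0 ∂μ := by
  have hbdd : ∀ ω, BddAbove (Set.range fun i => (s i ω).1) := fun ω => Set.finite_range _ |>.bddAbove
  have : Nonempty (Fin n) := ⟨⟨0, hn⟩⟩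
  have hm : ∀ i, Measurable (fun ω => (s i ω).1) := fun i => measurable_fst.comp (hmeas i)
  have hi : ∀ i, Integrable (fun ω => (s i ω).1) μ := fun i => by
    refine hint_max.mono' (hm i).aestronglyMeasurable (Filter.Eventually.of_forall fun ω => ?_)
    rw [Real.norm_of_nonneg (hnonneg i ω).1]
    exact le_ciSup (hbdd ω) i
  have hind : iIndepFun (fun i ω => (s i ω).1) μ :=
    hindep.comp (fun _ => Prod.fst) (fun _ => measurable_fst)
  obtain ⟨θ, hθ, hS⟩ := dht_exists_theta μ n (fun i ω => (s i ω).1)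
    (fun i ω => (hnonneg i ω).1) hi
  refine ⟨θ, hθ, _, Or.inl rfl, fun proposal h1 h2 h3 => ?_⟩
  have hkey := dht_key μ n (fun i ω => (s i ω).1) hm hi hind θ hθ hS _ h3 ?_ ?_
  · have hpI : ∀ i, Integrable (fun ω => max ((s i ω).1 - θ) 0) μ := fun i =>
      ((hi i).sub (integrable_const θ)).pos_part
    have hub : ∫ ω, (⨆ i, (s i ω).1) ∂μ ≤ ∫ ω, (θ + ∑ i, max ((s i ω).1 - θ) 0) ∂μ := by
      refine integral_mono hint_max
        ((integrable_const θ).add (integrable_finsetSum Finset.univ fun i _ => hpI i)) fun ω => ?_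
      refine ciSup_le fun i => ?_
      have ha := Finset.single_le_sum (f := fun i => max ((s i ω).1 - θ) 0)
        (fun j _ => le_max_right _ _) (Finset.mem_univ i)
      have hb := le_max_left ((s i ω).1 - θ) 0
      linarith
    rw [integral_add (integrable_const θ) (integrable_finsetSum Finset.univ fun i _ => hpI i),
      integral_finsetSum _ fun i _ => hpI i, hS] at hub
    simp only [integral_const, probReal_univ, smul_eq_mul, one_mul] at hub
    linarith
  · intro ω h
    rcases hp : proposal ω with _ | k
    · simp
    · exact absurd (h1 ω k hp) (not_le.2 (h k))
  · intro ω h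
    obtain ⟨k, hk⟩ := Option.isSome_iff_exists.1 (h2 ω h)
    exact ⟨k, h1 ω k hk, by simp [hk]⟩
end

section
/- Let x_1,…,x_n be independent nonnegative integrable random variables and x_* = max_{1≤i≤n} x_i. Then there exists a threshold θ such that at least one of the two threshold stopping rules at θ — the weak rule selecting the first x_i with x_i ≥ θ, and the strict rule selecting the first x_i with x_i > θ (each yielding value 0 if no index qualifies) — has expected selected value at least (1/2)·E[x_*]. -/
open MeasureTheory ProbabilityTheory

/-- The value obtained by a threshold stopping rule with eligible set `X ⊆ ℝ` applied to
the finite sequence `x 0, x 1, …, x (n-1)`: it selects the first entry lying in `X`,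
and receives `0` if no entry lies in `X`. -/
noncomputable def thresholdStopValue {n : ℕ} (x : Fin n → ℝ) (X : Set ℝ) : ℝ := by
  classical
  exact match Fin.find? (fun i => decide (x i ∈ X)) with
    | some i => x i
    | none => 0

theorem tsv_eq {n : ℕ} (x : Fin n → ℝ) (θ : ℝ) :
    thresholdStopValue x (Set.Ici θ)
      = θ * (1 - Set.indicator {y : Fin n → ℝ | ∀ j, y j < θ} 1 x)
        + ∑ i, max (x i - θ) 0 * Set.indicator {y : Fin n → ℝ | ∀ j < i, y j < θ} 1 x := by
  classical
  unfold thresholdStopValue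
  split
  · rename_i i hi
    rw [Fin.find?_eq_some_iff] at hi
    obtain ⟨h1, h2⟩ := hi
    simp only [decide_eq_true_eq, Set.mem_Ici, decide_eq_false_iff_not, not_le, Bool.not_eq_true] at h1 h2
    rw [Finset.sum_eq_single i]
    · rw [Set.indicator_of_notMem, Set.indicator_of_mem, max_eq_left (by linarith)]
      · simp
      · intro j hj; simpa using h2 j hj
      · intro h; exact absurd (h i) (not_lt.mpr h1)
    · intro j _ hj
      rcases lt_or_gt_of_ne hj with h | h
      · rw [max_eq_right, zero_mul]
        have := h2 j h
        linarith
      · rw [Set.indicator_of_notMem, mul_zero]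
        intro h'; exact absurd (h' i h) (not_lt.mpr h1)
    · simp
  · rename_i hi
    rw [Fin.find?_eq_none_iff] at hi
    simp only [decide_eq_true_eq, Set.mem_Ici, decide_eq_false_iff_not, not_le, Bool.not_eq_true] at hi
    rw [Set.indicator_of_mem (by exact hi), Finset.sum_eq_zero]
    · simp
    · intro j _
      rw [max_eq_right (by linarith [hi j]), zero_mul]

/-- Samuel-Cahn prophet inequality, factor `1/2`, for threshold
stopping rules.  Let `x_1,…,x_n` be independent nonnegative integrable random
variables and `x_* = max_i x_i`.  There exists a threshold `θ` such that at least one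
of the two threshold stopping rules at `θ` — the weak rule stopping at the first
`x_i ≥ θ` and the strict rule stopping at the first `x_i > θ`, each receiving `0`
when no index qualifies — has expected selected value at least `(1/2)·E[x_*]`. -/
theorem samuel_cahn_prophet {Ω : Type*} [MeasurableSpace Ω]
    (μ : Measure Ω) [IsProbabilityMeasure μ]
    (n : ℕ) (hn : 0 < n) (x : Fin n → Ω → ℝ)
    (hmeas : ∀ i, Measurable (x i))
    (hnonneg : ∀ i ω, 0 ≤ x i ω)
    (hint : ∀ i, Integrable (x i) μ)
    (hindep : iIndepFun x μ) :
    ∃ θ : ℝ,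
      (1 / 2) * (∫ ω, (⨆ i, x i ω) ∂μ)
          ≤ ∫ ω, thresholdStopValue (fun i => x i ω) (Set.Ici θ) ∂μ ∨
      (1 / 2) * (∫ ω, (⨆ i, x i ω) ∂μ)
          ≤ ∫ ω, thresholdStopValue (fun i => x i ω) (Set.Ioi θ) ∂μ := by
  have := Fin.pos_iff_nonempty.mp hn
  set M := ∫ ω, (⨆ i, x i ω) ∂μ with hM
  refine ⟨M / 2, Or.inl ?_⟩
  set θ := M / 2 with hθ
  have hM0 : 0 ≤ M := integral_nonneg fun ω => Real.iSup_nonneg fun i => hnonneg i ω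
  have hmS : ∀ i : Fin n, MeasurableSet {y : Fin n → ℝ | ∀ j < i, y j < θ} := by
    intro i
    simp only [Set.ofPred_forall]
    exact MeasurableSet.iInter fun j => MeasurableSet.iInter fun _ =>
      measurableSet_lt (measurable_pi_apply j) measurable_const
  have hmA : MeasurableSet {y : Fin n → ℝ | ∀ j, y j < θ} := by
    simp only [Set.ofPred_forall]
    exact MeasurableSet.iInter fun j =>
      measurableSet_lt (measurable_pi_apply j) measurable_const
  have hxm : Measurable (fun ω i => x i ω) := measurable_pi_lambda _ hmeas
  -- the indicator functions
  set A : Ω → ℝ := fun ω => Set.indicator {y : Fin n → ℝ | ∀ j, y j < θ} 1 (fun i => x i ω) with hA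
  set S : Fin n → Ω → ℝ := fun i ω =>
    Set.indicator {y : Fin n → ℝ | ∀ j < i, y j < θ} 1 (fun i => x i ω) with hS
  set P : Fin n → Ω → ℝ := fun i ω => max (x i ω - θ) 0 with hP
  have hAm : Measurable A := (measurable_one.indicator hmA).comp hxm
  have hSm : ∀ i, Measurable (S i) := fun i => (measurable_one.indicator (hmS i)).comp hxm
  have hA0 : ∀ ω, 0 ≤ A ω := fun ω => Set.indicator_nonneg (fun _ _ => zero_le_one) _
  have hS0 : ∀ i ω, 0 ≤ S i ω := fun i ω => Set.indicator_nonneg (fun _ _ => zero_le_one) _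
  have hA1 : ∀ ω, A ω ≤ 1 := fun ω =>
    Set.indicator_le_self' (f := (1 : (Fin n → ℝ) → ℝ)) (fun _ _ => zero_le_one) _
  have hS1 : ∀ i ω, S i ω ≤ 1 := fun i ω =>
    Set.indicator_le_self' (f := (1 : (Fin n → ℝ) → ℝ)) (fun _ _ => zero_le_one) _
  have hAS : ∀ i ω, A ω ≤ S i ω := fun i ω =>
    Set.indicator_le_indicator_of_subset (f := (1 : (Fin n → ℝ) → ℝ))
      (s := {y : Fin n → ℝ | ∀ j, y j < θ}) (t := {y : Fin n → ℝ | ∀ j < i, y j < θ})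
      (fun y hy j _ => hy j) (fun _ => zero_le_one) _
  have hAi : Integrable A μ := Integrable.of_bound hAm.aestronglyMeasurable 1
    (Filter.Eventually.of_forall fun ω => by rw [Real.norm_of_nonneg (hA0 ω)]; exact hA1 ω)
  have hSi : ∀ i, Integrable (S i) μ := fun i => Integrable.of_bound (hSm i).aestronglyMeasurable 1
    (Filter.Eventually.of_forall fun ω => by rw [Real.norm_of_nonneg (hS0 i ω)]; exact hS1 i ω)
  have hPi : ∀ i, Integrable (P i) μ := fun i => ((hint i).sub (integrable_const θ)).pos_part
  have hP0 : ∀ i ω, 0 ≤ P i ω := fun i ω => le_max_right _ _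
  have hind : ∀ i, IndepFun (P i) (S i) μ := by
    intro i
    have h := hindep.indepFun_finset {i} (Finset.Iio i) (by simp) hmeas
    have hset : MeasurableSet {y : (Finset.Iio i) → ℝ | ∀ j, y j < θ} := by
      simp only [Set.ofPred_forall]
      exact MeasurableSet.iInter fun j =>
        measurableSet_lt (measurable_pi_apply j) measurable_const
    have h2 := h.comp (φ := fun y : ({i} : Finset (Fin n)) → ℝ =>
        max (y ⟨i, Finset.mem_singleton_self i⟩ - θ) 0)
      (ψ := Set.indicator {y : (Finset.Iio i) → ℝ | ∀ j, y j < θ} (1 : ((Finset.Iio i) → ℝ) → ℝ))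
      (by fun_prop) (measurable_one.indicator hset)
    have hPe : P i = (fun y : ({i} : Finset (Fin n)) → ℝ =>
        max (y ⟨i, Finset.mem_singleton_self i⟩ - θ) 0) ∘
        fun a (j : ({i} : Finset (Fin n))) => x j a := rfl
    rw [hPe]
    convert h2 using 1
    funext ω
    simp only [hS, Function.comp, Set.indicator, Set.mem_ofPred_eq, Subtype.forall, Finset.mem_Iio,
      Pi.one_apply]
  have hPS : ∀ i, ∫ ω, P i ω * S i ω ∂μ = (∫ ω, P i ω ∂μ) * ∫ ω, S i ω ∂μ := fun i =>
    (hind i).integral_fun_mul_eq_mul_integral (hPi i).1 (hSi i).1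
  have hPSi : ∀ i, Integrable (fun ω => P i ω * S i ω) μ := fun i =>
    (hind i).integrable_mul (hPi i) (hSi i)
  have hval : ∫ ω, thresholdStopValue (fun i => x i ω) (Set.Ici θ) ∂μ
      = θ * (1 - ∫ ω, A ω ∂μ) + ∑ i, (∫ ω, P i ω ∂μ) * ∫ ω, S i ω ∂μ := by
    have : ∀ ω, thresholdStopValue (fun i => x i ω) (Set.Ici θ)
        = θ * (1 - A ω) + ∑ i, P i ω * S i ω := fun ω => tsv_eq _ _
    simp_rw [this]
    have hi1 : Integrable (fun ω => θ * (1 - A ω)) μ :=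
      ((integrable_const 1).sub hAi).const_mul θ
    rw [integral_add hi1
      (integrable_finsetSum _ fun i _ => hPSi i), integral_finsetSum _ fun i _ => hPSi i,
      integral_const_mul, integral_sub (integrable_const 1) hAi]
    simp [hPS]
  have hmax : M ≤ θ + ∑ i, ∫ ω, P i ω ∂μ := by
    have h1 : M ≤ ∫ ω, (θ + ∑ i, P i ω) ∂μ := by
      refine integral_mono_of_nonneg
        (Filter.Eventually.of_forall fun ω => Real.iSup_nonneg fun i => hnonneg i ω)
        ((integrable_const θ).add (integrable_finsetSum _ fun i _ => hPi i))
        (Filter.Eventually.of_forall fun ω => ?_)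
      refine ciSup_le fun i => ?_
      have h2 := Finset.single_le_sum (f := fun i => P i ω) (fun j _ => hP0 j ω) (Finset.mem_univ i)
      have h3 : x i ω - θ ≤ P i ω := le_max_left _ _
      simp only at h2 ⊢
      linarith
    rw [integral_add (integrable_const θ) (integrable_finsetSum _ fun i _ => hPi i),
      integral_finsetSum _ fun i _ => hPi i] at h1
    simpa using h1
  have hsum : (∑ i, ∫ ω, P i ω ∂μ) * ∫ ω, A ω ∂μ ≤ ∑ i, (∫ ω, P i ω ∂μ) * ∫ ω, S i ω ∂μ := by
    rw [Finset.sum_mul]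
    refine Finset.sum_le_sum fun i _ => mul_le_mul_of_nonneg_left
      (integral_mono hAi (hSi i) (hAS i)) (integral_nonneg (hP0 i))
  have hAint : 0 ≤ ∫ ω, A ω ∂μ := integral_nonneg hA0
  rw [hval]
  have h5 : θ ≤ ∑ i, ∫ ω, P i ω ∂μ := by linarith
  have h6 := mul_le_mul_of_nonneg_right h5 hAint
  have h7 : 1 / 2 * M = θ := by rw [hθ]; ring
  rw [h7]
  linarith
end

section
/- Let X_1,…,X_n be i.i.d. nonnegative random variables with continuous (atomless) cumulative distribution function F, let θ satisfy F(θ) = exp(−1/n), and let τ = min{ t ≤ n : X_t > θ } be the corresponding threshold stopping rule (so that Pr(τ > 1) = exp(−1/n)). Then E[X_τ · 1{τ ≤ n}] ≥ (1 − 1/e)·E[max_{1≤t≤n} X_t]. -/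
open MeasureTheory ProbabilityTheory

lemma thresholdStopValue_eq_sum {n : ℕ} (x : Fin n → ℝ) (θ : ℝ) :
    thresholdStopValue x (Set.Ioi θ) =
      ∑ t : Fin n, {v : Fin n → ℝ | ∀ s < t, v s ≤ θ}.indicator (fun _ => (1 : ℝ)) x *
        (Set.Ioi θ).indicator id (x t) := by
  classical
  unfold thresholdStopValue
  split
  · rename_i i h
    obtain ⟨h1, h2⟩ := Fin.find?_eq_some_iff.1 h
    have hi : x i ∈ Set.Ioi θ := by simpa using h1
    have hlt : ∀ j < i, x j ≤ θ := fun j hj => by simpa using h2 j hj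
    rw [Finset.sum_eq_single i]
    · rw [Set.indicator_of_mem hi, Set.indicator_of_mem (by exact hlt)]
      simp
    · intro t _ hne
      rcases lt_or_gt_of_ne hne with hl | hg
      · rw [Set.indicator_of_notMem (s := Set.Ioi θ), mul_zero]
        simpa using hlt t hl
      · rw [Set.indicator_of_notMem, zero_mul]
        intro hm
        exact absurd (hm i hg) (not_le.2 hi)
    · simp
  · rename_i h
    rw [Fin.find?_eq_none_iff] at h
    symm
    apply Finset.sum_eq_zero
    intro t _
    have ht : x t ∉ Set.Ioi θ := by simpa using h t
    rw [Set.indicator_of_notMem ht, mul_zero]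

/-- Let `X_1,…,X_n` be i.i.d. nonnegative random variables with
continuous (atomless) cumulative distribution function `F`, let `θ` satisfy
`F(θ) = exp(−1/n)`, and let `τ = min{t ≤ n : X_t > θ}` be the corresponding strict
threshold stopping rule (so that `Pr(τ > 1) = exp(−1/n)`).  Then
`E[X_τ · 1{τ ≤ n}] ≥ (1 − 1/e)·E[max_t X_t]`. -/
theorem threshold_rule_one_minus_inv_e {Ω : Type*} [MeasurableSpace Ω]
    (μ : Measure Ω) [IsProbabilityMeasure μ]
    (n : ℕ) (hn : 0 < n) (x : Fin n → Ω → ℝ)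
    (hmeas : ∀ i, Measurable (x i))
    (hnonneg : ∀ i ω, 0 ≤ x i ω)
    (hint : ∀ i, Integrable (x i) μ)
    (hindep : iIndepFun x μ)
    (hident : ∀ i, μ.map (x i) = μ.map (x ⟨0, hn⟩))
    (F : ℝ → ℝ) (hF : ∀ t, F t = (μ {ω | x ⟨0, hn⟩ ω ≤ t}).toReal)
    (hFcont : Continuous F)
    (θ : ℝ) (hθ : F θ = Real.exp (-1 / n)) :
    (1 - 1 / Real.exp 1) * (∫ ω, (⨆ i, x i ω) ∂μ)
      ≤ ∫ ω, thresholdStopValue (fun i => x i ω) (Set.Ioi θ) ∂μ := by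
  have : Nonempty (Fin n) := ⟨⟨0, hn⟩⟩
  set q := Real.exp (-1 / n) with hq
  have hnR : (0 : ℝ) < n := by exact_mod_cast hn
  have hq0 : 0 < q := Real.exp_pos _
  have hq1 : q < 1 := by
    rw [hq, Real.exp_lt_one_iff]
    exact div_neg_of_neg_of_pos (by norm_num) hnR
  have hqn : q ^ n = 1 / Real.exp 1 := by
    rw [hq, ← Real.exp_nat_mul, mul_div_cancel₀ _ hnR.ne', Real.exp_neg, one_div]
  have hnq : n * (1 - q) ≤ 1 := by
    have h := Real.add_one_le_exp (-1 / (n : ℝ))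
    rw [← hq] at h
    have h2 : n * (1 - q) ≤ n * (1 / n) := by
      apply mul_le_mul_of_nonneg_left _ hnR.le
      have : -1 / (n : ℝ) = - (1 / n) := by ring
      linarith
    rwa [mul_one_div_cancel hnR.ne'] at h2
  have hθ0 : 0 ≤ θ := by
    by_contra hneg
    push Not at hneg
    have : F θ = 0 := by
      rw [hF]
      have : {ω | x ⟨0, hn⟩ ω ≤ θ} = ∅ := by
        ext ω
        simpa using lt_of_lt_of_le hneg (hnonneg _ ω)
      simp [this]
    rw [this] at hθ
    exact hq0.ne hθ
  have hid : ∀ i, IdentDistrib (x i) (x ⟨0, hn⟩) μ μ := fun i =>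
    ⟨(hmeas i).aemeasurable, (hmeas _).aemeasurable, hident i⟩
  have hq' : ∀ i, μ (x i ⁻¹' Set.Iic θ) = ENNReal.ofReal q := by
    intro i
    rw [(hid i).measure_preimage_eq measurableSet_Iic, ← hθ, hF, ENNReal.ofReal_toReal (measure_ne_top _ _)]
    rfl
  -- the integral of one variable above the threshold
  let g : ℝ → ℝ := (Set.Ioi θ).indicator id
  have hg : Measurable g := measurable_id.indicator measurableSet_Ioi
  let A := ∫ ω, g (x ⟨0, hn⟩ ω) ∂μ
  have hA : ∀ i, ∫ ω, g (x i ω) ∂μ = A := fun i => ((hid i).comp hg).integral_eq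
  have hgint : ∀ i, Integrable (fun ω => g (x i ω)) μ := by
    intro i
    have : (fun ω => g (x i ω)) = (x i ⁻¹' Set.Ioi θ).indicator (x i) := by
      ext ω; simp [g, Set.indicator]
    rw [this]
    exact (hint i).indicator (hmeas i measurableSet_Ioi)
  let D : Fin n → Set Ω := fun t => ⋂ s ∈ Finset.Iio t, x s ⁻¹' Set.Iic θ
  have hDm : ∀ t, MeasurableSet (D t) := fun t =>
    Finset.measurableSet_biInter _ fun s _ => hmeas s measurableSet_Iic
  have hD : ∀ t, μ.real (D t) = q ^ (t : ℕ) := by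
    intro t
    rw [measureReal_def, hindep.measure_inter_preimage_eq_mul _ (fun _ _ => measurableSet_Iic)]
    simp [hq', hq0.le]
  have hterm : ∀ t, ∫ ω, (D t).indicator (fun _ => (1 : ℝ)) ω * g (x t ω) ∂μ = q ^ (t : ℕ) * A := by
    intro t
    have hi := hindep.indepFun_finset (Finset.Iio t) {t} (by simp) hmeas
    have hS : MeasurableSet {v : ↥(Finset.Iio t) → ℝ | ∀ i, v i ≤ θ} := by
      rw [Set.ofPred_forall]
      exact MeasurableSet.iInter fun i => measurableSet_le (measurable_pi_apply i) measurable_const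
    have hi2 := hi.comp (_mγ := Real.measurableSpace) (_mγ' := Real.measurableSpace)
      (φ := {v : ↥(Finset.Iio t) → ℝ | ∀ i, v i ≤ θ}.indicator (fun _ => (1 : ℝ)))
      (ψ := fun v : ↥({t} : Finset (Fin n)) → ℝ => g (v ⟨t, by simp⟩))
      (measurable_const.indicator hS) (hg.comp (measurable_pi_apply _))
    have e1 : ({v : ↥(Finset.Iio t) → ℝ | ∀ i, v i ≤ θ}.indicator (fun _ => (1 : ℝ)))
        ∘ (fun a i => x (↑i) a) = (D t).indicator (fun _ => (1 : ℝ)) := by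
      ext ω
      simp [D, Set.indicator]
    rw [e1] at hi2
    have h3 := hi2.integral_fun_mul_eq_mul_integral
      (measurable_const.indicator (hDm t)).aestronglyMeasurable
      ((hg.comp (hmeas t)).aestronglyMeasurable)
    have h4 : ∫ ω, (D t).indicator (fun _ => (1 : ℝ)) ω ∂μ = q ^ (t : ℕ) := by
      rw [integral_indicator_const _ (hDm t), hD]; simp
    rw [h4] at h3
    rw [← hA t]
    exact h3
  have htint : ∀ t, Integrable (fun ω => (D t).indicator (fun _ => (1 : ℝ)) ω * g (x t ω)) μ := by
    intro t
    have : (fun ω => (D t).indicator (fun _ => (1 : ℝ)) ω * g (x t ω))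
        = (D t).indicator (fun ω => g (x t ω)) := by
      ext ω; by_cases h : ω ∈ D t <;> simp [h]
    rw [this]
    exact (hgint t).indicator (hDm t)
  have hR : ∫ ω, thresholdStopValue (fun i => x i ω) (Set.Ioi θ) ∂μ
      = (∑ i ∈ Finset.range n, q ^ i) * A := by
    have : ∀ ω, thresholdStopValue (fun i => x i ω) (Set.Ioi θ)
        = ∑ t, (D t).indicator (fun _ => (1 : ℝ)) ω * g (x t ω) := by
      intro ω
      rw [thresholdStopValue_eq_sum]
      refine Finset.sum_congr rfl fun t _ => ?_
      congr 1
      simp [D, Set.indicator]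
    simp_rw [this]
    rw [integral_finsetSum _ (fun t _ => htint t)]
    simp_rw [hterm]
    rw [← Finset.sum_mul, Fin.sum_univ_eq_sum_range (fun i => q ^ i)]
  -- bound on the maximum
  let p : ℝ → ℝ := fun y => max (y - θ) 0
  have hpm : Measurable p := by fun_prop
  let B := ∫ ω, p (x ⟨0, hn⟩ ω) ∂μ
  have hpint : ∀ i, Integrable (fun ω => p (x i ω)) μ := fun i =>
    ((hint i).sub (integrable_const θ)).pos_part
  have hB : ∀ i, ∫ ω, p (x i ω) ∂μ = B := fun i => ((hid i).comp hpm).integral_eq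
  have hB0 : 0 ≤ B := integral_nonneg fun ω => le_max_right _ _
  have hAB : A = B + θ * (1 - q) := by
    have h1 : ∀ ω, g (x ⟨0, hn⟩ ω) = p (x ⟨0, hn⟩ ω) +
        (θ - (x ⟨0, hn⟩ ⁻¹' Set.Iic θ).indicator (fun _ => θ) ω) := by
      intro ω
      by_cases h : x ⟨0, hn⟩ ω ≤ θ
      · simp [g, p, Set.indicator, h, not_lt.2 h]
      · have h' := not_le.1 h
        simp [g, p, Set.indicator, h, h', h'.le]
    have hm := hmeas ⟨0, hn⟩ (measurableSet_Iic (a := θ))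
    have hi : Integrable ((x ⟨0, hn⟩ ⁻¹' Set.Iic θ).indicator (fun _ => θ)) μ :=
      (integrable_const θ).indicator hm
    change ∫ ω, g (x ⟨0, hn⟩ ω) ∂μ = _
    simp_rw [h1]
    have hi' : Integrable (fun ω => θ - (x ⟨0, hn⟩ ⁻¹' Set.Iic θ).indicator (fun _ => θ) ω) μ :=
      (integrable_const θ).sub hi
    rw [integral_add (hpint _) hi',
      integral_sub (integrable_const θ) hi, integral_indicator_const _ hm, measureReal_def, hq',
      ENNReal.toReal_ofReal hq0.le]
    simp [B]
    ring
  have hM : ∫ ω, (⨆ i, x i ω) ∂μ ≤ θ + n * B := by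
    have hsi : Integrable (fun ω => ∑ i, p (x i ω)) μ := integrable_finsetSum _ fun i _ => hpint i
    have h1 : ∫ ω, (⨆ i, x i ω) ∂μ ≤ ∫ ω, (θ + ∑ i, p (x i ω)) ∂μ := by
      apply integral_mono_of_nonneg
      · exact Filter.Eventually.of_forall fun ω => Real.iSup_nonneg fun i => hnonneg i ω
      · exact (integrable_const θ).add hsi
      · refine Filter.Eventually.of_forall fun ω => ciSup_le fun i => ?_
        have h2 : p (x i ω) ≤ ∑ i, p (x i ω) :=
          Finset.single_le_sum (f := fun i => p (x i ω)) (fun j _ => le_max_right _ _)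
            (Finset.mem_univ i)
        have h3 : x i ω - θ ≤ p (x i ω) := le_max_left _ _
        change x i ω ≤ θ + ∑ i, p (x i ω)
        linarith
    rw [integral_add (integrable_const θ) hsi, integral_finsetSum _ (fun i _ => hpint i)] at h1
    simpa [hB] using h1
  have hgeo : (∑ i ∈ Finset.range n, q ^ i) * (1 - q) = 1 - 1 / Real.exp 1 := by
    rw [geom_sum_mul_neg, hqn]
  rw [hR, ← hgeo, hAB]
  have hS0 : 0 ≤ ∑ i ∈ Finset.range n, q ^ i := Finset.sum_nonneg fun i _ => by positivity
  rw [mul_assoc]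
  apply mul_le_mul_of_nonneg_left _ hS0
  have h5 : (1 - q) * (∫ ω, (⨆ i, x i ω) ∂μ) ≤ (1 - q) * (θ + n * B) :=
    mul_le_mul_of_nonneg_left hM (by linarith)
  nlinarith [mul_le_mul_of_nonneg_right hnq hB0]
end

section
/- Fix n ≥ 3 and let β_n, z, Z be as defined. Let (x_1,t_1),…,(x_n,t_n) be i.i.d. pairs where x_i is nonnegative with continuous (atomless) cumulative distribution function F and t_i is uniform on [0,1], independent of x_i. Consider the oblivious stopping rule that, among all indices i with 1 − F(x_i) < z(t_i)/n, selects the one with smallest t_i (receiving value 0 if no index qualifies), and let x_τ denote the selected value. Then E[x_τ] ≥ (1 − 6/n)·(1 + β_n)^{−1}·E[max_{1≤i≤n} x_i]. -/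
open MeasureTheory ProbabilityTheory

lemma aux_pow_lower (n : ℕ) (hn : 7 ≤ n) (y : ℝ) (hy0 : 0 ≤ y) (hyn : y ≤ n) :
    Real.exp (-y) * (1 - y ^ 2 / n) ≤ (1 - y / n) ^ n := by
  have hn0 : (0:ℝ) < n := by positivity
  set x := y / n with hx
  have hx0 : 0 ≤ x := by positivity
  have hx1 : x ≤ 1 := by rw [hx, div_le_one hn0]; exact hyn
  have hy : y = n * x := by rw [hx]; field_simp
  have h1 : 1 - x ^ 2 ≤ (1 - x) * Real.exp x := by
    have := Real.add_one_le_exp x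
    nlinarith
  have hx2 : x ^ 2 ≤ 1 := by nlinarith
  have h2 : (1 - x ^ 2) ^ n ≤ ((1 - x) * Real.exp x) ^ n :=
    pow_le_pow_left₀ (by linarith) h1 n
  have h3 : 1 + (n:ℝ) * (-x ^ 2) ≤ (1 + (-x ^ 2)) ^ n :=
    one_add_mul_le_pow (by linarith) n
  have h4 : 1 - y ^ 2 / n ≤ (1 - x) ^ n * Real.exp y := by
    have e1 : 1 - y ^ 2 / n = 1 + (n:ℝ) * (-x ^ 2) := by rw [hy]; field_simp; ring
    have e2 : (1 - x) ^ n * Real.exp y = ((1 - x) * Real.exp x) ^ n := by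
      rw [mul_pow, ← Real.exp_nat_mul, hy]
    rw [e1, e2]
    refine h3.trans (le_trans (le_of_eq ?_) h2)
    ring
  have h5 : Real.exp (-y) * Real.exp y = 1 := by rw [← Real.exp_add]; simp
  calc Real.exp (-y) * (1 - y ^ 2 / n) ≤ Real.exp (-y) * ((1 - x) ^ n * Real.exp y) := by gcongr
    _ = (1 - x) ^ n * (Real.exp (-y) * Real.exp y) := by ring
    _ = _ := by rw [h5]; ring

lemma aux_final (n : ℕ) (hn : 7 ≤ n) (y : ℝ) (hy0 : 0 ≤ y) (hyn : y ≤ n) :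
    (1 - 6 / (n:ℝ)) * (1 - (1 - y / n) ^ n) ≤ 1 - Real.exp (-y) - y * Real.exp (-n) := by
  have hn0 : (0:ℝ) < n := by positivity
  have hn7 : (7:ℝ) ≤ n := by exact_mod_cast hn
  have h := aux_pow_lower n hn y hy0 hyn
  set E := Real.exp (-y) with hE
  have hEpos : 0 < E := Real.exp_pos _
  have hc : 0 ≤ 1 - 6 / (n:ℝ) := by
    rw [sub_nonneg, div_le_one hn0]; linarith
  -- bounds
  have hq : 1 + y + y ^ 2 / 2 ≤ Real.exp y := Real.quadratic_le_exp_of_nonneg hy0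
  have hEe : E * Real.exp y = 1 := by rw [hE, ← Real.exp_add]; simp
  have hA : y / (1 + y) ≤ 1 - E := by
    rw [div_le_iff₀ (by linarith)]
    have : E * (1 + y) ≤ 1 := by
      rw [← hEe]; gcongr; nlinarith
    nlinarith
  have hB : E * y ^ 2 ≤ 5 * (y / (1 + y)) := by
    rw [← mul_div_assoc, le_div_iff₀ (by linarith)]
    have h1 : y * (1 + y) ≤ 5 * Real.exp y := by nlinarith
    calc E * y ^ 2 * (1 + y) = E * y * (y * (1 + y)) := by ring
      _ ≤ E * y * (5 * Real.exp y) := by gcongr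
      _ = 5 * y * (E * Real.exp y) := by ring
      _ = 5 * y := by rw [hEe]; ring
  have hC : n * y * Real.exp (-n) ≤ y / (1 + y) := by
    rw [le_div_iff₀ (by linarith)]
    have h1 : (n:ℝ) * (1 + n) ≤ Real.exp n := by
      have := Real.sum_le_exp_of_nonneg (x := (n:ℝ)) (by positivity) 5
      simp [Finset.sum_range_succ, Nat.factorial] at this
      nlinarith [mul_nonneg (sub_nonneg.2 hn7) (sub_nonneg.2 hn7), pow_pos hn0 2, pow_pos hn0 3, mul_nonneg (sub_nonneg.2 hn7) (pow_pos hn0 2).le, mul_nonneg (sub_nonneg.2 hn7) (pow_pos hn0 3).le]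
    have h2 : Real.exp (-n) * Real.exp n = 1 := by rw [← Real.exp_add]; simp
    have h3 : Real.exp (-n) * (n * (1 + y)) ≤ 1 := by
      rw [← h2]; gcongr; nlinarith
    calc n * y * Real.exp (-n) * (1 + y) = y * (Real.exp (-n) * (n * (1 + y))) := by ring
      _ ≤ y * 1 := by gcongr
      _ = y := by ring
  have hD : n * (y * Real.exp (-n)) + E * y ^ 2 ≤ 6 * (1 - E) := by nlinarith
  have hD' : y * Real.exp (-n) + E * (y ^ 2 / n) ≤ 6 / n * (1 - E) := by
    rw [div_mul_eq_mul_div, le_div_iff₀ hn0]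
    calc _ = n * (y * Real.exp (-n)) + E * y ^ 2 := by field_simp
      _ ≤ _ := hD
  have h6 : (1 - 6 / (n:ℝ)) * (1 - (1 - y / n) ^ n) ≤ (1 - 6 / (n:ℝ)) * (1 - E * (1 - y^2/n)) := by
    gcongr
  have h7 : 0 ≤ 6 / (n:ℝ) * (E * (y ^ 2 / n)) := by positivity
  nlinarith

lemma aux_piece (β : ℝ) (hβ : 0 < β) (hb : β ≤ 11/50) (a : ℝ) (ha : 0 ≤ a) (c : ℝ) :
    2 * c - c ^ 2 * (1 + a + 1/2 + 11/50 * (Real.exp (a+1) - Real.exp a)) ≤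
      ∫ v in a..(a+1), (1 + v + β * Real.exp v)⁻¹ := by
  have e : ∫ v in a..(a+1), (2 * c - c ^ 2 * (1 + v + 11/50 * Real.exp v)) =
      2 * c - c ^ 2 * (1 + a + 1/2 + 11/50 * (Real.exp (a+1) - Real.exp a)) := by
    rw [intervalIntegral.integral_sub (by simp) (by apply Continuous.intervalIntegrable; fun_prop), intervalIntegral.integral_const_mul (c^2),
      intervalIntegral.integral_add (by apply Continuous.intervalIntegrable; fun_prop) (by apply Continuous.intervalIntegrable; fun_prop),
      intervalIntegral.integral_add (by simp) (by simp)]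
    simp
    left
    ring
  rw [← e]
  apply intervalIntegral.integral_mono_on (by linarith)
  · apply Continuous.intervalIntegrable; fun_prop
  · apply ContinuousOn.intervalIntegrable
    apply ContinuousOn.inv₀ (by fun_prop)
    intro x hx
    rw [Set.uIcc_of_le (by linarith)] at hx
    have := Real.exp_pos x
    have : 0 ≤ x := ha.trans hx.1
    positivity
  · intro x hx
    have hx0 : 0 ≤ x := ha.trans hx.1
    have hE := Real.exp_pos x
    have hD : 0 < 1 + x + β * Real.exp x := by positivity
    have hDD : 1 + x + β * Real.exp x ≤ 1 + x + 11/50 * Real.exp x := by gcongr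
    set D := 1 + x + β * Real.exp x
    have h1 : 2 * c - c ^ 2 * D ≤ D⁻¹ := by
      rw [← sub_nonneg]
      have : D⁻¹ - (2 * c - c ^ 2 * D) = (1 - c * D) ^ 2 / D := by field_simp; ring
      rw [this]; positivity
    nlinarith [sq_nonneg c]

lemma aux_beta (n : ℕ) (hn : 7 ≤ n) (β : ℝ) (hβpos : 0 < β)
    (hβ : ∫ v in (0:ℝ)..(n : ℝ), (1 + v + β * Real.exp v)⁻¹ = 1) : 11/50 ≤ β := by
  by_contra hlt
  push Not at hlt
  have hn7 : (7:ℝ) ≤ n := by exact_mod_cast hn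
  have hii : ∀ a b : ℝ, 0 ≤ a → a ≤ b → IntervalIntegrable (fun v => (1 + v + β * Real.exp v)⁻¹) volume a b := by
    intro a b ha hab
    apply ContinuousOn.intervalIntegrable
    apply ContinuousOn.inv₀ (by fun_prop)
    intro x hx
    rw [Set.uIcc_of_le hab] at hx
    have := Real.exp_pos x
    have : 0 ≤ x := ha.trans hx.1
    positivity
  have p0 := aux_piece β hβpos hlt.le 0 le_rfl (53/100)
  have p1 := aux_piece β hβpos hlt.le 1 (by norm_num) (28/100)
  have p2 := aux_piece β hβpos hlt.le 2 (by norm_num) (16/100)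
  have p3 := aux_piece β hβpos hlt.le 3 (by norm_num) (8/100)
  have p4 : 0 ≤ ∫ v in (4:ℝ)..n, (1 + v + β * Real.exp v)⁻¹ := by
    apply intervalIntegral.integral_nonneg (by linarith)
    intro x hx
    have := Real.exp_pos x
    have := hx.1
    have : 0 ≤ x := by linarith
    positivity
  norm_num at p0 p1 p2 p3
  have s1 := intervalIntegral.integral_add_adjacent_intervals (hii 0 1 (by norm_num) (by norm_num)) (hii 1 2 (by norm_num) (by norm_num))
  have s2 := intervalIntegral.integral_add_adjacent_intervals (hii 0 2 (by norm_num) (by norm_num)) (hii 2 3 (by norm_num) (by norm_num))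
  have s3 := intervalIntegral.integral_add_adjacent_intervals (hii 0 3 (by norm_num) (by norm_num)) (hii 3 4 (by norm_num) (by norm_num))
  have s4 := intervalIntegral.integral_add_adjacent_intervals (hii 0 4 (by norm_num) (by norm_num)) (hii 4 n (by norm_num) (by linarith))
  have e1 := Real.exp_one_lt_d9
  have e1' := Real.exp_one_gt_d9
  have e2 : Real.exp 2 = Real.exp 1 ^ 2 := by rw [← Real.exp_nat_mul]; norm_num
  have e3 : Real.exp 3 = Real.exp 1 ^ 3 := by rw [← Real.exp_nat_mul]; norm_num
  have e4 : Real.exp 4 = Real.exp 1 ^ 4 := by rw [← Real.exp_nat_mul]; norm_num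
  have b2 : Real.exp 2 < 7.3891 := by
    rw [e2]; calc _ < (2.7182818286:ℝ)^2 := by gcongr
      _ < _ := by norm_num
  have b3 : Real.exp 3 < 20.0856 := by
    rw [e3]; calc _ < (2.7182818286:ℝ)^3 := by gcongr
      _ < _ := by norm_num
  have b4 : Real.exp 4 < 54.5982 := by
    rw [e4]; calc _ < (2.7182818286:ℝ)^4 := by gcongr
      _ < _ := by norm_num
  have b2' : 7.389 < Real.exp 2 := by
    rw [e2]; calc _ < (2.7182818283:ℝ)^2 := by norm_num
      _ < _ := by gcongr
  have b3' : 20.0855 < Real.exp 3 := by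
    rw [e3]; calc _ < (2.7182818283:ℝ)^3 := by norm_num
      _ < _ := by gcongr
  norm_num at b2 b3 b4 b2' b3' e1 e1'
  linarith

lemma aux_pow_exp (n : ℕ) (hn : 7 ≤ n) (Z : ℝ) (h0 : 0 ≤ Z) (h1 : Z ≤ 7/4) :
    Real.exp (-Z) ≤ (1 - Z / n) ^ (n - 1) := by
  have hn7 : (7:ℝ) ≤ n := by exact_mod_cast hn
  have hcast : ((n - 1 : ℕ) : ℝ) = n - 1 := by
    rw [Nat.cast_sub (by omega)]; simp
  have hm : (0:ℝ) < n - 1 := by linarith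
  set w := Z / ((n:ℝ) - 1) with hw
  have hw0 : 0 ≤ w := by positivity
  have hZ : Z = (n - 1) * w := by rw [hw]; field_simp
  have hq : 1 + w + w ^ 2 / 2 ≤ Real.exp w := Real.quadratic_le_exp_of_nonneg hw0
  have hE : Real.exp (-w) * Real.exp w = 1 := by rw [← Real.exp_add]; simp
  have key : (n:ℝ) ≤ (1 + w + w ^ 2 / 2) * (n - Z) := by
    have k1 : Z * (n - 2) + Z ^ 2 ≤ 2 * (n - 1) := by nlinarith
    have k2 : (1 + w + w ^ 2 / 2) * (n - Z) - n = w * (2 * (n - 1) - (Z * (n - 2) + Z ^ 2)) / (2 * (n - 1)) := by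
      rw [hw]; field_simp; ring
    have : 0 ≤ w * (2 * (n - 1) - (Z * (n - 2) + Z ^ 2)) / (2 * (n - 1)) :=
      div_nonneg (mul_nonneg hw0 (by linarith)) (by linarith)
    linarith
  have h2 : Real.exp (-w) ≤ 1 - Z / n := by
    have k3 : (n:ℝ) ≤ Real.exp w * (n - Z) := key.trans (by gcongr; linarith)
    have k4 : Real.exp (-w) * n ≤ n - Z := by
      calc Real.exp (-w) * n ≤ Real.exp (-w) * (Real.exp w * (n - Z)) := by gcongr
        _ = (Real.exp (-w) * Real.exp w) * (n - Z) := by ring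
        _ = _ := by rw [hE]; ring
    have : 1 - Z / n = (n - Z) / n := by field_simp
    rw [this, le_div_iff₀ (by linarith)]; exact k4
  calc Real.exp (-Z) = Real.exp (-w) ^ (n - 1) := by
        rw [← Real.exp_nat_mul, hcast, hZ]; ring_nf
    _ ≤ _ := by gcongr
lemma aux_K (β : ℝ) (hβpos : 0 < β) (z ζ : ℝ → ℝ) (hz0 : z 0 = 0)
    (hzderiv : ∀ u ∈ Set.Icc (0:ℝ) 1,
      HasDerivAt z (1 + z u + β * Real.exp (z u)) u)
    (hζ : Continuous ζ) (hζz : ∀ u ∈ Set.Icc (0:ℝ) 1, ζ u = z u) :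
    ∀ t ∈ Set.Icc (0:ℝ) 1, Real.exp (-(∫ u in (0:ℝ)..t, ζ u)) =
      ((1 + z t) * Real.exp (-z t) + β) / (1 + β) := by
  have hZ : ∀ t, HasDerivAt (fun t => ∫ u in (0:ℝ)..t, ζ u) (ζ t) t := fun t =>
    intervalIntegral.integral_hasDerivAt_right (hζ.intervalIntegrable _ _)
      (hζ.stronglyMeasurableAtFilter _ _) hζ.continuousAt
  have hd : ∀ t ∈ Set.Icc (0:ℝ) 1, HasDerivAt (fun t => ((1 + z t) * Real.exp (-z t) + β) *
      Real.exp (∫ u in (0:ℝ)..t, ζ u)) 0 t := by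
    intro t ht
    have h1 := hzderiv t ht
    have h2 := (((h1.const_add 1).mul h1.neg.exp).add_const β).mul (hZ t).exp
    refine h2.congr_deriv ?_
    rw [hζz t ht]
    have : Real.exp (-z t) * Real.exp (z t) = 1 := by rw [← Real.exp_add]; simp
    simp only [Pi.mul_apply, Pi.neg_apply]
    linear_combination (- z t * β * Real.exp (∫ u in (0:ℝ)..t, ζ u)) * this
  intro t ht
  have hc := constant_of_has_deriv_right_zero
    (f := fun t => ((1 + z t) * Real.exp (-z t) + β) * Real.exp (∫ u in (0:ℝ)..t, ζ u))
    (a := 0) (b := 1) (fun t ht => (hd t ht).continuousAt.continuousWithinAt)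
    (fun t ht => (hd t ⟨ht.1, ht.2.le⟩).hasDerivWithinAt) t ht
  simp [hz0] at hc
  rw [Real.exp_neg, eq_div_iff (by positivity), ← hc]
  have := Real.exp_pos (∫ u in (0:ℝ)..t, ζ u)
  field_simp

lemma aux_min_int (n y : ℝ) (h0 : 0 ≤ y) (hy : y ≤ n) :
    ∫ w in (0:ℝ)..n, min y w * Real.exp (-w) = 1 - Real.exp (-y) - y * Real.exp (-n) := by
  have hc : Continuous (fun w => min y w * Real.exp (-w)) := by fun_prop
  rw [← intervalIntegral.integral_add_adjacent_intervals (b := y) (hc.intervalIntegrable _ _)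
    (hc.intervalIntegrable _ _)]
  have e1 : ∫ w in (0:ℝ)..y, min y w * Real.exp (-w) = 1 - (1 + y) * Real.exp (-y) := by
    have : ∫ w in (0:ℝ)..y, min y w * Real.exp (-w) = ∫ w in (0:ℝ)..y, w * Real.exp (-w) := by
      apply intervalIntegral.integral_congr
      intro w hw
      rw [Set.uIcc_of_le h0] at hw
      simp [min_eq_right hw.2]
    rw [this, intervalIntegral.integral_eq_sub_of_hasDerivAt (f := fun w => -(1 + w) * Real.exp (-w))]
    · simp; ring
    · intro w _
      have := (((hasDerivAt_id w).const_add 1).neg).mul ((hasDerivAt_id w).neg.exp)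
      refine this.congr_deriv ?_
      simp
      ring
    · apply Continuous.intervalIntegrable; fun_prop
  have e2 : ∫ w in y..n, min y w * Real.exp (-w) = y * (Real.exp (-y) - Real.exp (-n)) := by
    have : ∫ w in y..n, min y w * Real.exp (-w) = ∫ w in y..n, y * Real.exp (-w) := by
      apply intervalIntegral.integral_congr
      intro w hw
      rw [Set.uIcc_of_le hy] at hw
      simp [min_eq_left hw.1]
    rw [this, intervalIntegral.integral_eq_sub_of_hasDerivAt (f := fun w => -y * Real.exp (-w))]
    · ring
    · intro w _
      have := ((hasDerivAt_id w).neg.exp).const_mul (-y)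
      refine this.congr_deriv ?_
      simp
    · apply Continuous.intervalIntegrable; fun_prop
  rw [e1, e2]; ring

lemma aux_Z_bounds (n : ℕ) (hn : 7 ≤ n) (β : ℝ) (hβpos : 0 < β)
    (hβ : ∫ v in (0:ℝ)..(n : ℝ), (1 + v + β * Real.exp v)⁻¹ = 1)
    (z ζ : ℝ → ℝ) (hz0 : z 0 = 0)
    (hzrange : ∀ u ∈ Set.Icc (0:ℝ) 1, z u ∈ Set.Icc (0:ℝ) (n : ℝ))
    (hzderiv : ∀ u ∈ Set.Icc (0:ℝ) 1,
      HasDerivAt z (1 + z u + β * Real.exp (z u)) u)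
    (hζ : Continuous ζ) (hζz : ∀ u ∈ Set.Icc (0:ℝ) 1, ζ u = z u) (t : ℝ)
    (ht : t ∈ Set.Icc (0:ℝ) 1) :
    0 ≤ (∫ u in (0:ℝ)..t, ζ u) ∧ (∫ u in (0:ℝ)..t, ζ u) ≤ 7/4 := by
  constructor
  · apply intervalIntegral.integral_nonneg ht.1
    intro u hu
    have hu' : u ∈ Set.Icc (0:ℝ) 1 := ⟨hu.1, hu.2.trans ht.2⟩
    rw [hζz u hu']; exact (hzrange u hu').1
  · have hb := aux_beta n hn β hβpos hβ
    have hK := aux_K β hβpos z ζ hz0 hzderiv hζ hζz t ht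
    have h0 := (hzrange t ht).1
    have h1 : (11:ℝ)/61 ≤ Real.exp (-(∫ u in (0:ℝ)..t, ζ u)) := by
      rw [hK, le_div_iff₀ (by linarith)]
      have : 0 ≤ (1 + z t) * Real.exp (-z t) := by positivity
      nlinarith
    have h2 : Real.exp (-(7/4)) ≤ 11/61 := by
      have := Real.sum_le_exp_of_nonneg (x := (7/4:ℝ)) (by positivity) 7
      norm_num [Finset.sum_range_succ, Nat.factorial] at this
      rw [Real.exp_neg, inv_le_comm₀ (Real.exp_pos _) (by norm_num)]
      refine le_trans ?_ this
      norm_num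
    have := Real.exp_le_exp.1 (h2.trans h1)
    linarith

lemma aux_int (n : ℕ) (hn : 7 ≤ n) (β : ℝ) (hβpos : 0 < β)
    (hβ : ∫ v in (0:ℝ)..(n : ℝ), (1 + v + β * Real.exp v)⁻¹ = 1)
    (z ζ : ℝ → ℝ) (hz0 : z 0 = 0) (hz1 : z 1 = n)
    (hzrange : ∀ u ∈ Set.Icc (0:ℝ) 1, z u ∈ Set.Icc (0:ℝ) (n : ℝ))
    (hzderiv : ∀ u ∈ Set.Icc (0:ℝ) 1,
      HasDerivAt z (1 + z u + β * Real.exp (z u)) u)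
    (hζ : Continuous ζ) (hζz : ∀ u ∈ Set.Icc (0:ℝ) 1, ζ u = z u) (y : ℝ)
    (hy0 : 0 ≤ y) (hyn : y ≤ n) :
    (1 - 6 / (n:ℝ)) * (1 + β)⁻¹ * (1 - (1 - y / n) ^ n) ≤
      ∫ t in (0:ℝ)..1, min y (ζ t) * (1 - (∫ u in (0:ℝ)..t, ζ u) / n) ^ (n - 1) := by
  have hZc : Continuous (fun t => ∫ u in (0:ℝ)..t, ζ u) :=
    intervalIntegral.continuous_primitive (fun a b => hζ.intervalIntegrable a b) 0
  have hzc : ContinuousOn z (Set.Icc 0 1) := fun u hu => (hzderiv u hu).continuousAt.continuousWithinAt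
  have hcv := intervalIntegral.integral_comp_mul_deriv (a := 0) (b := 1) (f := z)
    (f' := fun u => 1 + z u + β * Real.exp (z u)) (g := fun w => min y w * Real.exp (-w))
    (by rw [Set.uIcc_of_le zero_le_one]; exact hzderiv)
    (by rw [Set.uIcc_of_le zero_le_one]; fun_prop) (by fun_prop)
  rw [hz0, hz1, aux_min_int n y hy0 hyn] at hcv
  have hpt : ∀ t ∈ Set.Icc (0:ℝ) 1, min y (ζ t) * Real.exp (-(∫ u in (0:ℝ)..t, ζ u)) =
      (1 + β)⁻¹ * (((fun w => min y w * Real.exp (-w)) ∘ z) t * (1 + z t + β * Real.exp (z t))) := by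
    intro t ht
    rw [aux_K β hβpos z ζ hz0 hzderiv hζ hζz t ht, hζz t ht]
    have : Real.exp (-z t) * Real.exp (z t) = 1 := by rw [← Real.exp_add]; simp
    simp only [Function.comp_apply]
    field_simp
    linear_combination (-β * min y (z t)) * this
  have h1 : ∫ t in (0:ℝ)..1, min y (ζ t) * Real.exp (-(∫ u in (0:ℝ)..t, ζ u)) =
      (1 + β)⁻¹ * (1 - Real.exp (-y) - y * Real.exp (-n)) := by
    rw [← hcv, ← intervalIntegral.integral_const_mul]
    apply intervalIntegral.integral_congr
    intro t ht
    rw [Set.uIcc_of_le zero_le_one] at ht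
    exact hpt t ht
  calc _ = (1 + β)⁻¹ * ((1 - 6 / (n:ℝ)) * (1 - (1 - y / n) ^ n)) := by ring
    _ ≤ (1 + β)⁻¹ * (1 - Real.exp (-y) - y * Real.exp (-n)) := by
      gcongr; exact aux_final n hn y hy0 hyn
    _ = _ := h1.symm
    _ ≤ _ := by
      apply intervalIntegral.integral_mono_on zero_le_one
      · apply Continuous.intervalIntegrable; fun_prop
      · apply Continuous.intervalIntegrable; fun_prop
      · intro t ht
        obtain ⟨b1, b2⟩ := aux_Z_bounds n hn β hβpos hβ z ζ hz0 hzrange hzderiv hζ hζz t ht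
        have := aux_pow_exp n hn _ b1 b2
        have h3 : 0 ≤ ζ t := by rw [hζz t ht]; exact (hzrange t ht).1
        gcongr

lemma aux_ivt (ν : Measure ℝ) [IsProbabilityMeasure ν] (F : ℝ → ℝ) (hF : ∀ v, F v = ν.real (Set.Iic v))
    (hFc : Continuous F) (b : ℝ) (h0 : 0 < b) (h1 : b < 1) : ∃ w, F w = b := by
  have hFe : F = cdf ν := by
    funext v; rw [hF, cdf_eq_real]
  have t0 : Filter.Tendsto F Filter.atBot (nhds 0) := by rw [hFe]; exact tendsto_cdf_atBot ν
  have t1 : Filter.Tendsto F Filter.atTop (nhds 1) := by rw [hFe]; exact tendsto_cdf_atTop ν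
  obtain ⟨x0, hx0⟩ := (t0.eventually (gt_mem_nhds h0)).exists
  obtain ⟨x1, hx1⟩ := (t1.eventually (lt_mem_nhds h1)).exists
  exact mem_range_of_exists_le_of_exists_ge hFc ⟨x0, hx0.le⟩ ⟨x1, hx1.le⟩

lemma aux_Ioi (ν : Measure ℝ) [IsProbabilityMeasure ν] (F : ℝ → ℝ) (hF : ∀ v, F v = ν.real (Set.Iic v))
    (w : ℝ) : ν (Set.Ioi w) = ENNReal.ofReal (1 - F w) := by
  rw [← Set.compl_Iic, ← ofReal_measureReal, measureReal_compl measurableSet_Iic, hF]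
  simp

lemma aux_upper (ν : Measure ℝ) [IsProbabilityMeasure ν] (F : ℝ → ℝ) (hF : ∀ v, F v = ν.real (Set.Iic v))
    (hFc : Continuous F) (a : ℝ) (h0 : 0 ≤ a) :
    ν {x | 1 - F x < a} ≤ ENNReal.ofReal a := by
  have hFm : Monotone F := by
    intro x y h; rw [hF, hF]; exact measureReal_mono (Set.Iic_subset_Iic.2 h)
  have hF1 : ∀ x, F x ≤ 1 := fun x => by rw [hF]; exact measureReal_le_one
  rcases h0.eq_or_lt with h | h
  · have : {x | 1 - F x < a} = ∅ := by
      ext x; have := hF1 x; simp; linarith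
    simp [this]
  rcases lt_or_ge a 1 with h1 | h1
  · obtain ⟨w, hw⟩ := aux_ivt ν F hF hFc (1 - a) (by linarith) (by linarith)
    calc ν {x | 1 - F x < a} ≤ ν (Set.Ioi w) := by
          apply measure_mono
          intro x hx
          simp only [Set.mem_ofPred_eq, Set.mem_Ioi] at hx ⊢
          by_contra hc
          have := hFm (not_lt.1 hc)
          linarith
      _ = _ := by rw [aux_Ioi ν F hF, hw]; congr 1; ring
  · calc _ ≤ (1:ENNReal) := prob_le_one
      _ ≤ _ := by simpa using h1

lemma aux_lower (ν : Measure ℝ) [IsProbabilityMeasure ν] (F : ℝ → ℝ) (hF : ∀ v, F v = ν.real (Set.Iic v))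
    (hFc : Continuous F) (v a : ℝ) (ha1 : a ≤ 1) :
    ENNReal.ofReal (min (1 - F v) a) ≤ ν {x | v < x ∧ 1 - F x < a} := by
  have hFm : Monotone F := by
    intro x y h; rw [hF, hF]; exact measureReal_mono (Set.Iic_subset_Iic.2 h)
  have hF0 : ∀ x, 0 ≤ F x := fun x => by rw [hF]; exact measureReal_nonneg
  rw [← ofReal_measureReal]
  apply ENNReal.ofReal_le_ofReal
  apply le_of_forall_lt
  intro c hc
  rw [lt_min_iff] at hc
  rcases lt_or_ge c 0 with h | h
  · exact h.trans_le measureReal_nonneg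
  obtain ⟨c', hc1, hc2⟩ := exists_between (lt_min_iff.2 hc)
  rw [lt_min_iff] at hc2
  have := hF0 v
  obtain ⟨w, hw⟩ := aux_ivt ν F hF hFc (1 - c') (by linarith) (by linarith)
  refine hc1.trans_le ?_
  have h3 : ν.real (Set.Ioi w) ≤ ν.real {x | v < x ∧ 1 - F x < a} := by
    refine measureReal_mono ?_ (measure_ne_top _ _)
    intro x hx
    simp only [Set.mem_ofPred_eq, Set.mem_Ioi] at hx ⊢
    have h4 := hFm hx.le
    refine ⟨?_, by linarith⟩
    by_contra hcc
    have := hFm (not_lt.1 hcc)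
    linarith
  refine le_trans (le_of_eq ?_) h3
  rw [measureReal_def, aux_Ioi ν F hF, hw, ENNReal.toReal_ofReal (by linarith)]
  ring

lemma aux_P2 (ν : Measure ℝ) [IsProbabilityMeasure ν] (F : ℝ → ℝ) (hF : ∀ v, F v = ν.real (Set.Iic v))
    (hFc : Continuous F) (ζ : ℝ → ℝ) (hζ : Continuous ζ) (n : ℕ)
    (hζ0 : ∀ u, 0 ≤ ζ u) (t : ℝ) (ht : t ∈ Set.Icc (0:ℝ) 1) :
    ENNReal.ofReal (1 - (∫ u in (0:ℝ)..t, ζ u) / n) ≤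
      (ν.prod ((volume : Measure ℝ).restrict (Set.Icc (0:ℝ) 1)))
        {p | ¬ (1 - F p.1 < ζ p.2 / n ∧ p.2 ≤ t)} := by
  have : IsProbabilityMeasure ((volume : Measure ℝ).restrict (Set.Icc (0:ℝ) 1)) := ⟨by simp⟩
  have hm : MeasurableSet {p : ℝ × ℝ | 1 - F p.1 < ζ p.2 / n ∧ p.2 ≤ t} := by
    rw [Set.ofPred_and]
    apply MeasurableSet.inter
    · refine measurableSet_lt ?_ ?_ <;> fun_prop
    · refine measurableSet_le ?_ ?_ <;> fun_prop
  have h1 : (ν.prod ((volume : Measure ℝ).restrict (Set.Icc (0:ℝ) 1)))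
      {p : ℝ × ℝ | 1 - F p.1 < ζ p.2 / n ∧ p.2 ≤ t} ≤ ENNReal.ofReal ((∫ u in (0:ℝ)..t, ζ u) / n) := by
    rw [Measure.prod_apply_symm hm]
    calc _ ≤ ∫⁻ u in Set.Icc (0:ℝ) 1, (Set.Iic t).indicator (fun u => ENNReal.ofReal (ζ u / n)) u := by
          apply lintegral_mono
          intro u
          by_cases hu : u ≤ t
          · simp only [Set.indicator, Set.mem_Iic, hu, if_true, Set.preimage_ofPred_eq, and_true]
            exact aux_upper ν F hF hFc _ (div_nonneg (hζ0 u) (by positivity))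
          · simp [hu]
      _ = ∫⁻ u in Set.Ioc (0:ℝ) t, ENNReal.ofReal (ζ u / n) := by
          rw [lintegral_indicator measurableSet_Iic, Measure.restrict_restrict measurableSet_Iic]
          have : Set.Iic t ∩ Set.Icc 0 1 = Set.Icc 0 t := by
            ext u; simp only [Set.mem_inter_iff, Set.mem_Iic, Set.mem_Icc]
            have := ht.2
            constructor
            · rintro ⟨a, b, c⟩; exact ⟨b, a⟩
            · rintro ⟨a, b⟩; exact ⟨b, a, by linarith⟩
          rw [this, ← Measure.restrict_congr_set Ioc_ae_eq_Icc]
      _ = ENNReal.ofReal ((∫ u in (0:ℝ)..t, ζ u) / n) := by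
          rw [← intervalIntegral.integral_div, intervalIntegral.integral_of_le ht.1,
            ofReal_integral_eq_lintegral_ofReal]
          · have : Continuous fun u => ζ u / n := by fun_prop
            exact (this.integrableOn_Icc).mono_set Set.Ioc_subset_Icc_self
          · exact Filter.Eventually.of_forall fun u => div_nonneg (hζ0 u) (by positivity)
  have h2 : {p : ℝ × ℝ | ¬ (1 - F p.1 < ζ p.2 / n ∧ p.2 ≤ t)} =
    {p : ℝ × ℝ | 1 - F p.1 < ζ p.2 / n ∧ p.2 ≤ t}ᶜ := rfl
  rw [h2, prob_compl_eq_one_sub hm, ENNReal.ofReal_sub _ (div_nonneg (intervalIntegral.integral_nonneg ht.1 fun u _ => hζ0 u) (by positivity)), ENNReal.ofReal_one]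
  gcongr

lemma aux_P3 (m : ℕ) (L : Measure (ℝ × ℝ)) [IsProbabilityMeasure L] (C : Set (ℝ × ℝ))
    (hC : MeasurableSet C) (D : Set ((ℝ × ℝ) × (ℝ × ℝ))) (hD : MeasurableSet D) (i : Fin (m+1)) :
    (Measure.pi (fun _ : Fin (m+1) => L)) {p | p i ∈ C ∧ ∀ j, j ≠ i → (p i, p j) ∈ D} =
      ∫⁻ p in C, (L {p' | (p, p') ∈ D}) ^ m ∂L := by
  have hmp := measurePreserving_piFinSuccAbove (fun _ : Fin (m+1) => L) i
  have hS : MeasurableSet {q : (ℝ × ℝ) × (Fin m → ℝ × ℝ) | q.1 ∈ C ∧ ∀ j, (q.1, q.2 j) ∈ D} := by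
    apply MeasurableSet.inter
    · exact measurable_fst hC
    · have : {q : (ℝ × ℝ) × (Fin m → ℝ × ℝ) | ∀ j, (q.1, q.2 j) ∈ D} =
        ⋂ j, (fun q : (ℝ × ℝ) × (Fin m → ℝ × ℝ) => (q.1, q.2 j)) ⁻¹' D := by ext; simp
      change MeasurableSet {q : (ℝ × ℝ) × (Fin m → ℝ × ℝ) | ∀ j, (q.1, q.2 j) ∈ D}
      rw [this]
      apply MeasurableSet.iInter
      intro j
      have : Measurable (fun q : (ℝ × ℝ) × (Fin m → ℝ × ℝ) => (q.1, q.2 j)) := by fun_prop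
      exact this hD
  have e : {p : Fin (m+1) → ℝ × ℝ | p i ∈ C ∧ ∀ j, j ≠ i → (p i, p j) ∈ D} =
      (MeasurableEquiv.piFinSuccAbove (fun _ => ℝ × ℝ) i) ⁻¹'
      {q : (ℝ × ℝ) × (Fin m → ℝ × ℝ) | q.1 ∈ C ∧ ∀ j, (q.1, q.2 j) ∈ D} := by
    ext p
    simp only [Set.mem_ofPred_eq, Set.mem_preimage, MeasurableEquiv.piFinSuccAbove_apply]
    change _ ↔ (p i ∈ C ∧ ∀ j, (p i, p (i.succAbove j)) ∈ D)
    refine and_congr_right fun _ => ⟨fun h j => h _ (Fin.succAbove_ne i j), fun h j hj => ?_⟩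
    obtain ⟨k, rfl⟩ := Fin.exists_succAbove_eq hj
    exact h k
  rw [e, hmp.measure_preimage hS.nullMeasurableSet, Measure.prod_apply hS, ← lintegral_indicator hC]
  apply lintegral_congr
  intro p
  by_cases hp : p ∈ C
  · rw [Set.indicator_of_mem hp]
    have : Prod.mk p ⁻¹' {q : (ℝ × ℝ) × (Fin m → ℝ × ℝ) | q.1 ∈ C ∧ ∀ j, (q.1, q.2 j) ∈ D} =
      Set.univ.pi (fun _ : Fin m => {p' | (p, p') ∈ D}) := by
      ext q; simp [hp]
    rw [this, Measure.pi_pi]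
    simp
  · simp [hp]

lemma aux_P4 (ν : Measure ℝ) [IsProbabilityMeasure ν] (F : ℝ → ℝ) (hF : ∀ v, F v = ν.real (Set.Iic v))
    (hFc : Continuous F) (ζ : ℝ → ℝ) (hζ : Continuous ζ) (m : ℕ)
    (hζ0 : ∀ u, 0 ≤ ζ u) (hζ1 : ∀ u, ζ u ≤ (m+1:ℕ))
    (hZ : ∀ t ∈ Set.Icc (0:ℝ) 1, (∫ u in (0:ℝ)..t, ζ u) ≤ (m+1:ℕ)) (v : ℝ) (i : Fin (m+1)) :
    ENNReal.ofReal (∫ t in (0:ℝ)..1, min (1 - F v) (ζ t / (m+1:ℕ)) *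
      (1 - (∫ u in (0:ℝ)..t, ζ u) / (m+1:ℕ)) ^ m) ≤
    (Measure.pi (fun _ : Fin (m+1) => ν.prod ((volume : Measure ℝ).restrict (Set.Icc (0:ℝ) 1))))
      {p | (v < (p i).1 ∧ 1 - F (p i).1 < ζ (p i).2 / (m+1:ℕ)) ∧
        ∀ j, j ≠ i → ¬ (1 - F (p j).1 < ζ (p j).2 / (m+1:ℕ) ∧ (p j).2 ≤ (p i).2)} := by
  have : IsProbabilityMeasure ((volume : Measure ℝ).restrict (Set.Icc (0:ℝ) 1)) := ⟨by simp⟩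
  have hF1 : ∀ x, F x ≤ 1 := fun x => by rw [hF]; exact measureReal_le_one
  have hZc : Continuous (fun t => ∫ u in (0:ℝ)..t, ζ u) :=
    intervalIntegral.continuous_primitive (fun a b => hζ.intervalIntegrable a b) 0
  set L := ν.prod ((volume : Measure ℝ).restrict (Set.Icc (0:ℝ) 1)) with hL
  have hC : MeasurableSet {p : ℝ × ℝ | v < p.1 ∧ 1 - F p.1 < ζ p.2 / (m+1:ℕ)} := by
    rw [Set.ofPred_and]
    apply MeasurableSet.inter
    · refine measurableSet_lt ?_ ?_ <;> fun_prop
    · refine measurableSet_lt ?_ ?_ <;> fun_prop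
  have hD' : MeasurableSet {p : (ℝ × ℝ) × (ℝ × ℝ) | 1 - F p.2.1 < ζ p.2.2 / (m+1:ℕ) ∧ p.2.2 ≤ p.1.2} := by
    rw [Set.ofPred_and]
    apply MeasurableSet.inter
    · refine measurableSet_lt ?_ ?_ <;> fun_prop
    · refine measurableSet_le ?_ ?_ <;> fun_prop
  have hD : MeasurableSet {p : (ℝ × ℝ) × (ℝ × ℝ) | ¬ (1 - F p.2.1 < ζ p.2.2 / (m+1:ℕ) ∧ p.2.2 ≤ p.1.2)} :=
    hD'.compl
  have h := aux_P3 m L _ hC _ hD i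
  simp only [Set.mem_ofPred_eq] at h
  rw [h]
  set W : ℝ → ℝ := fun t => (1 - (∫ u in (0:ℝ)..t, ζ u) / (m+1:ℕ)) ^ m with hW
  have hWc : Continuous W := by rw [hW]; fun_prop
  have hW0 : ∀ t ∈ Set.Icc (0:ℝ) 1, 0 ≤ W t := by
    intro t ht
    apply pow_nonneg
    rw [sub_nonneg, div_le_one (by positivity)]
    exact hZ t ht
  have hmem : ∀ᵐ p ∂L, p.2 ∈ Set.Icc (0:ℝ) 1 := by
    have : ∀ᵐ t ∂((volume : Measure ℝ).restrict (Set.Icc (0:ℝ) 1)), t ∈ Set.Icc (0:ℝ) 1 :=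
      ae_restrict_mem measurableSet_Icc
    exact Measure.quasiMeasurePreserving_snd.ae this
  calc _ = ∫⁻ t in Set.Icc (0:ℝ) 1, ENNReal.ofReal (min (1 - F v) (ζ t / (m+1:ℕ)) * W t) := by
        rw [intervalIntegral.integral_of_le zero_le_one, Measure.restrict_congr_set Ioc_ae_eq_Icc,
          ofReal_integral_eq_lintegral_ofReal]
        · have : Continuous fun t => min (1 - F v) (ζ t / (m+1:ℕ)) * W t := by fun_prop
          exact this.integrableOn_Icc
        · filter_upwards [ae_restrict_mem measurableSet_Icc] with t ht
          exact mul_nonneg (le_min (by linarith [hF1 v]) (div_nonneg (hζ0 t) (by positivity))) (hW0 t ht)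
    _ ≤ ∫⁻ t in Set.Icc (0:ℝ) 1, ν {x | v < x ∧ 1 - F x < ζ t / (m+1:ℕ)} * ENNReal.ofReal (W t) := by
        apply lintegral_mono
        intro t
        simp only
        rw [ENNReal.ofReal_mul (le_min (by linarith [hF1 v]) (div_nonneg (hζ0 t) (by positivity)))]
        gcongr
        exact aux_lower ν F hF hFc v _ (by rw [div_le_one (by positivity)]; exact hζ1 t)
    _ = ∫⁻ p, {p : ℝ × ℝ | v < p.1 ∧ 1 - F p.1 < ζ p.2 / (m+1:ℕ)}.indicator
          (fun p => ENNReal.ofReal (W p.2)) p ∂L := by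
        rw [hL, lintegral_prod_symm]
        · apply lintegral_congr
          intro t
          have : ∀ x, {p : ℝ × ℝ | v < p.1 ∧ 1 - F p.1 < ζ p.2 / (m+1:ℕ)}.indicator
            (fun p => ENNReal.ofReal (W p.2)) (x, t) =
            {x | v < x ∧ 1 - F x < ζ t / (m+1:ℕ)}.indicator (fun _ => ENNReal.ofReal (W t)) x := by
            intro x; simp [Set.indicator]
          simp_rw [this]
          rw [lintegral_indicator_const, mul_comm]
          rw [Set.ofPred_and]
          apply MeasurableSet.inter
          · refine measurableSet_lt ?_ ?_ <;> fun_prop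
          · refine measurableSet_lt ?_ ?_ <;> fun_prop
        · apply Measurable.aemeasurable
          apply Measurable.indicator _ hC
          fun_prop
    _ ≤ _ := by
        rw [lintegral_indicator hC]
        apply lintegral_mono_ae
        filter_upwards [ae_restrict_of_ae hmem] with p hp
        simp only [hW]
        rw [ENNReal.ofReal_pow]
        · gcongr
          exact aux_P2 ν F hF hFc ζ hζ (m+1) hζ0 p.2 hp
        · rw [sub_nonneg, div_le_one (by positivity)]
          exact hZ _ hp

lemma aux_max (ν : Measure ℝ) [IsProbabilityMeasure ν] (F : ℝ → ℝ) (hF : ∀ v, F v = ν.real (Set.Iic v))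
    (n : ℕ) (v : ℝ) :
    (Measure.pi (fun _ : Fin n => ν.prod ((volume : Measure ℝ).restrict (Set.Icc (0:ℝ) 1))))
      {p | ∃ i, v < (p i).1} = ENNReal.ofReal (1 - F v ^ n) := by
  have : IsProbabilityMeasure ((volume : Measure ℝ).restrict (Set.Icc (0:ℝ) 1)) := ⟨by simp⟩
  have e : {p : Fin n → ℝ × ℝ | ∃ i, v < (p i).1} =
      (Set.univ.pi (fun _ : Fin n => (Set.Iic v) ×ˢ (Set.univ : Set ℝ)))ᶜ := by
    ext p; simp
  have hm : MeasurableSet (Set.univ.pi (fun _ : Fin n => (Set.Iic v) ×ˢ (Set.univ : Set ℝ))) :=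
    MeasurableSet.univ_pi fun _ => measurableSet_Iic.prod MeasurableSet.univ
  rw [e, prob_compl_eq_one_sub hm, Measure.pi_pi]
  have h0 : 0 ≤ F v := by rw [hF]; exact measureReal_nonneg
  have h1 : ν (Set.Iic v) = ENNReal.ofReal (F v) := by rw [hF, ofReal_measureReal]
  simp only [Measure.prod_prod, h1, measure_univ, mul_one, Finset.prod_const, Finset.card_univ,
    Fintype.card_fin]
  rw [ENNReal.ofReal_sub _ (by positivity), ENNReal.ofReal_pow h0, ENNReal.ofReal_one]


/-- Fix `n ≥ 3`; let `β_n > 0` solve `∫_0^n dz/(1+z+β_n e^z) = 1` and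
let `z : [0,1] → [0,n]` solve `z'(s) = 1 + z(s) + β_n e^{z(s)}`, `z(0) = 0` (so
`z(1) = n`).  Let `(x_1,t_1),…,(x_n,t_n)` be i.i.d. pairs where `x_i ≥ 0` has
continuous (atomless) CDF `F` and `t_i` is uniform on `[0,1]`, independent of `x_i`.
The oblivious stopping rule selects, among all indices `i` with
`1 − F(x_i) < z(t_i)/n`, the one with smallest `t_i` (receiving `0` if no index
qualifies); `x_τ` denotes the selected value.  Then
`E[x_τ] ≥ (1 − 6/n)·(1 + β_n)⁻¹·E[max_i x_i]`. -/
theorem oblivious_rule_bound {Ω : Type*} [MeasurableSpace Ω]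
    (μ : Measure Ω) [IsProbabilityMeasure μ]
    (n : ℕ) (hn : 3 ≤ n) (β : ℝ) (hβpos : 0 < β)
    (hβ : ∫ v in (0:ℝ)..(n : ℝ), (1 + v + β * Real.exp v)⁻¹ = 1)
    (z : ℝ → ℝ) (hz0 : z 0 = 0) (hz1 : z 1 = n)
    (hzrange : ∀ u ∈ Set.Icc (0:ℝ) 1, z u ∈ Set.Icc (0:ℝ) (n : ℝ))
    (hzderiv : ∀ u ∈ Set.Icc (0:ℝ) 1,
      HasDerivAt z (1 + z u + β * Real.exp (z u)) u)
    (s : Fin n → Ω → ℝ × ℝ)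
    (hmeas : ∀ i, Measurable (s i))
    (hx_nonneg : ∀ i ω, 0 ≤ (s i ω).1)
    (hindep : iIndepFun s μ)
    (hident : ∀ i, μ.map (s i)
      = (μ.map (fun ω => (s ⟨0, by omega⟩ ω).1)).prod
          ((volume : Measure ℝ).restrict (Set.Icc (0:ℝ) 1)))
    (hint_max : Integrable (fun ω => ⨆ i, (s i ω).1) μ)
    (F : ℝ → ℝ) (hF : ∀ v, F v = (μ {ω | (s ⟨0, by omega⟩ ω).1 ≤ v}).toReal)
    (hFcont : Continuous F) :
    ∀ sel : Ω → Option (Fin n),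
      (∀ ω i, sel ω = some i →
        (1 - F ((s i ω).1) < z ((s i ω).2) / n ∧
          ∀ j, 1 - F ((s j ω).1) < z ((s j ω).2) / n → (s i ω).2 ≤ (s j ω).2)) →
      (∀ ω, (∃ i, 1 - F ((s i ω).1) < z ((s i ω).2) / n) → (sel ω).isSome) →
      Integrable (fun ω => ((sel ω).map fun i => (s i ω).1).getD 0) μ →
      (1 - 6 / (n : ℝ)) * (1 + β)⁻¹ * (∫ ω, (⨆ i, (s i ω).1) ∂μ)
        ≤ ∫ ω, ((sel ω).map fun i => (s i ω).1).getD 0 ∂μ := by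
  intro sel hsel1 hsel2 hselint
  have hn0 : (0:ℝ) < n := by have : 0 < n := by omega
                             exact_mod_cast this
  have : Nonempty (Fin n) := ⟨⟨0, by omega⟩⟩
  have hsup0 : ∀ ω, 0 ≤ ⨆ i, (s i ω).1 := fun ω => Real.iSup_nonneg fun i => hx_nonneg i ω
  have hsel0 : ∀ ω, 0 ≤ ((sel ω).map fun i => (s i ω).1).getD 0 := by
    intro ω
    cases h : sel ω with
    | none => simp
    | some i => simpa using hx_nonneg i ω
  rcases Nat.lt_or_ge n 7 with h7 | h7
  · have h6 : (n:ℝ) ≤ 6 := by exact_mod_cast (by omega : n ≤ 6)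
    have h1 : 1 - 6 / (n:ℝ) ≤ 0 := by
      rw [sub_nonpos, le_div_iff₀ hn0]; linarith
    have h2 : 0 ≤ ∫ ω, (⨆ i, (s i ω).1) ∂μ := integral_nonneg hsup0
    have h3 : 0 ≤ ∫ ω, ((sel ω).map fun i => (s i ω).1).getD 0 ∂μ := integral_nonneg hsel0
    refine le_trans ?_ h3
    apply mul_nonpos_of_nonpos_of_nonneg _ h2
    exact mul_nonpos_of_nonpos_of_nonneg h1 (by positivity)
  have hn7 : (7:ℝ) ≤ n := by exact_mod_cast h7
  have hc0 : 0 ≤ (1 - 6 / (n:ℝ)) * (1 + β)⁻¹ := by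
    apply mul_nonneg _ (by positivity)
    rw [sub_nonneg, div_le_one hn0]; linarith
  set c := (1 - 6 / (n:ℝ)) * (1 + β)⁻¹ with hc
  -- the clamped threshold function
  set ζ : ℝ → ℝ := fun t => z (Set.projIcc (0:ℝ) 1 zero_le_one t) with hζdef
  have hzc : ContinuousOn z (Set.Icc 0 1) :=
    fun u hu => (hzderiv u hu).continuousAt.continuousWithinAt
  have hζ : Continuous ζ := by
    have := (continuousOn_iff_continuous_domRestrict.1 hzc).comp
      (continuous_projIcc (h := zero_le_one (α := ℝ)))
    exact this
  have hζz : ∀ u ∈ Set.Icc (0:ℝ) 1, ζ u = z u := by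
    intro u hu
    simp only [hζdef]
    rw [Set.projIcc_of_mem zero_le_one hu]
  have hζ0 : ∀ u, 0 ≤ ζ u := fun u => (hzrange _ (Set.projIcc (0:ℝ) 1 zero_le_one u).2).1
  have hζ1 : ∀ u, ζ u ≤ n := fun u => (hzrange _ (Set.projIcc (0:ℝ) 1 zero_le_one u).2).2
  have hZb : ∀ t ∈ Set.Icc (0:ℝ) 1, (∫ u in (0:ℝ)..t, ζ u) ≤ n := fun t ht =>
    (aux_Z_bounds n h7 β hβpos hβ z ζ hz0 hzrange hzderiv hζ hζz t ht).2.trans (by linarith)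
  -- the law
  set ν := μ.map (fun ω => (s ⟨0, by omega⟩ ω).1) with hν
  have : IsProbabilityMeasure ν :=
    Measure.isProbabilityMeasure_map (measurable_fst.comp (hmeas _)).aemeasurable
  have hF' : ∀ v, F v = ν.real (Set.Iic v) := by
    intro v
    rw [hF, measureReal_def, hν, Measure.map_apply (hmeas _).fst measurableSet_Iic]
    rfl
  set L := ν.prod ((volume : Measure ℝ).restrict (Set.Icc (0:ℝ) 1)) with hL
  have hjm : Measurable (fun ω i => s i ω) := measurable_pi_lambda _ hmeas
  have hjoint : μ.map (fun ω i => s i ω) = Measure.pi (fun _ : Fin n => L) := by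
    rw [(iIndepFun_iff_map_fun_eq_pi_map fun i => (hmeas i).aemeasurable).1 hindep]
    congr 1
    funext i
    exact hident i
  have hae : ∀ᵐ ω ∂μ, ∀ i, (s i ω).2 ∈ Set.Icc (0:ℝ) 1 := by
    rw [ae_all_iff]
    intro i
    have h1 : ∀ᵐ t ∂((volume : Measure ℝ).restrict (Set.Icc (0:ℝ) 1)), t ∈ Set.Icc (0:ℝ) 1 :=
      ae_restrict_mem measurableSet_Icc
    have h2 : ∀ᵐ p ∂L, p.2 ∈ Set.Icc (0:ℝ) 1 := Measure.quasiMeasurePreserving_snd.ae h1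
    rw [← hident i] at h2
    exact ae_of_ae_map (hmeas i).aemeasurable h2
  -- events
  set B : ℝ → Fin n → Set (Fin n → ℝ × ℝ) := fun v i =>
    {p | (v < (p i).1 ∧ 1 - F (p i).1 < ζ (p i).2 / n) ∧
        ∀ j, j ≠ i → ¬ (1 - F (p j).1 < ζ (p j).2 / n ∧ (p j).2 ≤ (p i).2)} with hB
  have hFm : Measurable F := hFcont.measurable
  have hζm : Measurable ζ := hζ.measurable
  have hBm : ∀ v i, MeasurableSet (B v i) := by
    intro v i
    simp only [hB]
    have m1 : ∀ j : Fin n, Measurable fun p : Fin n → ℝ × ℝ => (p j).1 := fun j => by fun_prop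
    have m2 : ∀ j : Fin n, Measurable fun p : Fin n → ℝ × ℝ => (p j).2 := fun j => by fun_prop
    have q : ∀ j : Fin n, MeasurableSet {p : Fin n → ℝ × ℝ | 1 - F (p j).1 < ζ (p j).2 / n} := by
      intro j
      refine measurableSet_lt ?_ ?_
      · exact (hFm.comp (m1 j)).const_sub 1
      · exact (hζm.comp (m2 j)).div_const _
    have e : {p : Fin n → ℝ × ℝ | (v < (p i).1 ∧ 1 - F (p i).1 < ζ (p i).2 / n) ∧
        ∀ j, j ≠ i → ¬ (1 - F (p j).1 < ζ (p j).2 / n ∧ (p j).2 ≤ (p i).2)} =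
        ({p | v < (p i).1} ∩ {p | 1 - F (p i).1 < ζ (p i).2 / n}) ∩
        ⋂ j, ⋂ (_ : j ≠ i), ({p | 1 - F (p j).1 < ζ (p j).2 / n} ∩ {p | (p j).2 ≤ (p i).2})ᶜ := by
      ext p; simp
    rw [e]
    refine ((measurableSet_lt measurable_const (m1 i)).inter (q i)).inter ?_
    refine MeasurableSet.iInter fun j => MeasurableSet.iInter fun _ => ?_
    exact ((q j).inter (measurableSet_le (m2 j) (m2 i))).compl
  have hBd : ∀ v, Pairwise (Function.onFun Disjoint (B v)) := by
    intro v i k hik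
    rw [Function.onFun, Set.disjoint_left]
    intro p hp hp'
    have a1 := hp.2 k hik.symm
    have a2 := hp'.2 i hik
    have a3 := hp.1.2
    have a4 := hp'.1.2
    rcases le_total (p i).2 (p k).2 with h | h
    · exact a2 ⟨a3, h⟩
    · exact a1 ⟨a4, h⟩
  have hselB : ∀ v, ∀ᵐ ω ∂μ, (∃ i, (fun i => s i ω) ∈ B v i) →
      v < ((sel ω).map fun i => (s i ω).1).getD 0 := by
    intro v
    filter_upwards [hae] with ω hω
    rintro ⟨i, hi⟩
    have hq : ∀ j, (1 - F (s j ω).1 < z (s j ω).2 / n ↔ 1 - F (s j ω).1 < ζ (s j ω).2 / n) := by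
      intro j; rw [hζz _ (hω j)]
    have hi1 : 1 - F (s i ω).1 < ζ (s i ω).2 / n := hi.1.2
    have hsome := hsel2 ω ⟨i, (hq i).2 hi1⟩
    obtain ⟨k, hk⟩ := Option.isSome_iff_exists.1 hsome
    obtain ⟨b1, b2⟩ := hsel1 ω k hk
    have hki : k = i := by
      by_contra hne
      exact hi.2 k hne ⟨(hq k).1 b1, b2 i ((hq i).2 hi1)⟩
    subst hki
    rw [hk]
    exact hi.1.1
  have hmain : ∀ v : ℝ, ENNReal.ofReal c * μ {ω | v < ⨆ i, (s i ω).1} ≤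
      μ {ω | v < ((sel ω).map fun i => (s i ω).1).getD 0} := by
    intro v
    have hmax : μ {ω | v < ⨆ i, (s i ω).1} = ENNReal.ofReal (1 - F v ^ n) := by
      rw [← aux_max ν F hF' n v, ← hL, ← hjoint, Measure.map_apply hjm]
      · congr 1
        ext ω
        simp only [Set.mem_ofPred_eq, Set.mem_preimage]
        exact lt_ciSup_iff (Set.finite_range _).bddAbove
      · have : {p : Fin n → ℝ × ℝ | ∃ i, v < (p i).1} = ⋃ i, {p | v < (p i).1} := by ext; simp
        rw [this]
        refine MeasurableSet.iUnion fun i => measurableSet_lt measurable_const ?_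
        fun_prop
    have hF0 : 0 ≤ F v := by rw [hF']; exact measureReal_nonneg
    have hF1 : F v ≤ 1 := by rw [hF']; exact measureReal_le_one
    set I := ∫ t in (0:ℝ)..1, min (1 - F v) (ζ t / n) * (1 - (∫ u in (0:ℝ)..t, ζ u) / n) ^ (n - 1)
      with hI
    have hBi : ∀ i, ENNReal.ofReal I ≤ Measure.pi (fun _ : Fin n => L) (B v i) := by
      clear_value ζ ν c
      obtain ⟨m, rfl⟩ : ∃ m, n = m + 1 := ⟨n - 1, by omega⟩
      intro i
      exact aux_P4 ν F hF' hFcont ζ hζ m hζ0 hζ1 hZb v i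
    have hIc : c * (1 - F v ^ n) ≤ n * I := by
      have h := aux_int n h7 β hβpos hβ z ζ hz0 hz1 hzrange hzderiv hζ hζz (n * (1 - F v))
        (mul_nonneg hn0.le (by linarith)) (by nlinarith)
      have e1 : 1 - n * (1 - F v) / n = F v := by field_simp; ring
      rw [e1] at h
      refine h.trans (le_of_eq ?_)
      rw [hI, ← intervalIntegral.integral_const_mul]
      congr 1
      funext t
      rw [← mul_assoc, mul_min_of_nonneg _ _ hn0.le, mul_div_cancel₀ _ hn0.ne']
    calc ENNReal.ofReal c * μ {ω | v < ⨆ i, (s i ω).1}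
        = ENNReal.ofReal (c * (1 - F v ^ n)) := by rw [hmax, ENNReal.ofReal_mul hc0]
      _ ≤ ENNReal.ofReal (n * I) := ENNReal.ofReal_le_ofReal hIc
      _ = ∑ _i : Fin n, ENNReal.ofReal I := by
          rw [ENNReal.ofReal_mul hn0.le]; simp
      _ ≤ ∑ i : Fin n, Measure.pi (fun _ : Fin n => L) (B v i) := Finset.sum_le_sum fun i _ => hBi i
      _ = Measure.pi (fun _ : Fin n => L) (⋃ i, B v i) := by
          rw [measure_iUnion (hBd v) (hBm v), tsum_fintype]
      _ = μ ((fun ω i => s i ω) ⁻¹' (⋃ i, B v i)) := by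
          rw [← hjoint, Measure.map_apply hjm (MeasurableSet.iUnion (hBm v))]
      _ ≤ μ {ω | v < ((sel ω).map fun i => (s i ω).1).getD 0} := by
          apply measure_mono_ae
          filter_upwards [hselB v] with ω hω hmem
          apply hω
          exact Set.mem_iUnion.1 hmem
  have hE1 : ENNReal.ofReal (c * ∫ ω, (⨆ i, (s i ω).1) ∂μ) ≤
      ENNReal.ofReal (∫ ω, ((sel ω).map fun i => (s i ω).1).getD 0 ∂μ) := by
    rw [ENNReal.ofReal_mul hc0,
      ofReal_integral_eq_lintegral_ofReal hint_max (Filter.Eventually.of_forall hsup0),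
      ofReal_integral_eq_lintegral_ofReal hselint (Filter.Eventually.of_forall hsel0),
      lintegral_eq_lintegral_meas_lt μ (Filter.Eventually.of_forall hsup0) hint_max.aemeasurable,
      lintegral_eq_lintegral_meas_lt μ (Filter.Eventually.of_forall hsel0) hselint.aemeasurable,
      ← lintegral_const_mul' _ _ ENNReal.ofReal_ne_top]
    exact lintegral_mono fun v => hmain v
  exact (ENNReal.ofReal_le_ofReal_iff (integral_nonneg hsel0)).1 hE1
end

section
/- Fix n ≥ 3 and let β_n, z, Z be as defined. Then for every q ∈ [0,n], (1/(1+β_n))·(1 − e^{−q} − q e^{−n}) = ∫_0^1 min{z(t), q}·exp(−Z(t)) dt. -/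
open Real MeasureTheory intervalIntegral

/-- For `n ≥ 3`, define `β_n > 0` as the unique solution of
`∫_0^n dz/(1 + z + β_n e^z) = 1`, let `z : [0,1] → [0,n]` solve the ODE
`z'(s) = 1 + z(s) + β_n e^{z(s)}` with `z(0) = 0` (so that `z(1) = n`), and let
`Z(t) = ∫_0^t z(u) du`.  Then for every `q ∈ [0,n]`,
`(1/(1+β_n))·(1 − e^{−q} − q e^{−n}) = ∫_0^1 min{z(t), q}·exp(−Z(t)) dt`. -/
theorem mysterious_useful_identity (n : ℕ) (hn : 3 ≤ n) (β : ℝ) (hβpos : 0 < β)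
    (hβ : ∫ v in (0:ℝ)..(n : ℝ), (1 + v + β * Real.exp v)⁻¹ = 1)
    (z : ℝ → ℝ) (hz0 : z 0 = 0) (hz1 : z 1 = n)
    (hzrange : ∀ s ∈ Set.Icc (0:ℝ) 1, z s ∈ Set.Icc (0:ℝ) (n : ℝ))
    (hzderiv : ∀ s ∈ Set.Icc (0:ℝ) 1,
      HasDerivAt z (1 + z s + β * Real.exp (z s)) s)
    (Z : ℝ → ℝ) (hZ : ∀ t, Z t = ∫ u in (0:ℝ)..t, z u) :
    ∀ q ∈ Set.Icc (0:ℝ) (n : ℝ),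
      (1 / (1 + β)) * (1 - Real.exp (-q) - q * Real.exp (-(n : ℝ)))
        = ∫ t in (0:ℝ)..1, min (z t) q * Real.exp (-(Z t)) := by
  intro q hq
  have hzc : ContinuousOn z (Set.Icc 0 1) := fun s hs =>
    (hzderiv s hs).continuousAt.continuousWithinAt
  set y : ℝ → ℝ := Set.IccExtend (zero_le_one' ℝ) (Set.restrict (Set.Icc 0 1) z) with hy
  have hyc : Continuous y := hzc.restrict.Icc_extend'
  have hyz : ∀ s ∈ Set.Icc (0:ℝ) 1, y s = z s := fun s hs => by
    rw [hy, Set.IccExtend_of_mem _ _ hs]; rfl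
  set Y : ℝ → ℝ := fun t => ∫ u in (0:ℝ)..t, y u with hY
  have hYd : ∀ t, HasDerivAt Y (y t) t := fun t => hyc.integral_hasStrictDerivAt 0 t |>.hasDerivAt
  have hZY : ∀ t ∈ Set.Icc (0:ℝ) 1, Z t = Y t := fun t ht => by
    rw [hZ, hY]
    apply intervalIntegral.integral_congr
    intro u hu
    rw [Set.uIcc_of_le ht.1] at hu
    exact (hyz u ⟨hu.1, hu.2.trans ht.2⟩).symm
  set W : ℝ → ℝ := fun t => (1 + z t + β * exp (z t)) * exp (Y t - z t) with hW
  have hWd : ∀ t ∈ Set.Icc (0:ℝ) 1, HasDerivAt W 0 t := fun t ht => by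
    have h1 := hzderiv t ht
    have h2 := ((h1.const_add 1).add (h1.exp.const_mul β)).mul ((hYd t).sub h1).exp
    refine HasDerivAt.congr_deriv (f := W) h2 ?_
    rw [hyz t ht]
    simp only [Pi.add_apply, Pi.sub_apply]
    ring
  have hWc : ∀ t ∈ Set.Icc (0:ℝ) 1, W t = 1 + β := fun t ht => by
    have := constant_of_has_deriv_right_zero (f := W) (a := 0) (b := 1)
      (fun s hs => (hWd s hs).continuousAt.continuousWithinAt)
      (fun s hs => (hWd s ⟨hs.1, hs.2.le⟩).hasDerivWithinAt) t ht
    rw [this]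
    simp [hW, hY, hz0]
  have hβ1 : (1 + β) ≠ 0 := by positivity
  have hkey : ∀ t ∈ Set.Icc (0:ℝ) 1,
      exp (-(Z t)) = 1 / (1 + β) * (exp (-(z t)) * (1 + z t + β * exp (z t))) := fun t ht => by
    have h := hWc t ht
    rw [hZY t ht, ← h]
    have h0 : W t ≠ 0 := by rw [h]; exact hβ1
    rw [one_div, eq_inv_mul_iff_mul_eq₀ h0, hW]
    simp only
    rw [mul_assoc, ← exp_add, mul_comm]
    congr 2
    ring
  have hint : ∫ t in (0:ℝ)..1, min (z t) q * exp (-(Z t)) =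
      1 / (1 + β) * ∫ t in (0:ℝ)..1,
        ((fun v => min v q * exp (-v)) ∘ z) t * (1 + z t + β * exp (z t)) := by
    rw [← intervalIntegral.integral_const_mul]
    apply intervalIntegral.integral_congr
    intro t ht
    rw [Set.uIcc_of_le zero_le_one] at ht
    simp only [Function.comp]
    rw [hkey t ht]
    ring
  have hgc : Continuous (fun v : ℝ => min v q * exp (-v)) := by fun_prop
  rw [hint, intervalIntegral.integral_comp_mul_deriv' (f := z)
    (f' := fun t => 1 + z t + β * exp (z t)) (g := fun v => min v q * exp (-v))
    (by rw [Set.uIcc_of_le zero_le_one]; exact hzderiv)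
    (by rw [Set.uIcc_of_le zero_le_one]; fun_prop) hgc.continuousOn, hz0, hz1,
    ← intervalIntegral.integral_add_adjacent_intervals (b := q)
      (hgc.intervalIntegrable _ _) (hgc.intervalIntegrable _ _)]
  have hE : ∀ x : ℝ, HasDerivAt (fun v => exp (-v)) (-exp (-x)) x := fun x => by
    simpa using (hasDerivAt_id x).neg.exp
  have hA : ∫ v in (0:ℝ)..q, min v q * exp (-v) = 1 - (1 + q) * exp (-q) := by
    rw [intervalIntegral.integral_eq_sub_of_hasDerivAt (f := fun v => -((1 + v) * exp (-v)))
      _ (hgc.intervalIntegrable _ _)]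
    · simp; ring
    · intro x hx
      rw [Set.uIcc_of_le hq.1] at hx
      rw [min_eq_left hx.2]
      refine HasDerivAt.congr_deriv (f := fun v => -((1 + v) * exp (-v)))
        (((hasDerivAt_id x).const_add 1).mul (hE x)).neg ?_
      simp only [id]; ring
  have hB : ∫ v in q..(n:ℝ), min v q * exp (-v) = q * (exp (-q) - exp (-(n:ℝ))) := by
    rw [intervalIntegral.integral_eq_sub_of_hasDerivAt (f := fun v => -(q * exp (-v)))
      _ (hgc.intervalIntegrable _ _)]
    · ring
    · intro x hx
      rw [Set.uIcc_of_le hq.2] at hx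
      rw [min_eq_right hx.1]
      refine HasDerivAt.congr_deriv (f := fun v => -(q * exp (-v))) ((hE x).const_mul q).neg ?_
      ring
  rw [hA, hB]
  ring
end

section
/- Fix n ≥ 3 and let β_n, z, Z be as defined. Then Z(r) < 2 for all r ∈ [0,1]. -/
open Real MeasureTheory intervalIntegral

lemma aux_pos (β : ℝ) (hβ : 0 < β) (v : ℝ) (hv : 0 ≤ v) : 0 < 1 + v + β * Real.exp v := by
  positivity

lemma aux_int_s5 (β : ℝ) (hβ : 0 < β) (a b : ℝ) (ha : 0 ≤ a) (hab : a ≤ b) :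
    IntervalIntegrable (fun v => (1 + v + β * Real.exp v)⁻¹) volume a b := by
  apply ContinuousOn.intervalIntegrable
  rw [Set.uIcc_of_le hab]
  apply ContinuousOn.inv₀ (by fun_prop)
  intro v hv
  exact (aux_pos β hβ v (ha.trans hv.1)).ne'

lemma aux_lb (β : ℝ) (hβ : 0 < β) (a c : ℝ) (ha : 0 ≤ a) (hc : 0 < c)
    (h : 1 + (a + 1/2) + β * (Real.exp (a+1) - Real.exp a) ≤ c) :
    1 / c ≤ ∫ v in a..(a+1), (1 + v + β * Real.exp v)⁻¹ := by
  have h1 : ∫ v in a..(a+1), (2 / c - (1 + v + β * Real.exp v) / c^2)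
      = 2 / c - (1 + (a + 1/2) + β * (Real.exp (a+1) - Real.exp a)) / c^2 := by
    have hd : ∀ v ∈ Set.uIcc a (a+1), HasDerivAt
        (fun v => 2 / c * v - (v + v^2/2 + β * Real.exp v) / c^2)
        (2 / c - (1 + v + β * Real.exp v) / c^2) v := by
      intro v _
      have := ((hasDerivAt_id v).const_mul (2/c)).sub
        ((((hasDerivAt_id v).add (((hasDerivAt_id v).pow 2).div_const 2)).add
          ((Real.hasDerivAt_exp v).const_mul β)).div_const (c^2))
      refine this.congr_deriv ?_
      simp
    rw [integral_eq_sub_of_hasDerivAt hd (by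
      apply Continuous.intervalIntegrable; fun_prop)]
    ring
  calc 1 / c = 2 / c - c / c^2 := by field_simp; norm_num
    _ ≤ 2 / c - (1 + (a + 1/2) + β * (Real.exp (a+1) - Real.exp a)) / c^2 := by gcongr
    _ = _ := h1.symm
    _ ≤ _ := by
      apply integral_mono_on (by linarith)
      · apply Continuous.intervalIntegrable; fun_prop
      · exact aux_int_s5 β hβ _ _ ha (by linarith)
      · intro v hv
        have hx := aux_pos β hβ v (ha.trans hv.1)
        generalize 1 + v + β * Real.exp v = x at hx
        have : x⁻¹ - (2 / c - x / c^2) = (x - c)^2 / (x * c^2) := by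
          field_simp
          ring
        have h2 : 0 ≤ (x - c)^2 / (x * c^2) := by positivity
        linarith

/-- For `n ≥ 3`, define `β_n > 0` as the unique solution of
`∫_0^n dz/(1 + z + β_n e^z) = 1`, let `z : [0,1] → [0,n]` solve the ODE
`z'(s) = 1 + z(s) + β_n e^{z(s)}` with `z(0) = 0` (so that `z(1) = n`), and let
`Z(t) = ∫_0^t z(u) du`.  Then `Z(r) < 2` for all `r ∈ [0,1]`. -/
theorem Z_upper_bound (n : ℕ) (hn : 3 ≤ n) (β : ℝ) (hβpos : 0 < β)
    (hβ : ∫ v in (0:ℝ)..(n : ℝ), (1 + v + β * Real.exp v)⁻¹ = 1)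
    (z : ℝ → ℝ) (hz0 : z 0 = 0) (hz1 : z 1 = n)
    (hzrange : ∀ s ∈ Set.Icc (0:ℝ) 1, z s ∈ Set.Icc (0:ℝ) (n : ℝ))
    (hzderiv : ∀ s ∈ Set.Icc (0:ℝ) 1,
      HasDerivAt z (1 + z s + β * Real.exp (z s)) s)
    (Z : ℝ → ℝ) (hZ : ∀ t, Z t = ∫ u in (0:ℝ)..t, z u) :
    ∀ r ∈ Set.Icc (0:ℝ) 1, Z r < 2 := by
  have hn' : (3:ℝ) ≤ n := by exact_mod_cast hn
  have hcont : ContinuousOn z (Set.Icc 0 1) := fun s hs =>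
    (hzderiv s hs).continuousAt.continuousWithinAt
  have hii : ∀ a b : ℝ, 0 ≤ a → a ≤ b → b ≤ 1 → IntervalIntegrable z volume a b := by
    intro a b ha hab hb
    apply ContinuousOn.intervalIntegrable
    rw [Set.uIcc_of_le hab]
    exact hcont.mono (Set.Icc_subset_Icc ha hb)
  -- Z 1 in closed form
  have hZ1 : Z 1 = n - Real.log (1 + n + β * Real.exp n) + Real.log (1 + β) := by
    have hd : ∀ s ∈ Set.uIcc (0:ℝ) 1, HasDerivAt
        (fun s => z s - Real.log (1 + z s + β * Real.exp (z s))) (z s) s := by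
      intro s hs
      rw [Set.uIcc_of_le zero_le_one] at hs
      have hp := aux_pos β hβpos (z s) (hzrange s hs).1
      have h1 := hzderiv s hs
      have h2 := h1.sub (((h1.const_add 1).add (h1.exp.const_mul β)).log hp.ne')
      refine h2.congr_deriv ?_
      simp only [Pi.add_apply]
      field_simp
      ring
    rw [hZ, integral_eq_sub_of_hasDerivAt hd (hii 0 1 le_rfl zero_le_one le_rfl), hz0, hz1]
    simp
  have hlow : 0.1566 < β := by
    by_contra hcon
    push Not at hcon
    have e1 := Real.exp_one_gt_d9
    have e2 := Real.exp_one_lt_d9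
    have E2 : Real.exp 2 = Real.exp 1 ^ 2 := by rw [← Real.exp_nat_mul]; norm_num
    have E3 : Real.exp 3 = Real.exp 1 ^ 3 := by rw [← Real.exp_nat_mul]; norm_num
    have b1 : Real.exp 1 - 1 ≤ 1.71829 := by linarith
    have b2 : Real.exp 2 - Real.exp 1 ≤ 4.671 := by rw [E2]; nlinarith
    have b3 : Real.exp 3 - Real.exp 2 ≤ 12.7 := by
      have : Real.exp 1 ^ 3 - Real.exp 1 ^ 2 = Real.exp 1 * (Real.exp 2 - Real.exp 1) := by
        rw [E2]; ring
      rw [E3, E2, this]; nlinarith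
    have i1 := aux_lb β hβpos 0 1.77 le_rfl (by norm_num) (by
      norm_num; nlinarith)
    have i2 := aux_lb β hβpos 1 3.24 (by norm_num) (by norm_num) (by
      norm_num; nlinarith)
    have i3 := aux_lb β hβpos 2 5.5 (by norm_num) (by norm_num) (by
      norm_num; nlinarith)
    norm_num at i1 i2 i3
    have i4 : 0 ≤ ∫ v in (3:ℝ)..n, (1 + v + β * Real.exp v)⁻¹ := by
      apply integral_nonneg hn'
      intro v hv
      exact (inv_pos.2 (aux_pos β hβpos v (by linarith [hv.1]))).le
    rw [← integral_add_adjacent_intervals (b := 3) (aux_int_s5 β hβpos _ _ le_rfl (by norm_num))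
        (aux_int_s5 β hβpos _ _ (by norm_num) hn'),
      ← integral_add_adjacent_intervals (b := 2) (aux_int_s5 β hβpos _ _ le_rfl (by norm_num))
        (aux_int_s5 β hβpos _ _ (by norm_num) (by norm_num)),
      ← integral_add_adjacent_intervals (b := 1) (aux_int_s5 β hβpos _ _ le_rfl (by norm_num))
        (aux_int_s5 β hβpos _ _ (by norm_num) (by norm_num))] at hβ
    linarith
  have hlt : Z 1 < 2 := by
    rw [hZ1]
    have h1 : Real.log β + n < Real.log (1 + n + β * Real.exp n) := by
      rw [← Real.log_exp (n:ℝ), ← Real.log_mul hβpos.ne' (Real.exp_pos _).ne', Real.log_exp]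
      apply Real.log_lt_log (by positivity)
      linarith
    have h2 : Real.log (1 + β) ≤ Real.log β + 2 := by
      have E2 : Real.exp 2 = Real.exp 1 ^ 2 := by rw [← Real.exp_nat_mul]; norm_num
      have e1 := Real.exp_one_gt_d9
      have : (7.389:ℝ) ≤ Real.exp 2 := by rw [E2]; nlinarith
      rw [← Real.log_exp 2, ← Real.log_mul hβpos.ne' (Real.exp_pos _).ne']
      apply Real.log_le_log (by positivity)
      nlinarith
    linarith
  intro r hr
  have : Z r ≤ Z 1 := by
    rw [hZ, hZ, ← integral_add_adjacent_intervals (hii 0 r le_rfl hr.1 hr.2)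
      (hii r 1 hr.1 hr.2 le_rfl)]
    have : 0 ≤ ∫ u in r..1, z u := integral_nonneg hr.2 fun u hu =>
      (hzrange u ⟨hr.1.trans hu.1, hu.2⟩).1
    linarith
  linarith
end

section
/- Fix n ≥ 3 and let β_n, z, Z be as defined. Then for every q with 0 < q < n, ∫_0^1 min{z(t), q}·(1 − Z(t)/n)^n dt ≥ (1 − 5/n)·(1/(1+β_n))·(1 − e^{−q}). -/
open Real MeasureTheory intervalIntegral

lemma itl_piece (β a b c : ℝ) (hab : a ≤ b) (ha : 0 ≤ a) (hβ : 0 < β) (hc : 0 < c) :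
    2 / c * (b - a) - (1 / c ^ 2) * ((b - a) + (b ^ 2 - a ^ 2) / 2 + β * (Real.exp b - Real.exp a))
      ≤ ∫ v in a..b, (1 + v + β * Real.exp v)⁻¹ := by
  have h1 : ∫ v in a..b, (2 / c - (1 / c ^ 2) * (1 + v + β * Real.exp v))
      = 2 / c * (b - a) - (1 / c ^ 2) * ((b - a) + (b ^ 2 - a ^ 2) / 2 + β * (Real.exp b - Real.exp a)) := by
    rw [intervalIntegral.integral_eq_sub_of_hasDerivAt
      (f := fun v => 2 / c * v - (1 / c ^ 2) * (v + v ^ 2 / 2 + β * Real.exp v))]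
    · ring
    · intro x _
      have := ((hasDerivAt_id x).const_mul (2 / c)).sub
        ((((hasDerivAt_id x).add ((hasDerivAt_pow 2 x).div_const 2)).add
          ((Real.hasDerivAt_exp x).const_mul β)).const_mul (1 / c ^ 2))
      refine this.congr_deriv ?_
      norm_num
    · exact Continuous.intervalIntegrable (by fun_prop) _ _
  rw [← h1]
  apply intervalIntegral.integral_mono_on hab
  · exact Continuous.intervalIntegrable (by fun_prop) _ _
  · apply ContinuousOn.intervalIntegrable
    rw [Set.uIcc_of_le hab]
    apply ContinuousOn.inv₀ (by fun_prop)
    intro x hx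
    have := ha.trans hx.1
    positivity
  · intro x hx
    have h0 := ha.trans hx.1
    have hX : 0 < 1 + x + β * Real.exp x := by positivity
    set X := 1 + x + β * Real.exp x
    have : X⁻¹ - (2 / c - 1 / c ^ 2 * X) = (X - c) ^ 2 / (X * c ^ 2) := by
      field_simp
      ring
    have h2 : 0 ≤ (X - c) ^ 2 / (X * c ^ 2) := by positivity
    linarith

lemma itl_beta (n : ℕ) (hn : 3 ≤ n) (β : ℝ) (hβpos : 0 < β)
    (hβ : ∫ v in (0:ℝ)..(n : ℝ), (1 + v + β * Real.exp v)⁻¹ = 1) : 4 / 25 ≤ β := by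
  by_contra! hlt
  have hn' : (3:ℝ) ≤ n := by exact_mod_cast hn
  have hint : ∀ a b : ℝ, 0 ≤ a → 0 ≤ b →
      IntervalIntegrable (fun v => (1 + v + β * Real.exp v)⁻¹) volume a b := by
    intro a b ha hb
    apply ContinuousOn.intervalIntegrable
    apply ContinuousOn.inv₀ (by fun_prop)
    intro x hx
    have : 0 ≤ x := (le_min ha hb).trans hx.1
    positivity
  have e1 := itl_piece β 0 1 (177/100) (by norm_num) (by norm_num) hβpos (by norm_num)
  have e2 := itl_piece β 1 2 (325/100) (by norm_num) (by norm_num) hβpos (by norm_num)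
  have e3 := itl_piece β 2 3 (553/100) (by norm_num) (by norm_num) hβpos (by norm_num)
  have e4 : 0 ≤ ∫ v in (3:ℝ)..(n : ℝ), (1 + v + β * Real.exp v)⁻¹ := by
    apply intervalIntegral.integral_nonneg hn'
    intro x hx
    have : 0 ≤ x := by linarith [hx.1]
    positivity
  have s1 := intervalIntegral.integral_add_adjacent_intervals (hint 0 1 (by norm_num) (by norm_num))
    (hint 1 2 (by norm_num) (by norm_num))
  have s2 := intervalIntegral.integral_add_adjacent_intervals (hint 0 2 (by norm_num) (by norm_num))
    (hint 2 3 (by norm_num) (by norm_num))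
  have s3 := intervalIntegral.integral_add_adjacent_intervals (hint 0 3 (by norm_num) (by norm_num))
    (hint 3 n (by norm_num) (by linarith))
  have x1 := Real.exp_one_lt_d9
  have x0 := Real.exp_one_gt_d9
  have p2 : Real.exp 2 = Real.exp 1 ^ 2 := by rw [← Real.exp_nat_mul]; norm_num
  have p3 : Real.exp 3 = Real.exp 1 ^ 3 := by rw [← Real.exp_nat_mul]; norm_num
  rw [p2] at e2 e3
  rw [p3] at e3
  rw [Real.exp_zero] at e1
  set e := Real.exp 1
  have k1 : β * (e - 1) ≤ 4/25 * (17183/10000) := by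
    apply mul_le_mul hlt.le <;> linarith
  have k2 : β * (e ^ 2 - e) ≤ 4/25 * (468/100) := by
    apply mul_le_mul hlt.le <;> nlinarith
  have k3 : β * (e ^ 3 - e ^ 2) ≤ 4/25 * (1271/100) := by
    have : e ^ 2 ≤ 739/100 := by nlinarith
    apply mul_le_mul hlt.le <;> nlinarith
  norm_num at e1 e2 e3
  linarith

lemma itl_pow (n : ℕ) (hn : 3 ≤ n) (x : ℝ) (hx : 0 ≤ x) (hx2 : x ≤ 2) :
    (1 - 4 / (n:ℝ)) * Real.exp (-x) ≤ (1 - x / n) ^ n := by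
  have hn' : (3:ℝ) ≤ n := by exact_mod_cast hn
  have hn0 : (0:ℝ) < n := by linarith
  have hxn : x / n ≤ 1 := by rw [div_le_one hn0]; linarith
  have hxn0 : 0 ≤ x / n := by positivity
  have h1 : 1 - (x / n) ^ 2 ≤ (1 - x / n) * Real.exp (x / n) := by
    have := Real.add_one_le_exp (x / n)
    nlinarith
  have h2 : (1 + -(x / n) ^ 2) ^ n ≤ ((1 - x / n) * Real.exp (x / n)) ^ n := by
    apply pow_le_pow_left₀ _ (by linarith)
    nlinarith
  have h3 := one_add_mul_le_pow (a := -(x / n) ^ 2) (by nlinarith) n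
  rw [mul_pow, ← Real.exp_nat_mul, mul_div_cancel₀ _ hn0.ne'] at h2
  have h4 : 1 - 4 / (n:ℝ) ≤ 1 + (n:ℝ) * (-(x / n) ^ 2) := by
    have : (n:ℝ) * (-(x / n) ^ 2) = - (x ^ 2 / n) := by field_simp
    rw [this]
    have : x ^ 2 / n ≤ 4 / n := by
      gcongr
      nlinarith
    linarith
  have h5 : 1 - 4 / (n:ℝ) ≤ (1 - x / n) ^ n * Real.exp x := by linarith
  rw [Real.exp_neg, ← div_eq_mul_inv, div_le_iff₀ (Real.exp_pos _)]
  exact h5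

lemma itl_min (q n : ℝ) (hq : 0 < q) (hqn : q < n) :
    ∫ v in (0:ℝ)..n, min v q * Real.exp (-v) = 1 - Real.exp (-q) - q * Real.exp (-n) := by
  have hint : ∀ a b : ℝ, IntervalIntegrable (fun v => min v q * Real.exp (-v)) volume a b :=
    fun a b => Continuous.intervalIntegrable (by fun_prop) _ _
  have hE : ∀ x : ℝ, HasDerivAt (fun v => Real.exp (-v)) (-Real.exp (-x)) x := by
    intro x
    simpa using (hasDerivAt_neg x).exp
  rw [← intervalIntegral.integral_add_adjacent_intervals (hint 0 q) (hint q n)]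
  have h1 : ∫ v in (0:ℝ)..q, min v q * Real.exp (-v) = ∫ v in (0:ℝ)..q, v * Real.exp (-v) := by
    apply intervalIntegral.integral_congr
    intro x hx
    rw [Set.uIcc_of_le hq.le] at hx
    simp only [min_eq_left hx.2]
  have h2 : ∫ v in q..n, min v q * Real.exp (-v) = ∫ v in q..n, q * Real.exp (-v) := by
    apply intervalIntegral.integral_congr
    intro x hx
    rw [Set.uIcc_of_le hqn.le] at hx
    simp only [min_eq_right hx.1]
  rw [h1, h2, intervalIntegral.integral_eq_sub_of_hasDerivAt (f := fun v => -((v + 1) * Real.exp (-v))),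
    intervalIntegral.integral_eq_sub_of_hasDerivAt (f := fun v => -(q * Real.exp (-v)))]
  · simp
    ring
  · intro x _
    refine ((hE x).const_mul q).neg.congr_deriv ?_
    ring
  · exact Continuous.intervalIntegrable (by fun_prop) _ _
  · intro x _
    refine ((((hasDerivAt_id x).add_const 1)).mul (hE x)).neg.congr_deriv ?_
    simp only [id]
    ring
  · exact Continuous.intervalIntegrable (by fun_prop) _ _

/-- For `n ≥ 3`, define `β_n > 0` as the unique solution of
`∫_0^n dz/(1 + z + β_n e^z) = 1`, let `z : [0,1] → [0,n]` solve the ODE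
`z'(s) = 1 + z(s) + β_n e^{z(s)}` with `z(0) = 0` (so that `z(1) = n`), and let
`Z(t) = ∫_0^t z(u) du`.  Then for every `q` with `0 < q < n`,
`∫_0^1 min{z(t), q}·(1 − Z(t)/n)^n dt ≥ (1 − 5/n)·(1/(1+β_n))·(1 − e^{−q})`,
where `(1 − Z(t)/n)^n = exp_n(−Z(t))` with `exp_n(λ) = (1 + λ/n)^n`. -/
theorem integral_term_lower_bound (n : ℕ) (hn : 3 ≤ n) (β : ℝ) (hβpos : 0 < β)
    (hβ : ∫ v in (0:ℝ)..(n : ℝ), (1 + v + β * Real.exp v)⁻¹ = 1)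
    (z : ℝ → ℝ) (hz0 : z 0 = 0) (hz1 : z 1 = n)
    (hzrange : ∀ s ∈ Set.Icc (0:ℝ) 1, z s ∈ Set.Icc (0:ℝ) (n : ℝ))
    (hzderiv : ∀ s ∈ Set.Icc (0:ℝ) 1,
      HasDerivAt z (1 + z s + β * Real.exp (z s)) s)
    (Z : ℝ → ℝ) (hZ : ∀ t, Z t = ∫ u in (0:ℝ)..t, z u) :
    ∀ q : ℝ, 0 < q → q < n →
      (1 - 5 / (n : ℝ)) * (1 / (1 + β)) * (1 - Real.exp (-q))
        ≤ ∫ t in (0:ℝ)..1, min (z t) q * (1 - Z t / (n : ℝ)) ^ n := by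
  intro q hq hqn
  have hn' : (3:ℝ) ≤ n := by exact_mod_cast hn
  have hn0 : (0:ℝ) < n := by linarith
  have hzc : ContinuousOn z (Set.Icc 0 1) :=
    fun s hs => (hzderiv s hs).continuousAt.continuousWithinAt
  have hb := itl_beta n hn β hβpos hβ
  have hXpos : ∀ s ∈ Set.Icc (0:ℝ) 1, 0 < 1 + z s + β * Real.exp (z s) := by
    intro s hs
    have := (hzrange s hs).1
    positivity
  -- closed form for Z
  have hZf : ∀ t ∈ Set.Icc (0:ℝ) 1,
      Z t = z t - Real.log (1 + z t + β * Real.exp (z t)) + Real.log (1 + β) := by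
    intro t ht
    have hsub : Set.uIcc 0 t ⊆ Set.Icc (0:ℝ) 1 := by
      rw [Set.uIcc_of_le ht.1]
      exact Set.Icc_subset_Icc le_rfl ht.2
    rw [hZ, intervalIntegral.integral_eq_sub_of_hasDerivAt
      (f := fun s => z s - Real.log (1 + z s + β * Real.exp (z s)))]
    · simp only [hz0, Real.exp_zero]
      ring_nf
    · intro s hs
      have hd := hzderiv s (hsub hs)
      have hX := hXpos s (hsub hs)
      have := hd.sub ((((hd.const_add 1).add ((hd.exp).const_mul β))).log hX.ne')
      refine this.congr_deriv ?_
      simp only [Pi.add_apply]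
      rw [sub_eq_iff_eq_add, ← sub_eq_iff_eq_add', eq_div_iff hX.ne']
      ring
    · exact (hzc.mono hsub).intervalIntegrable
  have hexpZ : ∀ t ∈ Set.Icc (0:ℝ) 1,
      Real.exp (- Z t) = (1 + z t + β * Real.exp (z t)) * Real.exp (- z t) / (1 + β) := by
    intro t ht
    have hX := hXpos t ht
    rw [hZf t ht, show -(z t - Real.log (1 + z t + β * Real.exp (z t)) + Real.log (1 + β))
      = Real.log (1 + z t + β * Real.exp (z t)) + (-z t) - Real.log (1 + β) by ring,
      Real.exp_sub, Real.exp_add, Real.exp_log hX, Real.exp_log (by linarith)]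
  have hZ0 : ∀ t ∈ Set.Icc (0:ℝ) 1, 0 ≤ Z t := by
    intro t ht
    rw [hZ]
    apply intervalIntegral.integral_nonneg ht.1
    intro u hu
    exact (hzrange u ⟨hu.1, hu.2.trans ht.2⟩).1
  have hZ2 : ∀ t ∈ Set.Icc (0:ℝ) 1, Z t ≤ 2 := by
    intro t ht
    have h1 : Real.exp (-2) ≤ Real.exp (- Z t) := by
      rw [hexpZ t ht, le_div_iff₀ (by linarith)]
      have hz := (hzrange t ht).1
      have e1 : Real.exp (z t) * Real.exp (- z t) = 1 := by
        rw [← Real.exp_add]; simp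
      have e2 : (1 + z t + β * Real.exp (z t)) * Real.exp (- z t)
        = (1 + z t) * Real.exp (- z t) + β := by
        linear_combination β * e1
      rw [e2]
      have e3 : 0 ≤ (1 + z t) * Real.exp (- z t) := by positivity
      have e4 : Real.exp (-2) ≤ 4 / 29 := by
        rw [Real.exp_neg, inv_le_comm₀ (Real.exp_pos _) (by norm_num)]
        have p2 : Real.exp 2 = Real.exp 1 ^ 2 := by rw [← Real.exp_nat_mul]; norm_num
        rw [p2]
        have := Real.exp_one_gt_d9
        nlinarith
      nlinarith
    have := Real.exp_le_exp.1 h1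
    linarith
  have hZc : ContinuousOn Z (Set.Icc 0 1) := by
    refine ContinuousOn.congr (f := fun t =>
      z t - Real.log (1 + z t + β * Real.exp (z t)) + Real.log (1 + β)) ?_ hZf
    refine ContinuousOn.add (hzc.sub (ContinuousOn.log ?_ fun s hs => (hXpos s hs).ne'))
      continuousOn_const
    fun_prop
  have hu : Set.uIcc (0:ℝ) 1 = Set.Icc 0 1 := Set.uIcc_of_le zero_le_one
  have hmain : ∫ t in (0:ℝ)..1, min (z t) q * Real.exp (- Z t)
      = (1 - Real.exp (-q) - q * Real.exp (-n)) / (1 + β) := by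
    rw [← itl_min q n hq hqn]
    have := intervalIntegral.integral_comp_mul_deriv (a := 0) (b := 1) (f := z)
      (f' := fun s => 1 + z s + β * Real.exp (z s))
      (g := fun v => min v q * Real.exp (-v)) (by rw [hu]; exact hzderiv)
      (by rw [hu]; fun_prop) (by fun_prop)
    rw [hz0, hz1] at this
    rw [← this, ← intervalIntegral.integral_div]
    apply intervalIntegral.integral_congr
    intro t ht
    rw [hu] at ht
    simp only [hexpZ t ht, Function.comp]
    ring
  have hmin : ∀ t ∈ Set.Icc (0:ℝ) 1, 0 ≤ min (z t) q :=
    fun t ht => le_min (hzrange t ht).1 hq.le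
  have hle : (1 - 4 / (n:ℝ)) * ((1 - Real.exp (-q) - q * Real.exp (-n)) / (1 + β))
      ≤ ∫ t in (0:ℝ)..1, min (z t) q * (1 - Z t / (n : ℝ)) ^ n := by
    rw [← hmain, ← intervalIntegral.integral_const_mul]
    apply intervalIntegral.integral_mono_on zero_le_one
    · apply ContinuousOn.intervalIntegrable
      rw [hu]
      fun_prop
    · apply ContinuousOn.intervalIntegrable
      rw [hu]
      fun_prop
    · intro t ht
      have := mul_le_mul_of_nonneg_left (itl_pow n hn (Z t) (hZ0 t ht) (hZ2 t ht)) (hmin t ht)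
      linarith
  have hE : 0 ≤ 1 - Real.exp (-q) := by
    have : Real.exp (-q) ≤ 1 := Real.exp_le_one_iff.2 (by linarith)
    linarith
  rcases Nat.lt_or_ge n 6 with h6 | h6
  · have h5 : (n:ℝ) ≤ 5 := by exact_mod_cast (by omega : n ≤ 5)
    have hneg : 1 - 5 / (n:ℝ) ≤ 0 := by
      have : 1 ≤ 5 / (n:ℝ) := by rwa [le_div_iff₀ hn0, one_mul]
      linarith
    have hL : (1 - 5 / (n : ℝ)) * (1 / (1 + β)) * (1 - Real.exp (-q)) ≤ 0 := by
      rw [mul_assoc]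
      exact mul_nonpos_of_nonpos_of_nonneg hneg (by positivity)
    refine hL.trans ?_
    apply intervalIntegral.integral_nonneg zero_le_one
    intro t ht
    apply mul_nonneg (hmin t ht)
    apply pow_nonneg
    have : Z t / n ≤ 1 := by
      rw [div_le_one hn0]
      linarith [hZ2 t ht]
    linarith
  · refine le_trans ?_ hle
    have h6' : (6:ℝ) ≤ n := by exact_mod_cast h6
    have k1 : (n:ℝ) * (n + 1) ≤ Real.exp n := by
      have := Real.pow_div_factorial_le_exp (n:ℝ) hn0.le 4
      norm_num [Nat.factorial] at this
      refine le_trans ?_ this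
      rw [le_div_iff₀ (by norm_num)]
      have : 24 * ((n:ℝ) + 1) ≤ n ^ 3 := by nlinarith [sq_nonneg ((n:ℝ) - 6)]
      nlinarith
    have k2 : q ≤ (1 + n) * (1 - Real.exp (-q)) := by
      have h1 : (1 + q) * Real.exp (-q) ≤ 1 := by
        rw [Real.exp_neg, ← div_eq_mul_inv, div_le_one (Real.exp_pos _)]
        linarith [Real.add_one_le_exp q]
      nlinarith
    have k3 : q * Real.exp (-n) ≤ 1 / n * (1 - Real.exp (-q)) := by
      rw [Real.exp_neg, ← div_eq_mul_inv, div_le_iff₀ (Real.exp_pos _)]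
      have : (1 + (n:ℝ)) ≤ 1 / n * Real.exp n := by
        rw [one_div, ← div_eq_inv_mul, le_div_iff₀ hn0]
        linarith
      nlinarith
    have k4 : 0 ≤ q * Real.exp (-n) := by positivity
    have k5 : 0 ≤ 4 / (n:ℝ) := by positivity
    have k6 : 5 / (n:ℝ) = 4 / n + 1 / n := by ring
    rw [← mul_div_assoc (1 - 4 / (n:ℝ)), show (1 - 5 / (n:ℝ)) * (1 / (1 + β)) * (1 - Real.exp (-q))
      = (1 - 5 / (n:ℝ)) * (1 - Real.exp (-q)) / (1 + β) by ring]
    apply div_le_div_of_nonneg_right _ (by linarith)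
    rw [k6]
    nlinarith [mul_nonneg k5 k4]
end

section
/- For every integer n ≥ 1 and every real q with 0 < q < n, (1 − 1/n)·(1 − (1 − q/n)^n) < 1 − e^{−q}. -/
theorem key_aux (m : ℕ) (hm : 1 ≤ m) (x : ℝ) (hx : x < m + 1) :
    (1 - 1 / ((m : ℝ) + 1)) * (1 - x / ((m : ℝ) + 1)) ^ m < Real.exp (-x) := by
  have hm0 : (0 : ℝ) < m := by exact_mod_cast hm
  have hc : 1 - 1 / ((m : ℝ) + 1) = m / (m + 1) := by field_simp; ring
  have hcpos : (0 : ℝ) < m / (m + 1) := by positivity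
  have hy : 0 ≤ 1 - x / ((m : ℝ) + 1) := by
    rw [sub_nonneg, div_le_one (by positivity)]; exact hx.le
  have h1 : 1 - x / ((m : ℝ) + 1) ≤ m / (m + 1) * Real.exp ((1 - x) / m) := by
    have h := Real.add_one_le_exp ((1 - x) / m)
    calc 1 - x / ((m : ℝ) + 1) = m / (m + 1) * ((1 - x) / m + 1) := by field_simp; ring
      _ ≤ _ := by gcongr
  have h2 : (1 - x / ((m : ℝ) + 1)) ^ m ≤ (m / (m + 1) : ℝ) ^ m * Real.exp (1 - x) := by
    calc _ ≤ (m / (m + 1) * Real.exp ((1 - x) / m)) ^ m := by gcongr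
      _ = _ := by
        rw [mul_pow, ← Real.exp_nat_mul]
        congr 2
        field_simp
  have h3 : (m / (m + 1) : ℝ) < Real.exp (-(1 / ((m : ℝ) + 1))) := by
    have h := Real.add_one_lt_exp (x := -(1 / ((m : ℝ) + 1))) (by
      have : (0 : ℝ) < 1 / ((m : ℝ) + 1) := by positivity
      linarith)
    rw [← hc]; linarith
  have h4 : (m / (m + 1) : ℝ) ^ (m + 1) < Real.exp (-1) := by
    calc _ < Real.exp (-(1 / ((m : ℝ) + 1))) ^ (m + 1) := by gcongr
      _ = _ := by
        rw [← Real.exp_nat_mul]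
        congr 1
        push_cast
        field_simp
  rw [hc]
  calc _ ≤ (m / (m + 1) : ℝ) * ((m / (m + 1) : ℝ) ^ m * Real.exp (1 - x)) := by gcongr
    _ = (m / (m + 1) : ℝ) ^ (m + 1) * Real.exp (1 - x) := by ring
    _ < Real.exp (-1) * Real.exp (1 - x) := by gcongr
    _ = _ := by rw [← Real.exp_add]; congr 1; ring

/-- For every integer `n ≥ 1` and every real `q` with `0 < q < n`,
`(1 − 1/n)·(1 − (1 − q/n)^n) < 1 − e^{−q}`.
Here `(1 − q/n)^n = exp_n(−q)`, where `exp_n(λ) = (1 + λ/n)^n` is the degree-`n`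
polynomial approximation to the exponential function. -/
theorem almost_there (n : ℕ) (hn : 1 ≤ n) (q : ℝ) (hq0 : 0 < q) (hqn : q < n) :
    (1 - 1 / (n : ℝ)) * (1 - (1 - q / (n : ℝ)) ^ n) < 1 - Real.exp (-q) := by
  obtain ⟨m, rfl⟩ : ∃ m, n = m + 1 := ⟨n - 1, by omega⟩
  rcases Nat.eq_zero_or_pos m with rfl | hm
  · simp [hq0]
  push_cast at hqn ⊢
  have hd : ∀ x : ℝ, HasDerivAt (fun x : ℝ => 1 - Real.exp (-x) -
      (1 - 1 / ((m : ℝ) + 1)) * (1 - (1 - x / ((m : ℝ) + 1)) ^ (m + 1)))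
      (Real.exp (-x) - (1 - 1 / ((m : ℝ) + 1)) * (1 - x / ((m : ℝ) + 1)) ^ m) x := by
    intro x
    have ha := ((hasDerivAt_id x).neg.exp).const_sub 1
    have hb := (((((hasDerivAt_id x).div_const ((m : ℝ) + 1)).const_sub 1).pow (m + 1)).const_sub
      1).const_mul (1 - 1 / ((m : ℝ) + 1))
    refine (ha.sub hb).congr_deriv ?_
    simp
    field_simp
    exact Or.inl trivial
  have hmono := strictMonoOn_of_deriv_pos (convex_Icc (0 : ℝ) q)
    (fun x _ => (hd x).continuousAt.continuousWithinAt) (by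
      intro x hx
      rw [interior_Icc] at hx
      rw [(hd x).deriv]
      have := key_aux m hm x (by linarith [hx.2])
      linarith)
  have h := hmono (Set.left_mem_Icc.2 hq0.le) (Set.right_mem_Icc.2 hq0.le) hq0
  simp only [neg_zero, Real.exp_zero, zero_div, sub_zero, one_pow, sub_self, mul_zero] at h
  linarith
end

section
/- For every ε > 0 there exist an integer n and a joint distribution of (x,y) on [0,∞)×[0,∞) with atomless marginal in the y-coordinate such that for every measurable eligible set R ⊆ [0,∞)×[0,∞), when the agent draws n i.i.d. samples (x_1,y_1),…,(x_n,y_n) and proposes the eligible sample (i.e., one lying in R) with maximum y-value (proposing nothing if no sample is eligible), the principal's expected utility is less than (1/2 + ε)·E[max_{1≤i≤n} x_i]. -/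
open MeasureTheory ProbabilityTheory

noncomputable def dhF (n : ℕ) (y : ℝ) : ℝ := if y < 1 / (n:ℝ)^2 then (n:ℝ) else 1

noncomputable def dhNu (n : ℕ) : Measure (ℝ × ℝ) :=
  (volume.restrict (Set.Icc (0:ℝ) 1)).map (fun y => (dhF n y, y))

lemma dhF_meas (n : ℕ) : Measurable (dhF n) :=
  Measurable.ite measurableSet_Iio measurable_const measurable_const

lemma dhG_meas (n : ℕ) : Measurable (fun y => (dhF n y, y)) :=
  (dhF_meas n).prodMk measurable_id

instance dhNu_prob (n : ℕ) : IsProbabilityMeasure (dhNu n) := by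
  have : IsProbabilityMeasure (volume.restrict (Set.Icc (0:ℝ) 1)) := ⟨by simp⟩
  exact Measure.isProbabilityMeasure_map (dhG_meas n).aemeasurable

lemma dhNu_ae (n : ℕ) : ∀ᵐ p ∂(dhNu n), p.1 = dhF n p.2 ∧ 0 ≤ p.2 := by
  unfold dhNu
  rw [ae_map_iff (dhG_meas n).aemeasurable]
  · filter_upwards [ae_restrict_mem measurableSet_Icc] with y hy
    exact ⟨rfl, hy.1⟩
  · exact (measurableSet_eq_fun measurable_fst ((dhF_meas n).comp measurable_snd)).inter
      (measurableSet_le measurable_const measurable_snd)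

lemma dhNu_B (n : ℕ) (hn : 1 ≤ n) : (dhNu n).real {p | p.2 < 1 / (n:ℝ)^2} = 1 / (n:ℝ)^2 := by
  have hn' : (1:ℝ) ≤ n := by exact_mod_cast hn
  have h1 : 1 / (n:ℝ)^2 ≤ 1 := by
    rw [div_le_one (by positivity)]; nlinarith
  have h0 : 0 ≤ 1 / (n:ℝ)^2 := by positivity
  have hm : MeasurableSet {p : ℝ × ℝ | p.2 < 1 / (n:ℝ)^2} :=
    measurableSet_lt measurable_snd measurable_const
  rw [measureReal_def, dhNu, Measure.map_apply (dhG_meas n) hm,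
    Measure.restrict_apply (dhG_meas n hm)]
  have : (fun y => (dhF n y, y)) ⁻¹' {p : ℝ × ℝ | p.2 < 1 / (n:ℝ)^2} ∩ Set.Icc 0 1
      = Set.Ico 0 (1 / (n:ℝ)^2) := by
    ext y
    simp only [Set.mem_inter_iff, Set.mem_preimage, Set.mem_ofPred_eq, Set.mem_Icc, Set.mem_Ico]
    constructor
    · rintro ⟨h, h', _⟩; exact ⟨h', h⟩
    · rintro ⟨h, h'⟩; exact ⟨h', h, by linarith⟩
  rw [this, Real.volume_Ico, sub_zero, ENNReal.toReal_ofReal h0]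

lemma dhNu_atom (n : ℕ) (c : ℝ) : dhNu n {p | p.2 = c} = 0 := by
  have hm : MeasurableSet {p : ℝ × ℝ | p.2 = c} :=
    measurableSet_eq_fun measurable_snd measurable_const
  rw [dhNu, Measure.map_apply (dhG_meas n) hm]
  have : (fun y => (dhF n y, y)) ⁻¹' {p : ℝ × ℝ | p.2 = c} = {c} := by
    ext y; simp
  rw [this]; simp

lemma dh_pi_ae (n : ℕ) : ∀ᵐ v ∂(Measure.pi fun _ : Fin n => dhNu n),
    ∀ i, (v i).1 = dhF n (v i).2 := by
  rw [ae_all_iff]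
  intro i
  have h := (measurePreserving_eval (fun _ : Fin n => dhNu n) i).quasiMeasurePreserving.ae
    (dhNu_ae n)
  filter_upwards [h] with v hv using hv.1

lemma dh_pi_real (n : ℕ) (s : Fin n → Set (ℝ × ℝ)) :
    (Measure.pi fun _ : Fin n => dhNu n).real (Set.univ.pi s) = ∏ i, (dhNu n).real (s i) := by
  simp [measureReal_def, Measure.pi_pi, ENNReal.toReal_prod]

lemma dh_real1 (n : ℕ) (hn : 1 ≤ n) (t : ℝ) (h0 : 0 ≤ t) (h1 : t ≤ 1) :
    1 - t ^ n + t ^ (n-1) ≤ 1 + 1 / (n:ℝ) := by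
  have hn' : (0:ℝ) < n := by exact_mod_cast hn
  obtain ⟨m, rfl⟩ : ∃ m, n = m + 1 := ⟨n-1, by omega⟩
  have hg : (∑ k ∈ Finset.range (m+1), t^k) * (1 - t) = 1 - t^(m+1) := geom_sum_mul_neg t (m+1)
  have hs : ∑ k ∈ Finset.range (m+1), t^m ≤ ∑ k ∈ Finset.range (m+1), t^k := by
    apply Finset.sum_le_sum
    intro k hk
    exact pow_le_pow_of_le_one h0 h1 (by have := Finset.mem_range.1 hk; omega)
  rw [Finset.sum_const, Finset.card_range, nsmul_eq_mul] at hs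
  have h2 := mul_le_mul_of_nonneg_right hs (sub_nonneg.2 h1)
  have h3 : (0:ℝ) ≤ t^(m+1) := by positivity
  have h4 : t^m * (1-t) ≤ 1 / ((m+1 : ℕ):ℝ) := by
    rw [le_div_iff₀ hn']; nlinarith
  simp only [Nat.add_sub_cancel]
  rw [pow_succ] at *
  nlinarith

lemma dh_real2 (n : ℕ) (hn : 1 ≤ n) :
    2 * (n:ℝ) / (n+1) ≤ 1 + ((n:ℝ) - 1) * (1 - (1 - 1/(n:ℝ)^2)^n) := by
  have hn' : (1:ℝ) ≤ n := by exact_mod_cast hn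
  have hnpos : (0:ℝ) < n := by linarith
  set b := 1/(n:ℝ)^2 with hb
  have hb0 : 0 ≤ b := by positivity
  have hb1 : b ≤ 1 := by
    rw [hb, div_le_one (by positivity)]; nlinarith
  have h1 : 1 + (n:ℝ) * b ≤ (1 + b)^n := one_add_mul_le_pow (by linarith) n
  have h2 : (1-b)^n * (1+b)^n ≤ 1 := by
    rw [← mul_pow]; exact pow_le_one₀ (by nlinarith) (by nlinarith)
  have h0 : 0 ≤ (1-b)^n := pow_nonneg (by linarith) n
  have hnb : (n:ℝ) * b = 1 / n := by rw [hb]; field_simp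
  rw [hnb] at h1
  have h3 : (1-b)^n * (1 + 1/(n:ℝ)) ≤ 1 := le_trans (mul_le_mul_of_nonneg_left h1 h0) h2
  have h4 : (1-b)^n ≤ n / (n+1) := by
    rw [le_div_iff₀ (by positivity)]
    have : (1-b)^n * (n+1) = ((1-b)^n * (1 + 1/(n:ℝ))) * n := by field_simp
    rw [this]; nlinarith
  have h5 : 2 * (n:ℝ) / (n+1) = 1 + ((n:ℝ)-1) * (1 - n/(n+1)) := by field_simp; ring
  rw [h5]
  nlinarith

lemma dh_max (n : ℕ) (hn : 1 ≤ n) :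
    ∫ v, (⨆ i, (v i).1) ∂(Measure.pi fun _ : Fin n => dhNu n)
      = 1 + ((n:ℝ) - 1) * (1 - (1 - 1/(n:ℝ)^2)^n) := by
  have hn' : (1:ℝ) ≤ n := by exact_mod_cast hn
  haveI : Nonempty (Fin n) := ⟨⟨0, hn⟩⟩
  set B : Set (ℝ × ℝ) := {p | p.2 < 1 / (n:ℝ)^2} with hB
  have hBm : MeasurableSet B := measurableSet_lt measurable_snd measurable_const
  set S : Set (Fin n → ℝ × ℝ) := Set.univ.pi (fun _ => Bᶜ) with hS
  have hSm : MeasurableSet S := MeasurableSet.univ_pi (fun _ => hBm.compl)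
  have hae : (fun v : Fin n → ℝ × ℝ => (⨆ i, (v i).1)) =ᵐ[Measure.pi fun _ : Fin n => dhNu n]
      fun v => 1 + Sᶜ.indicator (fun _ => (n:ℝ) - 1) v := by
    filter_upwards [dh_pi_ae n] with v hv
    by_cases h : v ∈ S
    · have : ∀ i, (v i).1 = 1 := by
        intro i
        have := h i (Set.mem_univ i)
        rw [hv i, dhF, if_neg]
        exact this
      simp [this, h]
    · have h' : ∃ i, v i ∈ B := by
        by_contra hc
        push Not at hc
        exact h (fun i _ => hc i)
      obtain ⟨i, hi⟩ := h'
      have hi' : (v i).1 = n := by rw [hv i, dhF, if_pos (show (v i).2 < 1 / (n:ℝ)^2 from hi)]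
      have hle : ∀ j, (v j).1 ≤ n := by
        intro j; rw [hv j, dhF]; split_ifs <;> linarith
      have : (⨆ i, (v i).1) = n := by
        apply le_antisymm (ciSup_le hle)
        rw [← hi']
        exact le_ciSup (f := fun i => (v i).1) (Set.finite_range _).bddAbove i
      rw [this, Set.indicator_of_mem h]; ring
  rw [integral_congr_ae hae, integral_add (integrable_const _)
    ((integrable_const _).indicator hSm.compl), integral_indicator_const _ hSm.compl,
    probReal_compl_eq_one_sub hSm, hS, dh_pi_real]
  simp only [probReal_compl_eq_one_sub hBm]
  rw [hB, dhNu_B n hn]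
  simp
  ring

lemma dh_util (n : ℕ) (hn : 1 ≤ n) (R : Set (ℝ × ℝ)) (hR : MeasurableSet R)
    (sel : (Fin n → ℝ × ℝ) → Option (Fin n))
    (h1 : ∀ v i, sel v = some i → v i ∈ R ∧ ∀ j, v j ∈ R → (v j).2 ≤ (v i).2) :
    ∫ v, ((sel v).map fun i => (v i).1).getD 0 ∂(Measure.pi fun _ : Fin n => dhNu n)
      ≤ 1 + 1 / (n:ℝ) := by
  have hn' : (1:ℝ) ≤ n := by exact_mod_cast hn
  set B : Set (ℝ × ℝ) := {p | p.2 < 1 / (n:ℝ)^2} with hB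
  have hBm : MeasurableSet B := measurableSet_lt measurable_snd measurable_const
  set C : Set (ℝ × ℝ) := (R ∩ Bᶜ)ᶜ with hC
  have hCm : MeasurableSet C := (hR.inter hBm.compl).compl
  set S : Set (Fin n → ℝ × ℝ) := Set.univ.pi (fun _ => C) with hS
  have hSm : MeasurableSet S := MeasurableSet.univ_pi (fun _ => hCm)
  set E : Fin n → Set (Fin n → ℝ × ℝ) :=
    fun i => Set.univ.pi (fun j => if j = i then B else C) with hE
  have hEm : ∀ i, MeasurableSet (E i) := fun i => MeasurableSet.univ_pi (fun j => by
    split_ifs <;> assumption)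
  set t := (dhNu n).real C with ht
  have hEr : ∀ i, (Measure.pi fun _ : Fin n => dhNu n).real (E i)
      = 1/(n:ℝ)^2 * t^(n-1) := by
    intro i
    rw [hE, dh_pi_real, ← Finset.mul_prod_erase _ _ (Finset.mem_univ i)]
    rw [if_pos rfl, hB, dhNu_B n hn]
    congr 1
    rw [Finset.prod_congr rfl (g := fun _ => t)]
    · simp
    · intro j hj
      rw [if_neg (Finset.ne_of_mem_erase hj)]
  have hint : ∀ i ∈ (Finset.univ : Finset (Fin n)), Integrable
      (fun v => (E i).indicator (fun _ => (n:ℝ)) v) (Measure.pi fun _ : Fin n => dhNu n) :=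
    fun i _ => (integrable_const _).indicator (hEm i)
  have hint1 : Integrable (fun v => Sᶜ.indicator (fun _ => (1:ℝ)) v)
      (Measure.pi fun _ : Fin n => dhNu n) := (integrable_const _).indicator hSm.compl
  calc ∫ v, ((sel v).map fun i => (v i).1).getD 0 ∂(Measure.pi fun _ : Fin n => dhNu n)
      ≤ ∫ v, (Sᶜ.indicator (fun _ => (1:ℝ)) v + ∑ i, (E i).indicator (fun _ => (n:ℝ)) v)
          ∂(Measure.pi fun _ : Fin n => dhNu n) := by
        apply integral_mono_of_nonneg
        · filter_upwards [dh_pi_ae n] with v hv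
          simp only [Pi.zero_apply]
          cases hs : sel v with
          | none => simp
          | some i =>
            simp only [Option.map_some, Option.getD_some]
            rw [hv i, dhF]; split_ifs <;> linarith
        · exact hint1.add (integrable_finsetSum _ hint)
        · filter_upwards [dh_pi_ae n] with v hv
          have hn0 : 0 ≤ Sᶜ.indicator (fun _ => (1:ℝ)) v :=
            Set.indicator_nonneg (fun _ _ => zero_le_one) v
          have hn1 : ∀ i ∈ (Finset.univ : Finset (Fin n)),
              0 ≤ (E i).indicator (fun _ => (n:ℝ)) v :=
            fun i _ => Set.indicator_nonneg (fun _ _ => by linarith) v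
          have hn2 := Finset.sum_nonneg hn1
          cases hs : sel v with
          | none => simp only [Option.map_none, Option.getD_none]; linarith
          | some i =>
            simp only [Option.map_some, Option.getD_some]
            obtain ⟨hiR, hmax⟩ := h1 v i hs
            by_cases hi : v i ∈ B
            · have hx : (v i).1 = n := by rw [hv i, dhF, if_pos (show (v i).2 < 1 / (n:ℝ)^2 from hi)]
              have hvE : v ∈ E i := by
                intro j _
                dsimp only
                split_ifs with hj
                · rw [hj]; exact hi
                · rintro ⟨hjR, hjB⟩
                  exact hjB (lt_of_le_of_lt (hmax j hjR) hi)
              have h3 := Finset.single_le_sum hn1 (Finset.mem_univ i)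
              rw [Set.indicator_of_mem hvE] at h3
              linarith
            · have hx : (v i).1 = 1 := by rw [hv i, dhF, if_neg (show ¬ (v i).2 < 1 / (n:ℝ)^2 from hi)]
              have hvS : v ∈ Sᶜ := fun h => h i (Set.mem_univ i) ⟨hiR, hi⟩
              rw [Set.indicator_of_mem hvS]
              linarith
    _ = 1 - t ^ n + t ^ (n-1) := by
        rw [integral_add hint1 (integrable_finsetSum _ hint), integral_finsetSum _ hint,
          integral_indicator_const _ hSm.compl, probReal_compl_eq_one_sub hSm, hS, dh_pi_real]
        simp only [integral_indicator_const _ (hEm _), hEr]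
        simp only [Finset.prod_const, Finset.sum_const, Finset.card_univ, Fintype.card_fin,
          smul_eq_mul, nsmul_eq_mul, ← ht]
        field_simp
    _ ≤ _ := dh_real1 n hn t measureReal_nonneg measureReal_le_one

/-- tightness of the factor `1/2`.  For every `ε > 0` there exist an
integer `n` and a joint distribution `ν` of `(x,y)` on `[0,∞)×[0,∞)` with atomless
`y`-marginal such that for every measurable eligible set `R`, when the agent draws
`n` i.i.d. samples from `ν` and proposes the eligible sample with maximum `y`-value
(proposing nothing if no sample is eligible), the principal's expected utility — the
`x`-value of the accepted proposal, or `0` if none — is less than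
`(1/2 + ε)·E[max_i x_i]`. -/
theorem delegation_half_tight :
    ∀ ε : ℝ, 0 < ε →
    ∃ (n : ℕ) (ν : Measure (ℝ × ℝ)), 0 < n ∧ IsProbabilityMeasure ν ∧
      (∀ᵐ p ∂ν, 0 ≤ p.1 ∧ 0 ≤ p.2) ∧
      (∀ c : ℝ, ν {p | p.2 = c} = 0) ∧
      ∀ R : Set (ℝ × ℝ), MeasurableSet R →
      ∀ sel : (Fin n → ℝ × ℝ) → Option (Fin n),
        (∀ v i, sel v = some i → v i ∈ R ∧ ∀ j, v j ∈ R → (v j).2 ≤ (v i).2) →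
        (∀ v, (∃ i, v i ∈ R) → (sel v).isSome) →
        AEStronglyMeasurable (fun v => ((sel v).map fun i => (v i).1).getD 0)
          (Measure.pi fun _ : Fin n => ν) →
        ∫ v, ((sel v).map fun i => (v i).1).getD 0 ∂(Measure.pi fun _ : Fin n => ν)
          < (1 / 2 + ε) * ∫ v, (⨆ i, (v i).1) ∂(Measure.pi fun _ : Fin n => ν) := by
  intro ε hε
  obtain ⟨n, hn⟩ := exists_nat_gt (2 / ε)
  have hnpos : (0:ℝ) < n := lt_trans (by positivity) hn
  have hn0 : 0 < n := by exact_mod_cast hnpos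
  have hn1 : (1:ℝ) ≤ n := by exact_mod_cast hn0
  refine ⟨n, dhNu n, hn0, inferInstance, ?_, dhNu_atom n, ?_⟩
  · filter_upwards [dhNu_ae n] with p hp
    refine ⟨?_, hp.2⟩
    rw [hp.1, dhF]; split_ifs <;> linarith
  · intro R hR sel h1 _ _
    refine lt_of_le_of_lt (dh_util n hn0 R hR sel h1) ?_
    rw [dh_max n hn0]
    refine lt_of_lt_of_le ?_ (mul_le_mul_of_nonneg_left (dh_real2 n hn0) (by positivity))
    rw [div_lt_iff₀ hε] at hn
    have h2 : (1 / 2 + ε) * (2 * (n:ℝ) / (n+1)) - (1 + 1 / (n:ℝ))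
        = (2 * ε * n * n - 2 * n - 1) / (n * (n+1)) := by field_simp; ring
    have h3 : 0 < (2 * ε * n * n - 2 * n - 1) / ((n:ℝ) * (n+1)) := by
      apply div_pos _ (by positivity)
      nlinarith
    linarith
end

section
/- For every ε > 0 there exist an integer n and an atomless distribution F on [0,∞) such that for every measurable set A ⊆ [0,∞) of eligible x-values the following holds: when the agent draws n i.i.d. pairs (x_1,y_1),…,(x_n,y_n) with x_i distributed according to F and y_i uniform on [0,1] independent of everything else, and proposes the sample with maximum y_i among those with x_i ∈ A (proposing nothing if no sample qualifies), the principal's expected utility is less than (1 − 1/e + ε)·E[max_{1≤i≤n} x_i]. -/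
open MeasureTheory ProbabilityTheory

lemma aux_h (s : ℝ) (hs : 0 ≤ s) :
    (1 - s / Real.exp 1) * Real.exp s ≤ 1 + (Real.exp 1 - 2) * s := by
  have he1 : 2.7 < Real.exp 1 := by linarith [Real.exp_one_gt_d9]
  have he2 : Real.exp 1 < 2.72 := by linarith [Real.exp_one_lt_d9]
  set e := Real.exp 1 with he
  have he0 : 0 < e := by linarith
  -- g = line - h
  let g : ℝ → ℝ := fun s => 1 + (e - 2) * s - (1 - s / e) * Real.exp s
  let g' : ℝ → ℝ := fun s => (e - 2) - (1 - s / e - 1 / e) * Real.exp s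
  let g'' : ℝ → ℝ := fun s => - ((1 - s / e - 2 / e) * Real.exp s)
  have hg : ∀ s, HasDerivAt g (g' s) s := by
    intro s
    have h1 : HasDerivAt (fun s : ℝ => 1 + (e - 2) * s) ((e-2) * 1) s :=
      ((hasDerivAt_id s).const_mul (e-2)).const_add 1
    have h2 : HasDerivAt (fun s : ℝ => 1 - s / e) (-(1 / e)) s :=
      ((hasDerivAt_id s).div_const e).const_sub 1
    have h3 := h1.sub (h2.mul (Real.hasDerivAt_exp s))
    refine h3.congr_deriv ?_
    simp only [g']; ring
  have hg' : ∀ s, HasDerivAt g' (g'' s) s := by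
    intro s
    have h2 : HasDerivAt (fun s : ℝ => 1 - s / e - 1 / e) (-(1 / e)) s :=
      (((hasDerivAt_id s).div_const e).const_sub 1).sub_const _
    have h3 := (h2.mul (Real.hasDerivAt_exp s)).const_sub (e-2)
    refine h3.congr_deriv ?_
    simp only [g'']; ring
  have g1 : g 1 = 0 := by simp only [g]; rw [← he]; field_simp; ring
  have g'1 : g' 1 = 0 := by simp only [g']; rw [← he]; field_simp; ring
  have g0 : g 0 = 0 := by simp [g]
  have hdg : deriv g = g' := funext fun s => (hg s).deriv
  have hdg' : deriv g' = g'' := funext fun s => (hg' s).deriv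
  have cg : Continuous g := continuous_iff_continuousAt.2 fun s => (hg s).continuousAt
  have hgn : ∀ s, e - 2 ≤ s → 0 ≤ g s := by
    have hconv : ConvexOn ℝ (Set.Ici (e-2)) g := by
      refine convexOn_of_hasDerivWithinAt2_nonneg (f' := g') (f'' := g'') (convex_Ici _) cg.continuousOn
        (fun x _ => (hg x).hasDerivWithinAt) (fun x _ => (hg' x).hasDerivWithinAt) ?_
      intro x hx
      rw [interior_Ici] at hx
      have hx : e - 2 < x := hx
      have : 1 - x / e - 2 / e ≤ 0 := by
        have : 1 - x / e - 2 / e = (e - x - 2) / e := by field_simp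
        rw [this]; exact div_nonpos_of_nonpos_of_nonneg (by linarith) he0.le
      simp only [g'']; nlinarith [Real.exp_pos x]
    intro s hs
    have hin : (1:ℝ) ∈ interior (Set.Ici (e-2)) := by
      rw [interior_Ici]; show e - 2 < 1; linarith
    have := hconv.isMinOn_of_rightDeriv_eq_zero hin (by
      rw [(hg 1).hasDerivWithinAt.derivWithin (uniqueDiffWithinAt_Ioi 1)]; exact g'1)
    have := this hs
    simpa [g1] using this
  have key : 0 ≤ g s := by
    rcases le_total (e-2) s with h | h
    · exact hgn s h
    · have hconc : ConcaveOn ℝ (Set.Icc 0 (e-2)) g := by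
        refine concaveOn_of_hasDerivWithinAt2_nonpos (f' := g') (f'' := g'') (convex_Icc _ _) cg.continuousOn
          (fun x _ => (hg x).hasDerivWithinAt) (fun x _ => (hg' x).hasDerivWithinAt) ?_
        intro x hx
        rw [interior_Icc] at hx
        have hx : x < e - 2 := hx.2
        have : 0 ≤ 1 - x / e - 2 / e := by
          have : 1 - x / e - 2 / e = (e - x - 2) / e := by field_simp
          rw [this]; exact div_nonneg (by linarith) he0.le
        simp only [g'']; nlinarith [Real.exp_pos x]
      have := hconc.min_le_of_mem_Icc (x := 0) (y := e-2) (z := s) ⟨le_rfl, by linarith⟩ ⟨by linarith, le_rfl⟩ ⟨hs, h⟩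
      rw [g0] at this
      exact le_trans (le_min le_rfl (hgn _ le_rfl)) this
  simp only [g] at key; linarith

/-- (a + b s) K(s) ≤ 1 - 1/e -/
lemma aux_K_s12 (s : ℝ) (hs : 0 ≤ s) :
    (1 / (Real.exp 1 - 1) + (Real.exp 1 - 2) / (Real.exp 1 - 1) * s) *
      (∫ y in (0:ℝ)..1, Real.exp (-(s * (1 - y)))) ≤ 1 - 1 / Real.exp 1 := by
  have he1 : 2.7 < Real.exp 1 := by linarith [Real.exp_one_gt_d9]
  have he2 : Real.exp 1 < 2.72 := by linarith [Real.exp_one_lt_d9]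
  rcases hs.eq_or_lt with rfl | hs'
  · simp
    rw [inv_eq_one_div, inv_eq_one_div, div_le_iff₀ (by linarith), ]
    have : (1 - 1 / Real.exp 1) * (Real.exp 1 - 1) = Real.exp 1 - 2 + 1 / Real.exp 1 := by
      field_simp; ring
    rw [this]
    have : 1 / 2.72 ≤ 1 / Real.exp 1 := one_div_le_one_div_of_le (by linarith) he2.le
    norm_num at this ⊢
    linarith
  · have hK : (∫ y in (0:ℝ)..1, Real.exp (-(s * (1 - y)))) = (1 - Real.exp (-s)) / s := by
      have : ∀ y ∈ Set.uIcc (0:ℝ) 1, HasDerivAt (fun y => Real.exp (-(s * (1 - y))) / s) (Real.exp (-(s * (1 - y)))) y := by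
        intro y _
        have h1 : HasDerivAt (fun y : ℝ => -(s * (1 - y))) (-(s * (-1))) y :=
          (((hasDerivAt_id y).const_sub 1).const_mul s).neg
        refine (h1.exp.div_const s).congr_deriv ?_
        field_simp
      rw [intervalIntegral.integral_eq_sub_of_hasDerivAt this (by
        apply Continuous.intervalIntegrable; fun_prop)]
      simp; field_simp
    rw [hK]
    have h := aux_h s hs
    have hes : Real.exp (-s) * Real.exp s = 1 := by rw [← Real.exp_add]; simp
    have h2 : 1 - s / Real.exp 1 ≤ (1 + (Real.exp 1 - 2) * s) * Real.exp (-s) := by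
      have := mul_le_mul_of_nonneg_right h (Real.exp_pos (-s)).le
      calc _ = (1 - s / Real.exp 1) * Real.exp s * Real.exp (-s) := by rw [mul_assoc, mul_comm (Real.exp s), hes, mul_one]
        _ ≤ _ := this
    have h3 : (1 / (Real.exp 1 - 1) + (Real.exp 1 - 2) / (Real.exp 1 - 1) * s) * ((1 - Real.exp (-s)) / s)
      = ((1 + (Real.exp 1 - 2) * s) - (1 + (Real.exp 1 - 2) * s) * Real.exp (-s)) / ((Real.exp 1 - 1) * s) := by
      have : Real.exp 1 - 1 ≠ 0 := by linarith
      field_simp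
    rw [h3, div_le_iff₀ (by apply mul_pos <;> linarith)]
    have h4 : (1 - 1 / Real.exp 1) * ((Real.exp 1 - 1) * s) = (Real.exp 1 - 2) * s + s / Real.exp 1 := by
      field_simp; ring
    rw [h4]; linarith
open scoped ENNReal

lemma aux_U (l u : ℝ) (h : l < u) : ∃ U : Measure ℝ, IsProbabilityMeasure U ∧ (∀ c, U {c} = 0) ∧
    U (Set.Icc l u)ᶜ = 0 := by
  refine ⟨(ENNReal.ofReal (u - l))⁻¹ • volume.restrict (Set.Icc l u), ⟨?_⟩, ?_, ?_⟩
  · simp only [Measure.smul_apply, Measure.restrict_apply_univ, Real.volume_Icc, smul_eq_mul]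
    exact ENNReal.inv_mul_cancel (by simpa using h) ENNReal.ofReal_ne_top
  · intro c; simp
  · simp [Measure.restrict_apply measurableSet_Icc.compl]

lemma aux_F (l b lH H δ : ℝ) (h0 : 0 < l) (hb : l < b) (hbH : b ≤ H) (hl : l ≤ lH) (hH : lH < H) (hδ : 0 ≤ δ) (hδ1 : δ ≤ 1) :
    ∃ F : Measure ℝ, IsProbabilityMeasure F ∧ (∀ c, F {c} = 0) ∧ F (Set.Icc l H)ᶜ = 0 ∧
      ENNReal.ofReal δ ≤ F (Set.Ici lH) ∧
      ∀ A, MeasurableSet A → ∫⁻ x in A, ENNReal.ofReal x ∂F ≤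
        ENNReal.ofReal b * F A + ENNReal.ofReal (H * δ) := by
  obtain ⟨U, hU1, hU2, hU3⟩ := aux_U l b hb
  obtain ⟨V, hV1, hV2, hV3⟩ := aux_U lH H hH
  have hVl : V (Set.Icc l H)ᶜ = 0 := measure_mono_null
    (Set.compl_subset_compl.2 (Set.Icc_subset_Icc hl le_rfl)) hV3
  have hUl : U (Set.Icc l H)ᶜ = 0 := measure_mono_null
    (Set.compl_subset_compl.2 (Set.Icc_subset_Icc le_rfl hbH)) hU3
  refine ⟨ENNReal.ofReal (1 - δ) • U + ENNReal.ofReal δ • V, ⟨?_⟩, ?_, ?_, ?_, ?_⟩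
  · simp [← ENNReal.ofReal_add (sub_nonneg.2 hδ1) hδ]
  · intro c; simp [hU2, hV2]
  · simp [hUl, hVl]
  · have : V (Set.Ici lH) = 1 := by
      have h2 : V (Set.Ici lH)ᶜ = 0 := measure_mono_null
        (Set.compl_subset_compl.2 Set.Icc_subset_Ici_self) hV3
      exact (prob_compl_eq_zero_iff measurableSet_Ici).1 h2
    simp [this]
  · intro A hA
    have key : ∀ (W : Measure ℝ) (l c : ℝ), W (Set.Icc l c)ᶜ = 0 →
        ∫⁻ x in A, ENNReal.ofReal x ∂W ≤ ENNReal.ofReal c * W A := by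
      intro W l c hW
      rw [← setLIntegral_const]
      refine lintegral_mono_ae (ae_restrict_of_ae ?_)
      have : ∀ᵐ x ∂W, x ∈ Set.Icc l c := hW
      filter_upwards [this] with x hx
      exact ENNReal.ofReal_le_ofReal hx.2
    rw [Measure.restrict_add, Measure.restrict_smul, Measure.restrict_smul, lintegral_add_measure,
      lintegral_smul_measure, lintegral_smul_measure]
    simp only [Measure.add_apply, Measure.smul_apply, smul_eq_mul, mul_add]
    rw [add_assoc]
    refine add_le_add ?_ ?_
    · calc _ ≤ ENNReal.ofReal (1 - δ) * (ENNReal.ofReal b * U A) := by gcongr; exact key U _ _ hU3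
        _ = _ := by ring
    · refine le_trans ?_ (le_add_of_nonneg_left (by positivity))
      calc _ ≤ ENNReal.ofReal δ * (ENNReal.ofReal H * V A) := by gcongr; exact key V _ _ hV3
        _ ≤ ENNReal.ofReal δ * (ENNReal.ofReal H * 1) := by gcongr; exact prob_le_one
        _ = _ := by rw [mul_one, mul_comm, ENNReal.ofReal_mul (by linarith)]

/-- one summand -/
lemma aux_G (m : ℕ) (F : Measure ℝ) [IsProbabilityMeasure F] (A : Set ℝ) (hA : MeasurableSet A)
    (i : Fin (m+1)) :
    ∫⁻ v : Fin (m+1) → ℝ × ℝ, (A.indicator ENNReal.ofReal (v i).1) *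
        ({v : Fin (m+1) → ℝ × ℝ | ∀ j, (v j).1 ∈ A → (v j).2 ≤ (v i).2}.indicator 1 v)
        ∂(Measure.pi fun _ : Fin (m+1) =>
            F.prod ((volume : Measure ℝ).restrict (Set.Icc (0:ℝ) 1)))
      ≤ (∫⁻ x in A, ENNReal.ofReal x ∂F) *
        ENNReal.ofReal (∫ y in (0:ℝ)..1, Real.exp (-((m * F.real A) * (1 - y)))) := by
  set ν := (volume : Measure ℝ).restrict (Set.Icc (0:ℝ) 1) with hν
  have : IsProbabilityMeasure ν := ⟨by simp [hν]⟩
  set μ := F.prod ν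
  let T : ℝ → Set (ℝ × ℝ) := fun y => {w | w.1 ∈ A → w.2 ≤ y}
  let Q : Set ((ℝ × ℝ) × (Fin m → ℝ × ℝ)) := {z | ∀ j, (z.2 j).1 ∈ A → (z.2 j).2 ≤ z.1.2}
  have hQ : MeasurableSet Q := by
    have : Q = ⋂ j, ({z | (z.2 j).1 ∈ A}ᶜ ∪ {z | (z.2 j).2 ≤ z.1.2}) := by
      ext z; simp only [Q, Set.mem_ofPred_eq, Set.mem_iInter, Set.mem_union, Set.mem_compl_iff]
      exact forall_congr' fun j => imp_iff_not_or
    rw [this]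
    refine MeasurableSet.iInter fun j => MeasurableSet.union ?_ ?_
    · exact (hA.preimage (f := fun z : (ℝ × ℝ) × (Fin m → ℝ × ℝ) => (z.2 j).1) (by fun_prop)).compl
    · exact measurableSet_le (by fun_prop) (by fun_prop)
  let Φ : (ℝ × ℝ) × (Fin m → ℝ × ℝ) → ℝ≥0∞ := fun z =>
    A.indicator ENNReal.ofReal z.1.1 * Q.indicator 1 z
  have hind : Measurable (A.indicator ENNReal.ofReal) := ENNReal.measurable_ofReal.indicator hA
  have hΦ : Measurable Φ := 
    (hind.comp (measurable_fst.comp measurable_fst)).mul (measurable_one.indicator hQ)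
  have hmp := measurePreserving_piFinSuccAbove (fun _ : Fin (m+1) => μ) i
  have hT : ∀ y, MeasurableSet (T y) := by
    intro y
    have : T y = {z | z.1 ∈ A}ᶜ ∪ {z | z.2 ≤ y} := by
      ext z; exact imp_iff_not_or
    rw [this]
    exact (hA.preimage measurable_fst).compl.union (measurableSet_le measurable_snd measurable_const)
  have hTm : ∀ y ∈ Set.Icc (0:ℝ) 1, μ (T y) ≤ ENNReal.ofReal (Real.exp (-(F.real A * (1 - y)))) := by
    intro y hy
    have h1 : (T y)ᶜ = A ×ˢ Set.Ioi y := by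
      ext z; simp [T]
    have h2 : μ.real (T y) = 1 - F.real A * (1 - y) := by
      have h3 := probReal_compl_eq_one_sub (μ := μ) (hT y)
      rw [h1] at h3
      have h4 : μ.real (A ×ˢ Set.Ioi y) = F.real A * (1 - y) := by
        rw [measureReal_prod_prod]
        congr 1
        rw [measureReal_def, hν, Measure.restrict_apply measurableSet_Ioi]
        have : Set.Ioi y ∩ Set.Icc 0 1 = Set.Ioc y 1 := by
          ext t; simp only [Set.mem_inter_iff, Set.mem_Ioi, Set.mem_Icc, Set.mem_Ioc]
          constructor
          · rintro ⟨a, b, c⟩; exact ⟨a, c⟩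
          · rintro ⟨a, b⟩; exact ⟨a, by linarith [hy.1], b⟩
        rw [this, Real.volume_Ioc, ENNReal.toReal_ofReal (by linarith [hy.2])]
      linarith
    rw [← ofReal_measureReal, h2]
    apply ENNReal.ofReal_le_ofReal
    linarith [Real.add_one_le_exp (-(F.real A * (1 - y)))]
  calc _ ≤ ∫⁻ v, Φ (MeasurableEquiv.piFinSuccAbove (fun _ => ℝ × ℝ) i v) ∂(Measure.pi fun _ : Fin (m+1) => μ) := by
        refine lintegral_mono fun v => ?_
        simp only [Φ]
        refine mul_le_mul' le_rfl ?_
        by_cases hw : v ∈ {v : Fin (m+1) → ℝ × ℝ | ∀ j, (v j).1 ∈ A → (v j).2 ≤ (v i).2}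
        · rw [Set.indicator_of_mem hw, Set.indicator_of_mem]
          · rfl
          · intro j; exact hw _
        · rw [Set.indicator_of_notMem hw]; exact bot_le
    _ = ∫⁻ z, Φ z ∂(μ.prod (Measure.pi fun _ : Fin m => μ)) := hmp.lintegral_comp hΦ
    _ = ∫⁻ z, ∫⁻ w, Φ (z, w) ∂(Measure.pi fun _ : Fin m => μ) ∂μ := lintegral_prod _ hΦ.aemeasurable
    _ = ∫⁻ z, A.indicator ENNReal.ofReal z.1 * (μ (T z.2)) ^ m ∂μ := by
        refine lintegral_congr fun z => ?_
        simp only [Φ]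
        have hs : MeasurableSet (Set.univ.pi fun _ : Fin m => T z.2) :=
          MeasurableSet.univ_pi fun _ => hT _
        have : ∀ w, Q.indicator (1 : (ℝ × ℝ) × (Fin m → ℝ × ℝ) → ℝ≥0∞) (z, w) = (Set.univ.pi fun _ : Fin m => T z.2).indicator 1 w := by
          intro w
          have : (z, w) ∈ Q ↔ w ∈ (Set.univ.pi fun _ : Fin m => T z.2) := by
            simp [Q, T, Set.mem_pi]
          by_cases hw : (z, w) ∈ Q
          · rw [Set.indicator_of_mem hw, Set.indicator_of_mem (this.1 hw)]; rfl
          · rw [Set.indicator_of_notMem hw, Set.indicator_of_notMem (fun h => hw (this.2 h))]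
        simp_rw [this]
        rw [lintegral_const_mul _ (measurable_one.indicator hs), lintegral_indicator_one hs, Measure.pi_pi]
        simp
    _ ≤ ∫⁻ z, A.indicator ENNReal.ofReal z.1 * ENNReal.ofReal (Real.exp (-((m * F.real A) * (1 - z.2)))) ∂μ := by
        refine lintegral_mono_ae ?_
        have h1 : ∀ᵐ z ∂μ, z.2 ∈ Set.Icc (0:ℝ) 1 :=
          Measure.quasiMeasurePreserving_snd.ae (ae_restrict_mem measurableSet_Icc)
        filter_upwards [h1] with z hz
        gcongr
        calc _ ≤ (ENNReal.ofReal (Real.exp (-(F.real A * (1 - z.2))))) ^ m := by gcongr; exact hTm _ hz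
          _ = _ := by
            rw [← ENNReal.ofReal_pow (Real.exp_pos _).le, ← Real.exp_nat_mul]
            congr 2; ring
    _ = (∫⁻ x, A.indicator ENNReal.ofReal x ∂F) * ∫⁻ y, ENNReal.ofReal (Real.exp (-((m * F.real A) * (1 - y)))) ∂ν :=
        lintegral_prod_mul hind.aemeasurable (g := fun y => ENNReal.ofReal (Real.exp (-((m * F.real A) * (1 - y))))) (by fun_prop)
    _ = _ := by
        rw [lintegral_indicator hA]
        congr 1
        rw [intervalIntegral.integral_of_le zero_le_one, ← integral_Icc_eq_integral_Ioc,
          ofReal_integral_eq_lintegral_ofReal]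
        · exact (Continuous.continuousOn (by fun_prop)).integrableOn_Icc
        · exact Filter.Eventually.of_forall fun y => (Real.exp_pos _).le

lemma aux_upper_s12 (m : ℕ) (F : Measure ℝ) [IsProbabilityMeasure F] (A : Set ℝ) (hA : MeasurableSet A)
    (hA0 : A ⊆ {v | 0 ≤ v}) (sel : (Fin (m+1) → ℝ × ℝ) → Option (Fin (m+1)))
    (hsel : ∀ v i, sel v = some i → (v i).1 ∈ A ∧ ∀ j, (v j).1 ∈ A → (v j).2 ≤ (v i).2)
    (hm : AEStronglyMeasurable (fun v => ((sel v).map fun i => (v i).1).getD 0)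
          (Measure.pi fun _ : Fin (m+1) =>
            F.prod ((volume : Measure ℝ).restrict (Set.Icc (0:ℝ) 1))))
    (R : ℝ) (hR : 0 ≤ R) (hRA : ∫⁻ x in A, ENNReal.ofReal x ∂F ≤ ENNReal.ofReal R) :
    ∫ v, ((sel v).map fun i => (v i).1).getD 0
            ∂(Measure.pi fun _ : Fin (m+1) =>
                F.prod ((volume : Measure ℝ).restrict (Set.Icc (0:ℝ) 1)))
      ≤ (m+1) * (R * ∫ y in (0:ℝ)..1, Real.exp (-((m * F.real A) * (1 - y)))) := by
  have hK : 0 ≤ ∫ y in (0:ℝ)..1, Real.exp (-((m * F.real A) * (1 - y))) :=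
    intervalIntegral.integral_nonneg zero_le_one fun y _ => (Real.exp_pos _).le
  rw [integral_eq_lintegral_of_nonneg_ae ?_ hm]
  · refine ENNReal.toReal_le_of_le_ofReal (by positivity) ?_
    have hmeas : ∀ i : Fin (m+1), Measurable fun v : Fin (m+1) → ℝ × ℝ => (A.indicator ENNReal.ofReal (v i).1) *
        ({v : Fin (m+1) → ℝ × ℝ | ∀ j, (v j).1 ∈ A → (v j).2 ≤ (v i).2}.indicator (1 : (Fin (m+1) → ℝ × ℝ) → ℝ≥0∞) v) := by
      intro i
      refine ((ENNReal.measurable_ofReal.indicator hA).comp (by fun_prop)).mul (measurable_one.indicator ?_)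
      have : {v : Fin (m+1) → ℝ × ℝ | ∀ j, (v j).1 ∈ A → (v j).2 ≤ (v i).2}
         = ⋂ j, ({v | (v j).1 ∈ A}ᶜ ∪ {v | (v j).2 ≤ (v i).2}) := by
        ext z; simp only [Set.mem_ofPred_eq, Set.mem_iInter, Set.mem_union, Set.mem_compl_iff]
        exact forall_congr' fun j => imp_iff_not_or
      rw [this]
      refine MeasurableSet.iInter fun j => MeasurableSet.union ?_ ?_
      · exact (hA.preimage (f := fun v : Fin (m+1) → ℝ × ℝ => (v j).1) (by fun_prop)).compl
      · exact measurableSet_le (by fun_prop) (by fun_prop)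
    calc _ ≤ ∫⁻ v, ∑ i, (A.indicator ENNReal.ofReal (v i).1) *
        ({v : Fin (m+1) → ℝ × ℝ | ∀ j, (v j).1 ∈ A → (v j).2 ≤ (v i).2}.indicator 1 v) 
          ∂(Measure.pi fun _ : Fin (m+1) =>
                F.prod ((volume : Measure ℝ).restrict (Set.Icc (0:ℝ) 1))) := by
          refine lintegral_mono fun v => ?_
          cases h : sel v with
          | none => simp
          | some i =>
            obtain ⟨h1, h2⟩ := hsel v i h
            refine le_trans ?_ (Finset.single_le_sum (fun _ _ => bot_le) (Finset.mem_univ i))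
            rw [Set.indicator_of_mem h1, Set.indicator_of_mem (show v ∈ {v : Fin (m+1) → ℝ × ℝ | ∀ j, (v j).1 ∈ A → (v j).2 ≤ (v i).2} from h2)]
            simp
      _ = ∑ i, _ := lintegral_finsetSum _ fun i _ => hmeas i
      _ ≤ ∑ i : Fin (m+1), ENNReal.ofReal R *
        ENNReal.ofReal (∫ y in (0:ℝ)..1, Real.exp (-((m * F.real A) * (1 - y)))) := by
          gcongr with i
          exact (aux_G m F A hA i).trans (by gcongr)
      _ = _ := by
          rw [Finset.sum_const, ← ENNReal.ofReal_mul hR, ENNReal.ofReal_mul (p := (m:ℝ) + 1) (by positivity),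
            ENNReal.ofReal_add (by positivity) (by positivity)]
          simp
  · refine Filter.Eventually.of_forall fun v => ?_
    cases h : sel v with
    | none => simp [h]
    | some i => simpa [h] using hA0 (hsel v i h).1

lemma aux_lower_s12 (m : ℕ) (F : Measure ℝ) [IsProbabilityMeasure F] (l lH H δ : ℝ)
    (hl : 0 ≤ l) (hlH : l ≤ lH) (hF : F (Set.Icc l H)ᶜ = 0)
    (hF2 : ENNReal.ofReal δ ≤ F (Set.Ici lH)) :
    l + (lH - l) * (1 - (1 - δ) ^ (m+1)) ≤ ∫ v, (⨆ i, (v i).1)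
                ∂(Measure.pi fun _ : Fin (m+1) =>
                    F.prod ((volume : Measure ℝ).restrict (Set.Icc (0:ℝ) 1))) := by
  set ν := (volume : Measure ℝ).restrict (Set.Icc (0:ℝ) 1) with hν
  have : IsProbabilityMeasure ν := ⟨by simp [hν]⟩
  set μ := F.prod ν
  set P := Measure.pi fun _ : Fin (m+1) => μ
  let E : Set (Fin (m+1) → ℝ × ℝ) := Set.univ.pi fun _ => {z | z.1 < lH}
  have hEi : MeasurableSet {z : ℝ × ℝ | z.1 < lH} := measurableSet_lt measurable_fst measurable_const
  have hE : MeasurableSet E := MeasurableSet.univ_pi fun _ => hEi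
  have hμE : μ.real {z | z.1 < lH} ≤ 1 - δ := by
    have h1 : {z : ℝ × ℝ | z.1 < lH} = (Set.Iio lH) ×ˢ Set.univ := by ext; simp
    rw [h1, measureReal_prod_prod]
    have h2 : F.real (Set.Iio lH) = 1 - F.real (Set.Ici lH) := by
      rw [← probReal_compl_eq_one_sub measurableSet_Ici, Set.compl_Ici]
    have h3 : δ ≤ F.real (Set.Ici lH) :=
      (ENNReal.ofReal_le_iff_le_toReal (measure_ne_top _ _)).1 hF2
    simp [h2]; linarith
  have hPE : P.real E ≤ (1 - δ)^(m+1) := by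
    have : P.real E = (μ.real {z | z.1 < lH})^(m+1) := by
      simp [P, E, measureReal_def, Measure.pi_pi]
    rw [this]; gcongr
  have hae : ∀ᵐ v ∂P, ∀ i, (v i).1 ∈ Set.Icc l H := by
    rw [ae_all_iff]; intro i
    have h1 : ∀ᵐ z ∂μ, z.1 ∈ Set.Icc l H := Measure.quasiMeasurePreserving_fst.ae (show ∀ᵐ x ∂F, x ∈ Set.Icc l H from hF)
    exact (Measure.quasiMeasurePreserving_eval (fun _ : Fin (m+1) => μ) i).ae h1
  have hbd : ∀ v : Fin (m+1) → ℝ × ℝ, BddAbove (Set.range fun i => (v i).1) := fun v => (Set.finite_range _).bddAbove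
  have hint : Integrable (fun v : Fin (m+1) → ℝ × ℝ => ⨆ i, (v i).1) P := by
    refine Integrable.of_bound (C := H) ?_ ?_
    · exact (Measurable.iSup fun i => by fun_prop).aestronglyMeasurable
    · filter_upwards [hae] with v hv
      rw [Real.norm_eq_abs, abs_of_nonneg]
      · exact ciSup_le fun i => (hv i).2
      · exact le_trans (hl.trans (hv 0).1) (le_ciSup (hbd v) 0)
  calc _ ≤ lH - (lH - l) * P.real E := by nlinarith
    _ = ∫ v, (lH - (lH - l) * E.indicator (fun _ => (1:ℝ)) v) ∂P := by
      rw [integral_sub (integrable_const _) ((integrable_const (1:ℝ)).indicator hE |>.const_mul _), integral_const_mul, integral_indicator_const _ hE]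
      simp
    _ ≤ _ := by
      refine integral_mono_ae ((integrable_const _).sub ((integrable_const (1:ℝ)).indicator hE |>.const_mul _)) hint ?_
      filter_upwards [hae] with v hv
      by_cases h : v ∈ E
      · simp only [Set.indicator_of_mem h, ]
        have := le_trans (hv 0).1 (le_ciSup (hbd v) 0)
        linarith
      · simp only [Set.indicator_of_notMem h]
        simp [E, Set.mem_pi] at h
        obtain ⟨i, hi⟩ := h
        have := le_trans hi (le_ciSup (hbd v) i)
        linarith

lemma aux_arith (m : ℕ) (hm : 2 ≤ m) (a b : ℝ) (ha : 0 < a) (hb : 0 < b) (hba : b ≤ a) (hab : a + b = 1) :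
    (1 - 1 / (m:ℝ)) / (1 + ((1 / (m:ℝ))^2 + (1 / (m:ℝ))^3)) ≤
    (1 - 1/(m:ℝ)) * b + ((1 - 1/(m:ℝ)) * (a * m^2) - (1 - 1/(m:ℝ)) * b) * (1 - (1 - 1/(m:ℝ)^3) ^ (m+1)) := by
  have hm' : (2:ℝ) ≤ m := by exact_mod_cast hm
  have hm0 : (0:ℝ) < m := by linarith
  have hη : 0 ≤ 1 - 1 / (m:ℝ) := by
    rw [sub_nonneg, div_le_one hm0]; linarith
  set δ := 1/(m:ℝ)^3 with hδ
  have hδ0 : 0 < δ := by positivity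
  have hδ1 : δ ≤ 1 := by
    rw [hδ, div_le_one (by positivity)]; exact one_le_pow₀ (by linarith)
  set t := (1 / (m:ℝ))^2 + (1 / (m:ℝ))^3 with ht
  have ht0 : 0 < t := by positivity
  have htd : t = (m+1) * δ := by rw [ht, hδ]; field_simp
  have hq : (1 - δ)^(m+1) ≤ 1 / (1 + t) := by
    rw [le_div_iff₀ (by positivity)]
    have h1 : 1 + t ≤ (1 + δ)^(m+1) := by
      have := one_add_mul_le_pow (a := δ) (by linarith) (m+1)
      push_cast at this; linarith
    calc _ ≤ (1 - δ)^(m+1) * (1 + δ)^(m+1) := by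
          apply mul_le_mul_of_nonneg_left h1 (pow_nonneg (by linarith) _)
      _ = (1 - δ^2)^(m+1) := by rw [← mul_pow]; ring
      _ ≤ 1 := pow_le_one₀ (by nlinarith) (by nlinarith)
  have hH : b ≤ a * m^2 := by nlinarith
  have hHt : a ≤ a * m^2 * t := by
    have : a * m^2 * t = a + a / m := by rw [ht]; field_simp
    rw [this]; have : 0 < a / m := by positivity
    linarith
  have h2 : 1 / (1 + t) ≤ b + (a * m^2 - b) * (1 - (1-δ)^(m+1)) := by
    calc 1 / (1+t) ≤ (b + a * m^2 * t) / (1 + t) := by gcongr; linarith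
      _ = b + (a * m^2 - b) * (1 - 1/(1+t)) := by field_simp; ring
      _ ≤ _ := by
        have : 0 ≤ a * m^2 - b := by linarith
        gcongr
  calc _ = (1 - 1/(m:ℝ)) * (1 / (1+t)) := by ring
    _ ≤ (1 - 1/(m:ℝ)) * (b + (a * m^2 - b) * (1 - (1-δ)^(m+1))) := by gcongr
    _ = _ := by ring

lemma aux_lim (c ε : ℝ) (hε : 0 < ε) : ∃ m : ℕ, 2 ≤ m ∧
    (1 + 1/(m:ℝ)) * c < (c + ε) * ((1 - 1 / (m:ℝ)) / (1 + ((1 / (m:ℝ))^2 + (1 / (m:ℝ))^3))) := by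
  have h1 : Filter.Tendsto (fun x : ℝ => (1 + x) * c) (nhds 0) (nhds c) := by
    have : ContinuousAt (fun x : ℝ => (1 + x) * c) 0 := by fun_prop
    simpa [ContinuousAt] using this
  have h2 : Filter.Tendsto (fun x : ℝ => (c + ε) * ((1 - x) / (1 + (x^2 + x^3)))) (nhds 0) (nhds (c+ε)) := by
    have : ContinuousAt (fun x : ℝ => (c + ε) * ((1 - x) / (1 + (x^2 + x^3)))) 0 := by
      refine ContinuousAt.mul (by fun_prop) (ContinuousAt.div (by fun_prop) (by fun_prop) (by norm_num))
    simpa [ContinuousAt] using this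
  have h3 := h1.eventually_lt h2 (by linarith)
  have h4 := (tendsto_one_div_atTop_nhds_zero_nat (𝕜 := ℝ)).eventually h3
  obtain ⟨m, hm⟩ := (h4.and (Filter.eventually_ge_atTop 2)).exists
  exact ⟨m, hm.2, hm.1⟩

/-- tightness of the factor `1 − 1/e` when the principal cannot
observe the agent's utility.  For every `ε > 0` there exist an integer `n` and an
atomless distribution `F` on `[0,∞)` such that for every measurable set
`A ⊆ [0,∞)` of eligible `x`-values: when the agent draws `n` i.i.d. pairs
`(x_i,y_i)` with `x_i ∼ F` and `y_i` uniform on `[0,1]` independent of everything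
else, and proposes the sample of maximum `y_i` among those with `x_i ∈ A`
(proposing nothing if no sample qualifies), the principal's expected utility — the
`x`-value of the accepted proposal, or `0` if none — is less than
`(1 − 1/e + ε)·E[max_i x_i]`. -/
theorem delegation_one_minus_inv_e_tight :
    ∀ ε : ℝ, 0 < ε →
    ∃ (n : ℕ) (F : Measure ℝ), 0 < n ∧ IsProbabilityMeasure F ∧
      F {v | v < 0} = 0 ∧ (∀ c : ℝ, F {c} = 0) ∧
      ∀ A : Set ℝ, MeasurableSet A → A ⊆ {v | 0 ≤ v} →
      ∀ sel : (Fin n → ℝ × ℝ) → Option (Fin n),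
        (∀ v i, sel v = some i → (v i).1 ∈ A ∧ ∀ j, (v j).1 ∈ A → (v j).2 ≤ (v i).2) →
        (∀ v, (∃ i, (v i).1 ∈ A) → (sel v).isSome) →
        AEStronglyMeasurable (fun v => ((sel v).map fun i => (v i).1).getD 0)
          (Measure.pi fun _ : Fin n =>
            F.prod ((volume : Measure ℝ).restrict (Set.Icc (0:ℝ) 1))) →
        ∫ v, ((sel v).map fun i => (v i).1).getD 0
            ∂(Measure.pi fun _ : Fin n =>
                F.prod ((volume : Measure ℝ).restrict (Set.Icc (0:ℝ) 1)))
          < (1 - 1 / Real.exp 1 + ε) *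
              ∫ v, (⨆ i, (v i).1)
                ∂(Measure.pi fun _ : Fin n =>
                    F.prod ((volume : Measure ℝ).restrict (Set.Icc (0:ℝ) 1))) := by
  intro ε hε
  obtain ⟨m, hm, hlim⟩ := aux_lim (1 - 1 / Real.exp 1) ε hε
  have he1 : 2.7 < Real.exp 1 := by linarith [Real.exp_one_gt_d9]
  have he2 : Real.exp 1 < 2.72 := by linarith [Real.exp_one_lt_d9]
  have hinv : 1 / Real.exp 1 < 1 := by rw [div_lt_one (by linarith)]; linarith
  obtain ⟨a, ha⟩ : ∃ a, a = 1 / (Real.exp 1 - 1) := ⟨_, rfl⟩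
  obtain ⟨b, hb⟩ : ∃ b, b = (Real.exp 1 - 2) / (Real.exp 1 - 1) := ⟨_, rfl⟩
  have hden : 0 < Real.exp 1 - 1 := by linarith
  have ha0 : 0 < a := by rw [ha]; positivity
  have hb0 : 0 < b := by rw [hb]; apply div_pos <;> linarith
  have hba : b ≤ a := by rw [ha, hb]; gcongr; linarith
  have hab : a + b = 1 := by rw [ha, hb]; field_simp; ring
  have hm' : (2:ℝ) ≤ m := by exact_mod_cast hm
  have hm0 : (0:ℝ) < m := by linarith
  have hη0 : 0 < 1 - 1 / (m:ℝ) := by rw [sub_pos, div_lt_one hm0]; linarith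
  have hη1 : 1 - 1 / (m:ℝ) < 1 := by have : 0 < 1 / (m:ℝ) := by positivity
                                     linarith
  have hbH : b ≤ a * m^2 := by nlinarith
  have hH0 : 0 < a * m^2 := by positivity
  have hδ0 : 0 < 1 / (m:ℝ)^3 := by positivity
  have hδ1 : 1 / (m:ℝ)^3 ≤ 1 := by
    rw [div_le_one (by positivity)]; exact one_le_pow₀ (by linarith)
  have hll : (1 - 1/(m:ℝ)) * b ≤ (1 - 1/(m:ℝ)) * (a * m^2) := by gcongr
  obtain ⟨F, hF1, hF2, hF3, hF4, hF5⟩ := aux_F ((1 - 1/(m:ℝ)) * b) b ((1 - 1/(m:ℝ)) * (a * m^2)) (a * m^2)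
    (1 / (m:ℝ)^3) (by positivity) (by nlinarith) hbH hll (by nlinarith) hδ0.le hδ1
  refine ⟨m+1, F, by omega, hF1, ?_, hF2, ?_⟩
  · refine measure_mono_null ?_ hF3
    intro x hx hx2
    have h1 : x < 0 := hx
    have h2 := hx2.1
    have : 0 < (1 - 1/(m:ℝ)) * b := by positivity
    linarith
  intro A hA hA0 sel hsel _ hmeas
  have hlow := aux_lower_s12 m F _ _ _ _ (by positivity) hll hF3 hF4
  have har := (aux_arith m hm a b ha0 hb0 hba hab).trans hlow
  have hp0 : 0 ≤ F.real A := measureReal_nonneg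
  have hR : ∫⁻ x in A, ENNReal.ofReal x ∂F ≤ ENNReal.ofReal (b * F.real A + a / m) := by
    refine (hF5 A hA).trans (le_of_eq ?_)
    rw [ENNReal.ofReal_add (by positivity) (by positivity), ENNReal.ofReal_mul hb0.le, ofReal_measureReal]
    congr 2
    field_simp
  have hup := aux_upper_s12 m F A hA hA0 sel hsel hmeas _ (by positivity) hR
  have hK := aux_K_s12 (m * F.real A) (by positivity)
  rw [← ha, ← hb] at hK
  refine lt_of_le_of_lt hup (lt_of_le_of_lt ?_ (lt_of_lt_of_le hlim
    (mul_le_mul_of_nonneg_left har (by linarith))))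
  refine le_trans (le_of_eq ?_) (mul_le_mul_of_nonneg_left hK (by positivity : 0 ≤ 1 + 1 / (m:ℝ)))
  generalize (∫ y in (0:ℝ)..1, Real.exp (-(m * F.real A * (1 - y)))) = K
  field_simp
  ring
end
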